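/- Let V = {S_1, ..., S_n} be a fully reducible simple m-dimensional Venn diagram with n ≥ 2 and m ≥ 3. Then W = {S_1 ∩ S_n, ..., S_{n-1} ∩ S_n} is a fully reducible simple (m-1)-dimensional Venn diagram embedded on the m-surface S_n (which is homeomorphic to the sphere S^{m-1}). -/

import Mathlib

open Set Metric Bornology

section VennDefs

variable {E : Type*} [TopologicalSpace E]

/-- `A ⊆ E` is homeomorphic to the `d`-dimensional sphere `S^d ⊆ ℝ^{d+1}`. -/
def HomeoToSphere (d : ℕ) (A : Set E) : Prop :=
  Nonempty (A ≃ₜ (Metric.sphere (0 : EuclideanSpace ℝ (Fin (d + 1))) 1 :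
    Set (EuclideanSpace ℝ (Fin (d + 1)))))

/-- `A` is a union of finitely many compact sets, each homeomorphic to `S^d`. -/
def FinUnionOfSpheres (d : ℕ) (A : Set E) : Prop :=
  ∃ 𝒞 : Finset (Set E), A = ⋃₀ ↑𝒞 ∧ ∀ C ∈ 𝒞, IsCompact C ∧ HomeoToSphere d C

/-- `A` is a disjoint union of finitely many compact sets, each homeomorphic to `S^d`. -/
def FinDisjUnionOfSpheres (d : ℕ) (A : Set E) : Prop :=
  ∃ 𝒞 : Finset (Set E), A = ⋃₀ ↑𝒞 ∧ (↑𝒞 : Set (Set E)).PairwiseDisjoint id ∧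
    ∀ C ∈ 𝒞, IsCompact C ∧ HomeoToSphere d C

end VennDefs

section MetricVennDefs

variable {E : Type*} [MetricSpace E]

/-- An `m`-surface: a compact set homeomorphic to the sphere `S^{m-1}`. -/
def IsMSurface (m : ℕ) (S : Set E) : Prop :=
  IsCompact S ∧ HomeoToSphere (m - 1) S

/-- The two sides of an `m`-surface: side `0` (the "interior") consists of the points of the
complement whose connected component in the complement is bounded, and side `1`
(the "exterior") of those whose component is unbounded. -/
def surfSide (S : Set E) : Fin 2 → Set E := fun ε =>
  if ε = 0 then {x | x ∉ S ∧ IsBounded (connectedComponentIn Sᶜ x)}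
  else {x | x ∉ S ∧ ¬ IsBounded (connectedComponentIn Sᶜ x)}

/-- A family of `m`-surfaces is an `m`-dimensional Venn diagram if every region
`S₁^{ε₁} ∩ ⋯ ∩ Sₙ^{εₙ}` is nonempty and connected, and the intersection of any two of the
surfaces is a disjoint union of finitely many `(m-1)`-surfaces, i.e. sets homeomorphic
to `S^{m-2}`. -/
def IsVennDiagram (m : ℕ) {ι : Type*} [Fintype ι] (S : ι → Set E) : Prop :=
  (∀ i, IsMSurface m (S i)) ∧
  (∀ ε : ι → Fin 2, (⋂ i, surfSide (S i) (ε i)).Nonempty ∧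
    IsConnected (⋂ i, surfSide (S i) (ε i))) ∧
  (∀ i j, i ≠ j → FinDisjUnionOfSpheres (m - 2) (S i ∩ S j))

/-- A Venn diagram is simple if for every `k ≥ 2`, the intersection of any `k` distinct
surfaces is a union of finitely many sets homeomorphic to `S^{m-k}` (and is empty
when `m - k ≤ 0`). -/
def IsSimpleVennDiagram (m : ℕ) {ι : Type*} [Fintype ι] (S : ι → Set E) : Prop :=
  IsVennDiagram m S ∧
  ∀ t : Finset ι, 2 ≤ t.card →
    if m ≤ t.card then (⋂ i ∈ t, S i) = ∅
    else FinUnionOfSpheres (m - t.card) (⋂ i ∈ t, S i)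

/-- A Venn diagram is fully reducible if every subfamily is again a Venn diagram. -/
def FullyReducible (m : ℕ) {ι : Type*} [Fintype ι] (S : ι → Set E) : Prop :=
  ∀ t : Finset ι, IsVennDiagram m (fun i : {x // x ∈ t} => S i.1)

/-- The number of regions of a family of surfaces: the number of connected components of
the nonempty cells `⋂ i, (S i)^{ε i}`. -/
noncomputable def vennRegionCount {ι : Type*} [Fintype ι] (S : ι → Set E) : ℕ :=
  Nat.card {A : Set E // ∃ (ε : ι → Fin 2) (x : E),
    x ∈ ⋂ i, surfSide (S i) (ε i) ∧ A = connectedComponentIn (⋂ i, surfSide (S i) (ε i)) x}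

/-- The edges of the diagram lying on the surface `S i`: connected components of
`S i \ ⋃_{j ≠ i} S j`. -/
def vennEdgeSet {ι : Type*} [Fintype ι] (S : ι → Set E) (i : ι) : Set (Set E) :=
  {A | ∃ x ∈ S i \ ⋃ j ∈ {j | j ≠ i}, S j,
    A = connectedComponentIn (S i \ ⋃ j ∈ {j | j ≠ i}, S j) x}

/-- The number of edges lying on the surface `S i`. -/
noncomputable def vennEdgeCountOn {ι : Type*} [Fintype ι] (S : ι → Set E) (i : ι) : ℕ :=
  Nat.card (vennEdgeSet S i)

/-- The total number of edges of the diagram. -/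
noncomputable def vennEdgeCount {ι : Type*} [Fintype ι] (S : ι → Set E) : ℕ :=
  ∑ i, vennEdgeCountOn S i

end MetricVennDefs


section OnSurface

variable {X : Type*} [TopologicalSpace X]

/-- A Venn diagram of ambient dimension `d` on a topological space `X` (such as a sphere),
relative to a choice `σ` of the two sides of each surface: each surface `T i` is compact and
homeomorphic to `S^{d-1}`; its two sides `σ i 0` and `σ i 1` are the two distinct connected
components into which it separates `X`; every region `⋂ i, σ i (ε i)` is nonempty and
connected; and any two surfaces intersect in a disjoint union of finitely many
`(d-1)`-surfaces. -/
def IsVennDiagramOn (d : ℕ) {ι : Type*} [Fintype ι] (T : ι → Set X)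
    (σ : ι → Fin 2 → Set X) : Prop :=
  (∀ i, IsCompact (T i) ∧ HomeoToSphere (d - 1) (T i)) ∧
  (∀ i, σ i 0 ∪ σ i 1 = (T i)ᶜ ∧ σ i 0 ≠ σ i 1 ∧
    ∀ ε : Fin 2, ∃ x, σ i ε = connectedComponentIn (T i)ᶜ x) ∧
  (∀ ε : ι → Fin 2, (⋂ i, σ i (ε i)).Nonempty ∧ IsConnected (⋂ i, σ i (ε i))) ∧
  (∀ i j, i ≠ j → FinDisjUnionOfSpheres (d - 2) (T i ∩ T j))

/-- A simple Venn diagram of ambient dimension `d` on `X`. -/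
def IsSimpleVennDiagramOn (d : ℕ) {ι : Type*} [Fintype ι] (T : ι → Set X)
    (σ : ι → Fin 2 → Set X) : Prop :=
  IsVennDiagramOn d T σ ∧
  ∀ t : Finset ι, 2 ≤ t.card →
    if d ≤ t.card then (⋂ i ∈ t, T i) = ∅
    else FinUnionOfSpheres (d - t.card) (⋂ i ∈ t, T i)

/-- Full reducibility on `X`: every subfamily is again a Venn diagram on `X`. -/
def FullyReducibleOn (d : ℕ) {ι : Type*} [Fintype ι] (T : ι → Set X)
    (σ : ι → Fin 2 → Set X) : Prop :=
  ∀ t : Finset ι, IsVennDiagramOn d (fun i : {x // x ∈ t} => T i.1)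
    (fun i : {x // x ∈ t} => σ i.1)

end OnSurface



namespace VC

section Comb
variable {X Y : Type*}

def delL : List X → (List X → ZMod 2) → ZMod 2
  | [], _ => 0
  | x :: l, f => f l + delL l (fun l' => f (x :: l'))

def del (f : List X → ZMod 2) : List X → ZMod 2 := fun l => delL l f

@[simp] lemma del_nil (f : List X → ZMod 2) : del f [] = 0 := rfl
lemma del_cons (f : List X → ZMod 2) (x : X) (l : List X) :
    del f (x :: l) = f l + del (fun l' => f (x :: l')) l := rfl

lemma z2 (a : ZMod 2) : a + a = 0 := by revert a; decide

lemma fadd_self (f : List X → ZMod 2) : f + f = 0 := by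
  funext l; exact z2 _

lemma del_add (f g : List X → ZMod 2) : del (f + g) = del f + del g := by
  funext l
  induction l generalizing f g with
  | nil => simp
  | cons x l ih =>
    have := ih (fun l' => f (x :: l')) (fun l' => g (x :: l'))
    simp only [Pi.add_apply, del_cons] at *
    have e : (fun l' => f (x :: l') + g (x :: l')) =
      (fun l' => f (x :: l')) + (fun l' => g (x :: l')) := rfl
    rw [e, this]; ring

lemma del_zero : del (0 : List X → ZMod 2) = 0 := by
  have := del_add (0 : List X → ZMod 2) 0
  rw [fadd_self] at this
  rw [this, fadd_self]

lemma del_del (f : List X → ZMod 2) : del (del f) = 0 := by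
  funext l
  induction l generalizing f with
  | nil => rfl
  | cons x l ih =>
    rw [del_cons]
    have e : (fun l' => del f (x :: l')) = f + del (fun l' => f (x :: l')) := by
      funext l'; rw [del_cons]; rfl
    rw [e, del_add]
    simp only [Pi.add_apply, ih, Pi.zero_apply, add_zero, z2]

lemma del_local (f : List X → ZMod 2) (l : List X)
    (h : ∀ l' : List X, l'.Sublist l → l'.length + 1 = l.length → f l' = 0) : del f l = 0 := by
  induction l generalizing f with
  | nil => rfl
  | cons x l ih =>
    rw [del_cons, h l (List.sublist_cons_self x l) (by simp), zero_add]
    apply ih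
    intro l' hl hlen
    exact h _ (hl.cons_cons x) (by simp [hlen])

/-- Pullback of cochains along an arbitrary function. -/
def pull (φ : X → Y) (f : List Y → ZMod 2) : List X → ZMod 2 := fun l => f (l.map φ)

lemma pull_add (φ : X → Y) (f g : List Y → ZMod 2) :
    pull φ (f + g) = pull φ f + pull φ g := rfl

lemma del_pull (φ : X → Y) (f : List Y → ZMod 2) : del (pull φ f) = pull φ (del f) := by
  funext l
  induction l generalizing f with
  | nil => rfl
  | cons x l ih =>
    have := ih (fun l' => f (φ x :: l'))
    simp only [pull, List.map_cons, del_cons] at *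
    rw [← this]
    rfl

def prismL (φ ψ : X → Y) : List X → (List Y → ZMod 2) → ZMod 2
  | [], _ => 0
  | x :: l, f => f (φ x :: ψ x :: l.map ψ) + prismL φ ψ l (fun l' => f (φ x :: l'))

def prism (φ ψ : X → Y) (f : List Y → ZMod 2) : List X → ZMod 2 := fun l => prismL φ ψ l f

lemma prism_cons (φ ψ : X → Y) (f : List Y → ZMod 2) (x : X) (l : List X) :
    prism φ ψ f (x :: l) =
      f (φ x :: ψ x :: l.map ψ) + prism φ ψ (fun l' => f (φ x :: l')) l := rfl

lemma prism_add (φ ψ : X → Y) (f g : List Y → ZMod 2) :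
    prism φ ψ (f + g) = prism φ ψ f + prism φ ψ g := by
  funext l
  induction l generalizing f g with
  | nil => simp [prism, prismL]
  | cons x l ih =>
    have := ih (fun l' => f (φ x :: l')) (fun l' => g (φ x :: l'))
    simp only [Pi.add_apply, prism_cons] at *
    have e : (fun l' => f (φ x :: l') + g (φ x :: l')) =
      (fun l' => f (φ x :: l')) + (fun l' => g (φ x :: l')) := rfl
    rw [e, this]; ring

lemma prism_eq (φ ψ : X → Y) (f : List Y → ZMod 2) :
    del (prism φ ψ f) + prism φ ψ (del f) = pull φ f + pull ψ f := by
  funext l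
  induction l generalizing f with
  | nil => simp [prism, prismL, pull, z2]
  | cons x l ih =>
    have h := ih (fun l' => f (φ x :: l'))
    simp only [Pi.add_apply] at *
    rw [del_cons, prism_cons]
    have e1 : (fun l' => prism φ ψ f (x :: l')) =
      pull ψ (fun l' => f (φ x :: ψ x :: l')) + prism φ ψ (fun l' => f (φ x :: l')) := by
      funext l'; rw [prism_cons]; rfl
    have e2 : (fun l' => del f (φ x :: l')) = f + del (fun l' => f (φ x :: l')) := by
      funext l'; rw [del_cons]; rfl
    rw [e1, e2, del_add, prism_add, del_pull]
    simp only [Pi.add_apply, pull, del_cons, List.map_cons] at *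
    generalize prism φ ψ f l = a at *
    generalize del (prism φ ψ (fun l' => f (φ x :: l'))) l = b at *
    generalize prism φ ψ (del fun l' => f (φ x :: l')) l = c at *
    generalize del (fun l' => f (φ x :: ψ x :: l')) (List.map ψ l) = d at *
    generalize f (List.map ψ l) = e at *
    generalize f (φ x :: List.map ψ l) = e' at *
    generalize f (ψ x :: List.map ψ l) = e'' at *
    generalize f (φ x :: List.map φ l) = e3 at *
    clear ih e1 e2
    revert a b c d e e' e'' e3
    decide

lemma prism_local (φ ψ : X → Y) (f : List Y → ZMod 2) (l : List X)
    (h : ∀ l' : List Y, (∀ y ∈ l', ∃ x ∈ l, y = φ x ∨ y = ψ x) → l'.length = l.length + 1 →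
      f l' = 0) : prism φ ψ f l = 0 := by
  induction l generalizing f with
  | nil => rfl
  | cons x l ih =>
    rw [prism_cons, h, zero_add]
    · apply ih
      intro l' hl hlen
      apply h
      · intro y hy
        rcases List.mem_cons.1 hy with rfl | hy
        · exact ⟨x, by simp, Or.inl rfl⟩
        · obtain ⟨z, hz, h'⟩ := hl y hy
          exact ⟨z, by simp [hz], h'⟩
      · simp [hlen]
    · intro y hy
      simp only [List.mem_cons, List.mem_map] at hy
      rcases hy with rfl | rfl | ⟨z, hz, rfl⟩
      · exact ⟨x, by simp, Or.inl rfl⟩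
      · exact ⟨x, by simp, Or.inr rfl⟩
      · exact ⟨z, by simp [hz], Or.inr rfl⟩
    · simp

end Comb
end VC


set_option linter.unusedSectionVars false

namespace VC

section Coh
variable {X Y : Type*} [MetricSpace X] [MetricSpace Y]

/-- Small tuples in `A`. -/
def Sm (ε : ℝ) (A : Set X) (l : List X) : Prop :=
  (∀ x ∈ l, x ∈ A) ∧ ∀ x ∈ l, ∀ y ∈ l, dist x y < ε

lemma Sm.mono {ε ε' : ℝ} {A A' : Set X} {l : List X} (h : Sm ε A l) (he : ε ≤ ε') (hA : A ⊆ A') :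
    Sm ε' A' l :=
  ⟨fun x hx => hA (h.1 x hx), fun x hx y hy => (h.2 x hx y hy).trans_le he⟩

lemma Sm.sub {ε : ℝ} {A : Set X} {l l' : List X} (h : Sm ε A l) (hl : ∀ x ∈ l', x ∈ l) :
    Sm ε A l' :=
  ⟨fun x hx => h.1 x (hl x hx), fun x hx y hy => h.2 x (hl x hx) y (hl y hy)⟩

/-- `f` vanishes on small `n`-tuples of `A`. -/
def V (n : ℕ) (A : Set X) (f : List X → ZMod 2) : Prop :=
  ∃ ε > 0, ∀ l : List X, l.length = n → Sm ε A l → f l = 0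

lemma V.mono {n : ℕ} {A B : Set X} {f : List X → ZMod 2} (h : V n B f) (hA : A ⊆ B) : V n A f := by
  obtain ⟨ε, he, h⟩ := h
  exact ⟨ε, he, fun l hl hs => h l hl (hs.mono le_rfl hA)⟩

lemma V.zero (n : ℕ) (A : Set X) : V n A 0 := ⟨1, one_pos, fun _ _ _ => rfl⟩

lemma V.add {n : ℕ} {A : Set X} {f g : List X → ZMod 2} (hf : V n A f) (hg : V n A g) :
    V n A (f + g) := by
  obtain ⟨ε, he, h⟩ := hf
  obtain ⟨ε', he', h'⟩ := hg
  refine ⟨min ε ε', lt_min he he', fun l hl hs => ?_⟩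
  rw [Pi.add_apply, h l hl (hs.mono (min_le_left _ _) le_rfl),
    h' l hl (hs.mono (min_le_right _ _) le_rfl), add_zero]

lemma V.del {n : ℕ} {A : Set X} {f : List X → ZMod 2} (hf : V n A f) : V (n + 1) A (del f) := by
  obtain ⟨ε, he, h⟩ := hf
  refine ⟨ε, he, fun l hl hs => del_local f l fun l' h1 h2 => ?_⟩
  exact h l' (by omega) (hs.sub fun x hx => h1.subset hx)

lemma V.empty (n : ℕ) (f : List X → ZMod 2) : V (n + 1) (∅ : Set X) f := by
  refine ⟨1, one_pos, fun l hl hs => ?_⟩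
  cases l with
  | nil => simp at hl
  | cons x l => exact absurd (hs.1 x (by simp)) (by simp)

lemma V.congr {n : ℕ} {A : Set X} {f g : List X → ZMod 2} (hf : V n A f) (hg : V n A (f + g)) :
    V n A g := by
  have := hf.add hg
  rwa [← add_assoc, fadd_self, zero_add] at this

def Cyc (q : ℕ) (Z A : Set X) (f : List X → ZMod 2) : Prop :=
  V (q + 2) Z (del f) ∧ V (q + 1) A f

def Bd (q : ℕ) (Z A : Set X) (f : List X → ZMod 2) : Prop :=
  ∃ g, V (q + 1) Z (f + del g) ∧ V q A g

def RCyc (q : ℕ) (Z : Set X) (f : List X → ZMod 2) : Prop := V (q + 2) Z (del f)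

def RBd (q : ℕ) (Z : Set X) (f : List X → ZMod 2) : Prop :=
  ∃ g, V (q + 1) Z (f + del g)

lemma Cyc.add {q : ℕ} {Z A : Set X} {f g : List X → ZMod 2} (hf : Cyc q Z A f) (hg : Cyc q Z A g) :
    Cyc q Z A (f + g) := ⟨by rw [del_add]; exact hf.1.add hg.1, hf.2.add hg.2⟩

lemma Cyc.mono {q : ℕ} {Z A Z' A' : Set X} {f : List X → ZMod 2} (hf : Cyc q Z A f)
    (hZ : Z' ⊆ Z) (hA : A' ⊆ A) : Cyc q Z' A' f := ⟨hf.1.mono hZ, hf.2.mono hA⟩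

lemma Bd.mono {q : ℕ} {Z A Z' A' : Set X} {f : List X → ZMod 2} (hf : Bd q Z A f)
    (hZ : Z' ⊆ Z) (hA : A' ⊆ A) : Bd q Z' A' f := by
  obtain ⟨g, h1, h2⟩ := hf
  exact ⟨g, h1.mono hZ, h2.mono hA⟩

lemma add4 (f f' g g' : List X → ZMod 2) : f + f' + del (g + g') = (f + del g) + (f' + del g') := by
  rw [del_add]; abel

lemma Bd.add {q : ℕ} {Z A : Set X} {f g : List X → ZMod 2} (hf : Bd q Z A f) (hg : Bd q Z A g) :
    Bd q Z A (f + g) := by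
  obtain ⟨u, h1, h2⟩ := hf
  obtain ⟨v, h3, h4⟩ := hg
  exact ⟨u + v, by rw [add4]; exact h1.add h3, h2.add h4⟩

lemma Bd.ofV {q : ℕ} {Z A : Set X} {f : List X → ZMod 2} (hf : V (q + 1) Z f) : Bd q Z A f :=
  ⟨0, by rwa [del_zero, add_zero], V.zero _ _⟩

lemma addL (f g : List X → ZMod 2) : f + (f + g) = g := by
  rw [← add_assoc, fadd_self, zero_add]

/-- if `f` and `f + g` bound then `g` bounds. -/
lemma Bd.congr {q : ℕ} {Z A : Set X} {f g : List X → ZMod 2} (hf : Bd q Z A f)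
    (hg : Bd q Z A (f + g)) : Bd q Z A g := by
  have := hf.add hg
  rwa [addL] at this

lemma Bd.congr' {q : ℕ} {Z A : Set X} {f g : List X → ZMod 2} (hf : Bd q Z A g)
    (hg : Bd q Z A (f + g)) : Bd q Z A f := by
  rw [add_comm] at hg; exact hf.congr hg

lemma Cyc.congr {q : ℕ} {Z A : Set X} {f g : List X → ZMod 2} (hf : Cyc q Z A f)
    (hg : Cyc q Z A (f + g)) : Cyc q Z A g := by
  have := hf.add hg
  rwa [addL] at this

lemma Bd.toCyc {q : ℕ} {Z A : Set X} {f : List X → ZMod 2} (hA : A ⊆ Z) (hf : Bd q Z A f) :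
    Cyc q Z A f := by
  obtain ⟨g, h1, h2⟩ := hf
  constructor
  · have := h1.del
    rwa [del_add, del_del, add_zero] at this
  · have := (h1.mono hA)
    rw [add_comm f] at this
    exact h2.del.congr this

lemma Bd.trans3 {q : ℕ} {Z A : Set X} {f g h : List X → ZMod 2} (hf : Bd q Z A (f + g))
    (hg : Bd q Z A (g + h)) : Bd q Z A (f + h) := by
  have := hf.add hg
  rwa [add_assoc, addL] at this

/-! ### Exact sequences of triples -/

lemma les1 {q : ℕ} {Z A C : Set X} {f : List X → ZMod 2} (hf : Cyc q Z C f)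
    (hb : Bd q A C f) : ∃ f', Cyc q Z A f' ∧ Bd q Z C (f + f') := by
  obtain ⟨g, h1, h2⟩ := hb
  refine ⟨f + del g, ⟨?_, h1⟩, g, ?_, h2⟩
  · rw [del_add, del_del, add_zero]; exact hf.1
  · rw [addL, fadd_self]; exact V.zero _ _

lemma les_conn {q : ℕ} {Z A C : Set X} {h : List X → ZMod 2} (hh : Cyc q A C h) :
    Cyc (q + 1) Z A (del h) :=
  ⟨by rw [del_del]; exact V.zero _ _, hh.1⟩

lemma les2 {q : ℕ} {Z A C : Set X} (hC : C ⊆ A) {h : List X → ZMod 2} (hh : Cyc q A C h)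
    (hb : Bd (q + 1) Z A (del h)) : ∃ h', Cyc q Z C h' ∧ V (q + 1) A (h + h') := by
  obtain ⟨g, h1, h2⟩ := hb
  refine ⟨h + g, ⟨?_, hh.2.add (h2.mono hC)⟩, ?_⟩
  · rw [del_add]; exact h1
  · rw [addL]; exact h2

lemma les3 {q : ℕ} {Z A C : Set X} (hA : A ⊆ Z) {f : List X → ZMod 2} (hf : Cyc (q + 1) Z A f)
    (hb : Bd (q + 1) Z C f) : ∃ h, Cyc q A C h ∧ V (q + 2) Z (f + del h) := by
  obtain ⟨g, h1, h2⟩ := hb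
  exact ⟨g, ⟨hf.2.congr (h1.mono hA), h2⟩, h1⟩

/-- combination of `les3` with vanishing -/
lemma les3' {q : ℕ} {Z A C : Set X} (hA : A ⊆ Z) {f : List X → ZMod 2}
    (hf : Cyc (q + 1) Z A f)
    (hb : Bd (q + 1) Z C f) (hv : ∀ h, Cyc q A C h → Bd q A C h) : Bd (q + 1) Z A f := by
  obtain ⟨h, h1, h2⟩ := les3 hA hf hb
  obtain ⟨k, h3, h4⟩ := hv h h1
  refine ⟨h + del k, ?_, h3⟩
  rw [del_add, del_del, add_zero]; exact h2

/-! reduced versions -/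

lemma RBd.mono {q : ℕ} {Z Z' : Set X} {f : List X → ZMod 2} (hf : RBd q Z f)
    (hZ : Z' ⊆ Z) : RBd q Z' f := by
  obtain ⟨g, h1⟩ := hf
  exact ⟨g, h1.mono hZ⟩

lemma RBd.add {q : ℕ} {Z : Set X} {f g : List X → ZMod 2} (hf : RBd q Z f) (hg : RBd q Z g) :
    RBd q Z (f + g) := by
  obtain ⟨u, h1⟩ := hf
  obtain ⟨v, h3⟩ := hg
  exact ⟨u + v, by rw [add4]; exact h1.add h3⟩

lemma RBd.congr {q : ℕ} {Z : Set X} {f g : List X → ZMod 2} (hf : RBd q Z f)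
    (hg : RBd q Z (f + g)) : RBd q Z g := by
  have := hf.add hg
  rwa [addL] at this

lemma RBd.congr' {q : ℕ} {Z : Set X} {f g : List X → ZMod 2} (hf : RBd q Z g)
    (hg : RBd q Z (f + g)) : RBd q Z f := by
  rw [add_comm] at hg; exact hf.congr hg

lemma RCyc.add {q : ℕ} {Z : Set X} {f g : List X → ZMod 2} (hf : RCyc q Z f) (hg : RCyc q Z g) :
    RCyc q Z (f + g) := by
  unfold RCyc; rw [del_add]; exact V.add hf hg

lemma RCyc.mono {q : ℕ} {Z Z' : Set X} {f : List X → ZMod 2} (hf : RCyc q Z f)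
    (hZ : Z' ⊆ Z) : RCyc q Z' f := V.mono hf hZ

lemma Cyc.toR {q : ℕ} {Z A : Set X} {f : List X → ZMod 2} (hf : Cyc q Z A f) : RCyc q Z f := hf.1
lemma Bd.toR {q : ℕ} {Z A : Set X} {f : List X → ZMod 2} (hf : Bd q Z A f) : RBd q Z f :=
  ⟨hf.choose, hf.choose_spec.1⟩

lemma RCyc.toC {q : ℕ} {Z : Set X} {f : List X → ZMod 2} (hf : RCyc q Z f) : Cyc q Z ∅ f :=
  ⟨hf, V.empty _ _⟩
lemma RBd.toB {q : ℕ} {Z : Set X} {f : List X → ZMod 2} (hf : RBd (q + 1) Z f) :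
    Bd (q + 1) Z ∅ f :=
  ⟨hf.choose, hf.choose_spec, V.empty _ _⟩

lemma rles1 {q : ℕ} {Z A : Set X} {f : List X → ZMod 2} (hf : RCyc q Z f)
    (hb : RBd q A f) : ∃ f', Cyc q Z A f' ∧ RBd q Z (f + f') := by
  obtain ⟨g, h1⟩ := hb
  refine ⟨f + del g, ⟨?_, h1⟩, g, ?_⟩
  · rw [del_add, del_del, add_zero]; exact hf
  · rw [addL, fadd_self]; exact V.zero _ _

lemma rles_conn {q : ℕ} {Z A : Set X} {h : List X → ZMod 2} (hh : RCyc q A h) :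
    Cyc (q + 1) Z A (del h) :=
  ⟨by rw [del_del]; exact V.zero _ _, hh⟩

lemma rles2 {q : ℕ} {Z A : Set X} {h : List X → ZMod 2}
    (hb : Bd (q + 1) Z A (del h)) : ∃ h', RCyc q Z h' ∧ V (q + 1) A (h + h') := by
  obtain ⟨g, h1, h2⟩ := hb
  refine ⟨h + g, ?_, ?_⟩
  · unfold RCyc; rw [del_add]; exact h1
  · rw [addL]; exact h2

lemma rles3 {q : ℕ} {Z A : Set X} (hA : A ⊆ Z) {f : List X → ZMod 2} (hf : Cyc (q + 1) Z A f)
    (hb : RBd (q + 1) Z f) : ∃ h, RCyc q A h ∧ V (q + 2) Z (f + del h) := by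
  obtain ⟨g, h1⟩ := hb
  exact ⟨g, hf.2.congr (h1.mono hA), h1⟩

lemma rles3' {q : ℕ} {Z A : Set X} (hA : A ⊆ Z) {f : List X → ZMod 2} (hf : Cyc (q + 1) Z A f)
    (hb : RBd (q + 1) Z f) (hv : ∀ h, RCyc q A h → RBd q A h) : Bd (q + 1) Z A f := by
  obtain ⟨h, h1, h2⟩ := rles3 hA hf hb
  obtain ⟨k, h3⟩ := hv h h1
  refine ⟨h + del k, ?_, h3⟩
  rw [del_add, del_del, add_zero]; exact h2

/-! ### Maps -/

lemma V.pull {n : ℕ} {φ : X → Y} {A : Set X} {B : Set Y} (hm : MapsTo φ A B)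
    (hu : UniformContinuousOn φ A) {f : List Y → ZMod 2} (hf : V n B f) : V n A (pull φ f) := by
  obtain ⟨ε, he, h⟩ := hf
  obtain ⟨δ, hd, h'⟩ := Metric.uniformContinuousOn_iff.1 hu ε he
  refine ⟨δ, hd, fun l hl hs => h _ (by simpa using hl) ⟨?_, ?_⟩⟩
  · intro y hy
    obtain ⟨x, hx, rfl⟩ := List.mem_map.1 hy
    exact hm (hs.1 x hx)
  · intro y hy y' hy'
    obtain ⟨x, hx, rfl⟩ := List.mem_map.1 hy
    obtain ⟨x', hx', rfl⟩ := List.mem_map.1 hy'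
    exact h' x (hs.1 x hx) x' (hs.1 x' hx') (hs.2 x hx x' hx')

lemma Cyc.pull {q : ℕ} {φ : X → Y} {Z A : Set X} {Z' A' : Set Y} (hA : A ⊆ Z)
    (hm : MapsTo φ Z Z') (hm' : MapsTo φ A A')
    (hu : UniformContinuousOn φ Z) {f : List Y → ZMod 2} (hf : Cyc q Z' A' f) :
    Cyc q Z A (pull φ f) :=
  ⟨by rw [del_pull]; exact hf.1.pull hm hu, hf.2.pull hm' (hu.mono hA)⟩

lemma Bd.pull {q : ℕ} {φ : X → Y} {Z A : Set X} {Z' A' : Set Y} (hA : A ⊆ Z)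
    (hm : MapsTo φ Z Z') (hm' : MapsTo φ A A')
    (hu : UniformContinuousOn φ Z) {f : List Y → ZMod 2} (hf : Bd q Z' A' f) :
    Bd q Z A (VC.pull φ f) := by
  obtain ⟨g, h1, h2⟩ := hf
  refine ⟨VC.pull φ g, ?_, h2.pull hm' (hu.mono hA)⟩
  rw [del_pull, ← pull_add]
  exact h1.pull hm hu

/-- Contiguity lemma at a fixed scale. -/
lemma contig {q : ℕ} {φ ψ : X → Y} {Z A : Set X} {Z' A' : Set Y} (hA : A ⊆ Z)
    (h1 : MapsTo φ Z Z') (h2 : MapsTo ψ Z Z') (h3 : MapsTo φ A A') (h4 : MapsTo ψ A A')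
    {f : List Y → ZMod 2} {ε δ : ℝ} (hd : 0 < δ)
    (hf1 : ∀ l : List Y, l.length = q + 2 → Sm ε Z' l → del f l = 0)
    (hf2 : ∀ l : List Y, l.length = q + 1 → Sm ε A' l → f l = 0)
    (hc : ∀ x ∈ Z, ∀ y ∈ Z, dist x y < δ → dist (φ x) (φ y) < ε ∧ dist (φ x) (ψ y) < ε ∧
      dist (ψ x) (ψ y) < ε) :
    Bd q Z A (VC.pull φ f + VC.pull ψ f) := by
  have key : ∀ (B : Set X) (B' : Set Y), B ⊆ Z → MapsTo φ B B' → MapsTo ψ B B' →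
      ∀ l : List X, Sm δ B l → ∀ l' : List Y, (∀ y ∈ l', ∃ x ∈ l, y = φ x ∨ y = ψ x) →
      Sm ε B' l' := by
    intro B B' hB hφ hψ l hl l' h
    constructor
    · intro y hy
      obtain ⟨x, hx, rfl | rfl⟩ := h y hy
      · exact hφ (hl.1 x hx)
      · exact hψ (hl.1 x hx)
    · intro y hy y' hy'
      obtain ⟨x, hx, hxy⟩ := h y hy
      obtain ⟨x', hx', hxy'⟩ := h y' hy'
      have c1 := hc x (hB (hl.1 x hx)) x' (hB (hl.1 x' hx')) (hl.2 x hx x' hx')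
      have c2 := hc x' (hB (hl.1 x' hx')) x (hB (hl.1 x hx)) (hl.2 x' hx' x hx)
      rcases hxy with rfl | rfl <;> rcases hxy' with rfl | rfl
      · exact c1.1
      · exact c1.2.1
      · rw [dist_comm]; exact c2.2.1
      · exact c1.2.2
  refine ⟨prism φ ψ f, ⟨δ, hd, fun l hl hs => ?_⟩, ⟨δ, hd, fun l hl hs => ?_⟩⟩
  · rw [← prism_eq φ ψ f]
    have : del (prism φ ψ f) + prism φ ψ (del f) + del (prism φ ψ f) = prism φ ψ (del f) := by
      rw [add_comm, addL]
    rw [this]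
    exact prism_local _ _ _ _ fun l' h h' => hf1 l' (by omega) (key Z Z' le_rfl h1 h2 l hs l' h)
  · exact prism_local _ _ _ _ fun l' h h' => hf2 l' (by omega) (key A A' hA h3 h4 l hs l' h)

lemma Cyc.scale {q : ℕ} {Z A : Set X} {f : List X → ZMod 2} (hf : Cyc q Z A f) :
    ∃ ε > 0, (∀ l : List X, l.length = q + 2 → Sm ε Z l → del f l = 0) ∧
      (∀ l : List X, l.length = q + 1 → Sm ε A l → f l = 0) := by
  obtain ⟨⟨ε, he, h⟩, ε', he', h'⟩ := hf
  exact ⟨min ε ε', lt_min he he', fun l hl hs => h l hl (hs.mono (min_le_left _ _) le_rfl),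
    fun l hl hs => h' l hl (hs.mono (min_le_right _ _) le_rfl)⟩

lemma pull_id (f : List X → ZMod 2) : VC.pull (fun x => x) f = f := by
  funext l; simp [VC.pull]

/-- A map moving points very little induces the identity. -/
lemma near_id {q : ℕ} {r : X → X} {W B Z A : Set X} (hB : B ⊆ W) (hW : W ⊆ Z) (hBA : B ⊆ A)
    (h1 : MapsTo r W Z) (h3 : MapsTo r B A) {f : List X → ZMod 2} {ε η : ℝ} (hd : 0 < η)
    (hη : 4 * η ≤ ε)
    (hf1 : ∀ l : List X, l.length = q + 2 → Sm ε Z l → del f l = 0)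
    (hf2 : ∀ l : List X, l.length = q + 1 → Sm ε A l → f l = 0)
    (hc : ∀ x ∈ W, dist (r x) x < η) :
    Bd q W B (VC.pull r f + f) := by
  have := contig (φ := r) (ψ := fun x => x) (q := q) hB h1 (fun x hx => hW hx) h3
    (fun x hx => hBA hx) hd hf1 hf2 ?_
  · rwa [pull_id] at this
  · intro x hx y hy hxy
    have := hc x hx
    have := hc y hy
    have t1 := dist_triangle (r x) x y
    have t2 := dist_triangle (r x) y (r y)
    rw [dist_comm y (r y)] at t2
    exact ⟨by linarith, by linarith, by linarith⟩

lemma homotopy {q : ℕ} {h : ℝ → X → Y} {Z A : Set X} {Z' A' : Set Y} (hA : A ⊆ Z)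
    (hm : ∀ t ∈ Icc (0 : ℝ) 1, MapsTo (h t) Z Z') (hm' : ∀ t ∈ Icc (0 : ℝ) 1, MapsTo (h t) A A')
    (hZ : IsCompact Z) (hc : ContinuousOn (fun p : ℝ × X => h p.1 p.2) (Icc 0 1 ×ˢ Z))
    {f : List Y → ZMod 2} (hf : Cyc q Z' A' f) :
    Bd q Z A (VC.pull (h 0) f + VC.pull (h 1) f) := by
  obtain ⟨ε, he, hf1, hf2⟩ := hf.scale
  have hu := (isCompact_Icc.prod hZ).uniformContinuousOn_of_continuous hc
  obtain ⟨δ, hd, h'⟩ := Metric.uniformContinuousOn_iff.1 hu ε he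
  obtain ⟨N, hN⟩ := exists_nat_one_div_lt hd
  have hN0 : (0 : ℝ) < N + 1 := by positivity
  have step : ∀ k : ℕ, k ≤ N + 1 →
      Bd q Z A (VC.pull (h 0) f + VC.pull (h (k / (N + 1))) f) := by
    intro k
    induction k with
    | zero => intro _; simp only [Nat.cast_zero, zero_div, fadd_self]; exact Bd.ofV (V.zero _ _)
    | succ k ih =>
      intro hk
      refine (ih (by omega)).trans3 ?_
      have hk' : (k : ℝ) + 1 ≤ N + 1 := by exact_mod_cast hk
      have m1 : (k : ℝ) / (N + 1) ∈ Icc (0 : ℝ) 1 :=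
        ⟨by positivity, by rw [div_le_one hN0]; linarith⟩
      have m2 : ((k + 1 : ℕ) : ℝ) / (N + 1) ∈ Icc (0 : ℝ) 1 :=
        ⟨by positivity, by rw [div_le_one hN0]; push_cast; linarith⟩
      have hdist : dist ((k : ℝ) / (N + 1)) (((k + 1 : ℕ) : ℝ) / (N + 1)) < δ := by
        rw [dist_comm, Real.dist_eq]
        have : ((k + 1 : ℕ) : ℝ) / (N + 1) - (k : ℝ) / (N + 1) = 1 / (N + 1) := by
          push_cast; field_simp; ring
        rw [this, abs_of_pos (by positivity)]; exact hN
      refine contig hA (hm _ m1) (hm _ m2) (hm' _ m1) (hm' _ m2) hd hf1 hf2 ?_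
      intro x hx y hy hxy
      refine ⟨h' (_, x) ⟨m1, hx⟩ (_, y) ⟨m1, hy⟩ ?_, h' (_, x) ⟨m1, hx⟩ (_, y) ⟨m2, hy⟩ ?_,
        h' (_, x) ⟨m2, hx⟩ (_, y) ⟨m2, hy⟩ ?_⟩
      · rw [Prod.dist_eq, max_lt_iff]; exact ⟨by simpa using hd, hxy⟩
      · rw [Prod.dist_eq, max_lt_iff]; exact ⟨hdist, hxy⟩
      · rw [Prod.dist_eq, max_lt_iff]; exact ⟨by simpa using hd, hxy⟩
  have := step (N + 1) le_rfl
  rwa [show (((N + 1 : ℕ) : ℝ)) / (N + 1) = 1 by push_cast; field_simp] at this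

/-! ### Point -/

lemma del_rep (a : ℕ → ZMod 2) (l : List X) :
    del (fun l : List X => a l.length) l = l.length * a (l.length - 1) := by
  induction l generalizing a with
  | nil => simp
  | cons x l ih =>
    rw [del_cons]
    have := ih (fun n => a (n + 1))
    simp only [List.length_cons] at *
    rw [this]
    cases l with
    | nil => simp
    | cons y l => simp; ring

/-- A cocycle pulled back by a constant map is a (reduced) coboundary. -/
lemma const_RBd {q : ℕ} {Z : Set X} {Z' : Set Y} {e : Y} (he : e ∈ Z')
    {f : List Y → ZMod 2} (hf : RCyc q Z' f) : RBd q Z (VC.pull (fun _ : X => e) f) := by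
  obtain ⟨ε, hε, h⟩ := hf
  have e1 : VC.pull (fun _ : X => e) f = fun l : List X => f (List.replicate l.length e) := by
    funext l; simp [VC.pull, List.map_const']
  have key : (q + 2 : ℕ) * f (List.replicate (q + 1) e) = 0 := by
    have h1 := h (List.replicate (q + 2) e) (by simp) ⟨by
      intro x hx; rw [List.eq_of_mem_replicate hx]; exact he, by
      intro x hx y hy; rw [List.eq_of_mem_replicate hx, List.eq_of_mem_replicate hy]; simpa⟩
    have h2 := congrFun (del_pull (fun _ : Y => e) f) (List.replicate (q + 2) e)
    have e2 : VC.pull (fun _ : Y => e) f = fun l : List Y => f (List.replicate l.length e) := by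
      funext l; simp [VC.pull, List.map_const']
    rw [e2, del_rep (fun n => f (List.replicate n e))] at h2
    simp only [VC.pull, List.map_replicate, h1] at h2
    simpa using h2
  refine ⟨fun l => f (List.replicate (l.length + 1) e), 1, one_pos, fun l hl _ => ?_⟩
  rw [e1, Pi.add_apply, del_rep (fun n => f (List.replicate (n + 1) e)), hl]
  simp only [Nat.add_sub_cancel]
  generalize f (List.replicate (q + 1) e) = a at *
  push_cast at *
  generalize (q : ZMod 2) = b at *
  revert a b; decide

lemma contractible {Z : Set X} (hZ : IsCompact Z) {h : ℝ → X → X} {e : X} (he : e ∈ Z)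
    (hm : ∀ t ∈ Icc (0 : ℝ) 1, MapsTo (h t) Z Z)
    (hc : ContinuousOn (fun p : ℝ × X => h p.1 p.2) (Icc 0 1 ×ˢ Z))
    (h0 : ∀ x ∈ Z, h 0 x = x) (h1 : ∀ x ∈ Z, h 1 x = e) {q : ℕ} {f : List X → ZMod 2}
    (hf : RCyc q Z f) : RBd q Z f := by
  have a := (homotopy (empty_subset Z) hm (A' := ∅) (fun t _ => mapsTo_empty _ _) hZ hc
    hf.toC).toR
  have b := const_RBd (X := X) (Z := Z) he hf
  have key : V (q + 1) Z (VC.pull (h 0) f + VC.pull (h 1) f + (f + VC.pull (fun _ => e) f)) := by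
    refine ⟨1, one_pos, fun l hl hs => ?_⟩
    have i1 : l.map (h 0) = l := by
      conv_rhs => rw [← List.map_id l]
      exact List.map_congr_left fun x hx => h0 x (hs.1 x hx)
    have i2 : l.map (h 1) = l.map (fun _ => e) := List.map_congr_left fun x hx => h1 x (hs.1 x hx)
    simp only [Pi.add_apply, VC.pull, i1, i2, z2]
  have c := a.congr (Bd.ofV (A := ∅) key).toR
  exact b.congr' c

end Coh
end VC


set_option linter.unusedSectionVars false

namespace VC

section Exc
variable {X Y : Type*} [MetricSpace X] [MetricSpace Y]

/-- Points of `B` close to `A` are close to `A ∩ B`. -/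
lemma geom {A B : Set X} (hA : IsCompact A) (hB : IsCompact B) {η : ℝ} (hη : 0 < η) :
    ∃ δ > 0, ∀ x ∈ A, ∀ y ∈ B, dist x y < δ → ∃ z ∈ A ∩ B, dist y z < η := by
  have hc : IsCompact (B \ Metric.thickening η (A ∩ B)) := hB.diff Metric.isOpen_thickening
  have hd : Disjoint A (B \ Metric.thickening η (A ∩ B)) := by
    rw [Set.disjoint_left]
    intro x hx hx'
    exact hx'.2 (Metric.self_subset_thickening hη _ ⟨hx, hx'.1⟩)
  obtain ⟨δ, hδ, h⟩ := hd.exists_thickenings hA hc.isClosed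
  refine ⟨δ, hδ, fun x hx y hy hxy => ?_⟩
  by_contra hcon
  have hy' : y ∈ B \ Metric.thickening η (A ∩ B) := by
    refine ⟨hy, fun h' => hcon ?_⟩
    obtain ⟨z, hz, hz'⟩ := Metric.mem_thickening_iff.1 h'
    exact ⟨z, hz, hz'⟩
  have hy1 : y ∈ Metric.thickening δ A :=
    Metric.mem_thickening_iff.2 ⟨x, hx, by rwa [dist_comm]⟩
  exact Set.disjoint_left.1 h hy1 (Metric.self_subset_thickening hδ _ hy')

open Classical in
/-- Discontinuous retraction of points `η`-near `D` to `D`. -/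
noncomputable def ret (D : Set X) (η : ℝ) (x : X) : X :=
  if h : ∃ z ∈ D, dist x z < η then h.choose else x

lemma ret_near {D : Set X} {η : ℝ} {x : X} (h : ∃ z ∈ D, dist x z < η) : ret D η x ∈ D := by
  unfold ret; rw [dif_pos h]; exact h.choose_spec.1

lemma ret_dist (D : Set X) {η : ℝ} (hη : 0 < η) (x : X) : dist (ret D η x) x < η := by
  unfold ret; split_ifs with h
  · rw [dist_comm]; exact h.choose_spec.2
  · simpa

lemma ret_maps {D W : Set X} (hD : D ⊆ W) (η : ℝ) : MapsTo (ret D η) W W := by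
  intro x hx
  by_cases h : ∃ z ∈ D, dist x z < η
  · exact hD (ret_near h)
  · unfold ret; rwa [dif_neg h]

lemma ret_self {D : Set X} {η : ℝ} (hη : 0 < η) : MapsTo (ret D η) D D :=
  fun x hx => ret_near ⟨x, hx, by simpa⟩

lemma Sm.map {r : X → X} {W W' : Set X} {l : List X} {δ η ε : ℝ} (hl : Sm δ W l)
    (hm : ∀ x ∈ l, r x ∈ W') (hr : ∀ x ∈ W, dist (r x) x < η) (he : δ + 2 * η ≤ ε) :
    Sm ε W' (l.map r) := by
  constructor
  · intro y hy
    obtain ⟨x, hx, rfl⟩ := List.mem_map.1 hy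
    exact hm x hx
  · intro y hy y' hy'
    obtain ⟨x, hx, rfl⟩ := List.mem_map.1 hy
    obtain ⟨x', hx', rfl⟩ := List.mem_map.1 hy'
    have := hr x (hl.1 x hx)
    have := hr x' (hl.1 x' hx')
    have := hl.2 x hx x' hx'
    have t1 := dist_triangle (r x) x (r x')
    have t2 := dist_triangle x x' (r x')
    rw [dist_comm x' (r x')] at t2
    linarith

open Classical in
/-- restrict a cochain to tuples in `B`. -/
noncomputable def ind (B : Set X) (f : List X → ZMod 2) : List X → ZMod 2 :=
  fun l => if ∀ x ∈ l, x ∈ B then f l else 0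

lemma ind_in {B : Set X} {f : List X → ZMod 2} {l : List X} (h : ∀ x ∈ l, x ∈ B) :
    ind B f l = f l := if_pos h
lemma ind_out {B : Set X} {f : List X → ZMod 2} {l : List X} (h : ¬ ∀ x ∈ l, x ∈ B) :
    ind B f l = 0 := if_neg h

lemma del_ind_in {B : Set X} {f : List X → ZMod 2} {l : List X} (h : ∀ x ∈ l, x ∈ B) :
    del (ind B f) l = del f l := by
  have : del (ind B f + f) l = 0 := by
    apply del_local
    intro l' hl _
    rw [Pi.add_apply, ind_in (fun x hx => h x (hl.subset hx)), z2]
  rw [del_add, Pi.add_apply] at this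
  generalize del (ind B f) l = a at *
  generalize del f l = b at *
  revert a b; decide

/-- Excision, surjectivity. -/
lemma exc1 {q : ℕ} {A B : Set X} (hA : IsCompact A) (hB : IsCompact B) {f : List X → ZMod 2}
    (hf : Cyc q B (A ∩ B) f) :
    ∃ f', Cyc q (A ∪ B) A f' ∧ Bd q B (A ∩ B) (f + f') := by
  obtain ⟨ε, he, hf1, hf2⟩ := hf.scale
  set η := ε / 4 with hη
  have hη0 : 0 < η := by positivity
  obtain ⟨δ, hδ, hg⟩ := geom hA hB hη0
  set D := A ∩ B with hD
  have hrd := ret_dist D hη0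
  have hb : Bd q B D (pull (ret D η) f + f) :=
    near_id inter_subset_right le_rfl le_rfl (ret_maps inter_subset_right η) (ret_self hη0) hη0
      (by linarith) hf1 hf2 (fun x _ => hrd x)
  -- the retracted cochain vanishes near `D`
  have hv : ∀ (n : ℕ) (l : List X), l.length = q + 1 → Sm (ε / 2) B l →
      (∀ x ∈ l, ∃ z ∈ D, dist x z < η) → pull (ret D η) f l = 0 := by
    intro n l hl hs hn
    apply hf2 _ (by simpa using hl)
    exact hs.map (fun x hx => ret_near (hn x hx)) (fun x _ => hrd x) (by linarith)
  set F := ind B (pull (ret D η) f) with hF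
  have hFB : V (q + 1) B (pull (ret D η) f + F) :=
    ⟨1, one_pos, fun l hl hs => by rw [Pi.add_apply, hF, ind_in hs.1, z2]⟩
  refine ⟨F, ⟨⟨min (ε / 2) δ, by positivity, fun l hl hs => ?_⟩,
    ⟨ε / 2, by positivity, fun l hl hs => ?_⟩⟩, ?_⟩
  · by_cases hl' : ∀ x ∈ l, x ∈ B
    · rw [hF, del_ind_in hl', del_pull]
      apply hf1 _ (by simpa using hl)
      have hsB : Sm (ε / 2) B l := ⟨hl', (hs.mono (min_le_left _ _) le_rfl).2⟩
      exact hsB.map (fun x hx => ret_maps inter_subset_right η (hl' x hx)) (fun x _ => hrd x)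
        (by linarith)
    · apply del_local
      intro l' h1 h2
      by_cases h3 : ∀ x ∈ l', x ∈ B
      · rw [hF, ind_in h3]
        push Not at hl'
        obtain ⟨x, hx, hxB⟩ := hl'
        have hxA : x ∈ A := (hs.1 x hx).resolve_right hxB
        refine hv 0 l' (by omega) ⟨h3, fun y hy z hz => ?_⟩ fun y hy => ?_
        · exact (hs.2 y (h1.subset hy) z (h1.subset hz)).trans_le (min_le_left _ _)
        · exact hg x hxA y (h3 y hy) ((hs.2 x hx y (h1.subset hy)).trans_le (min_le_right _ _))
      · rw [hF, ind_out h3]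
  · by_cases hl' : ∀ x ∈ l, x ∈ B
    · rw [hF, ind_in hl']
      exact hv 0 l hl ⟨hl', hs.2⟩ fun x hx => ⟨x, ⟨hs.1 x hx, hl' x hx⟩, by simpa⟩
    · rw [hF, ind_out hl']
  · rw [add_comm (pull _ _) f] at hb
    exact hb.trans3 (Bd.ofV hFB)

/-- Excision, injectivity. -/
lemma exc2 {q : ℕ} {A B : Set X} (hA : IsCompact A) (hB : IsCompact B) {f : List X → ZMod 2}
    (hf : Cyc q (A ∪ B) A f) (hb : Bd q B (A ∩ B) f) : Bd q (A ∪ B) A f := by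
  obtain ⟨ε₁, he₁, hf1, hf2⟩ := hf.scale
  obtain ⟨g, ⟨ε₂, he₂, hg1⟩, ⟨ε₃, he₃, hg2⟩⟩ := hb
  set ε := min ε₁ (min ε₂ ε₃) with hε
  have he : 0 < ε := by positivity
  have l1 : ε ≤ ε₁ := min_le_left _ _
  have l2 : ε ≤ ε₂ := (min_le_right _ _).trans (min_le_left _ _)
  have l3 : ε ≤ ε₃ := (min_le_right _ _).trans (min_le_right _ _)
  set η := ε / 4 with hη
  have hη0 : 0 < η := by positivity
  obtain ⟨δ, hδ, hg⟩ := geom hA hB hη0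
  set D := A ∩ B with hD
  have hrd := ret_dist D hη0
  have hDA : D ⊆ A := inter_subset_left
  have hDB : D ⊆ B := inter_subset_right
  have hb : Bd q (A ∪ B) A (pull (ret D η) f + f) :=
    near_id subset_union_left le_rfl le_rfl (ret_maps (hDA.trans subset_union_left) η)
      (ret_maps hDA η) hη0
      (by linarith) hf1 hf2 (fun x _ => hrd x)
  have hv : ∀ l : List X, l.length = q → Sm (ε / 2) B l →
      (∀ x ∈ l, ∃ z ∈ D, dist x z < η) → pull (ret D η) g l = 0 := by
    intro l hl hs hn
    apply hg2 _ (by simpa using hl)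
    exact hs.map (fun x hx => ret_near (hn x hx)) (fun x _ => hrd x) (by linarith)
  set G := ind B (pull (ret D η) g) with hG
  rw [add_comm] at hb
  refine Bd.congr' (g := pull (ret D η) f) ?_ hb
  refine ⟨G, ⟨min (ε / 2) δ, by positivity, fun l hl hs => ?_⟩,
    ⟨ε / 2, by positivity, fun l hl hs => ?_⟩⟩
  · by_cases hl' : ∀ x ∈ l, x ∈ B
    · rw [Pi.add_apply, hG, del_ind_in hl', del_pull]
      apply hg1 (l.map (ret D η)) (by simpa using hl)
      have hsB : Sm (ε / 2) B l := ⟨hl', (hs.mono (min_le_left _ _) le_rfl).2⟩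
      exact hsB.map (fun x hx => ret_maps hDB η (hl' x hx)) (fun x _ => hrd x)
        (by linarith)
    · have hl2 := hl'
      push Not at hl2
      obtain ⟨x, hx, hxB⟩ := hl2
      have hxA : x ∈ A := (hs.1 x hx).resolve_right hxB
      have hnear : ∀ y ∈ l, y ∈ B → ∃ z ∈ D, dist y z < η := fun y hy hyB =>
        hg x hxA y hyB ((hs.2 x hx y hy).trans_le (min_le_right _ _))
      rw [Pi.add_apply]
      have z1 : pull (ret D η) f l = 0 := by
        apply hf2 _ (by simpa using hl)
        refine hs.map (fun y hy => ?_) (fun x _ => hrd x) (η := η) ?_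
        · rcases hs.1 y hy with h | h
          · exact ret_maps hDA η h
          · exact hDA (ret_near (hnear y hy h))
        · have := min_le_left (ε / 2) δ
          linarith
      rw [z1, zero_add]
      apply del_local
      intro l' h1 h2
      by_cases h3 : ∀ x ∈ l', x ∈ B
      · rw [hG, ind_in h3]
        refine hv l' (by omega) ⟨h3, fun y hy z hz => ?_⟩ fun y hy => ?_
        · exact (hs.2 y (h1.subset hy) z (h1.subset hz)).trans_le (min_le_left _ _)
        · exact hnear y (h1.subset hy) (h3 y hy)
      · rw [hG, ind_out h3]
  · by_cases hl' : ∀ x ∈ l, x ∈ B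
    · rw [hG, ind_in hl']
      exact hv l hl ⟨hl', hs.2⟩ fun x hx => ⟨x, ⟨hs.1 x hx, hl' x hx⟩, by simpa⟩
    · rw [hG, ind_out hl']

lemma exc2' {q : ℕ} {A B Z D : Set X} (hA : IsCompact A) (hB : IsCompact B) (hZ : A ∪ B = Z)
    (hD : A ∩ B = D) {f : List X → ZMod 2}
    (hf : Cyc q Z A f) (hb : Bd q B D f) : Bd q Z A f := by
  subst hZ hD; exact exc2 hA hB hf hb

lemma exc1' {q : ℕ} {A B Z D : Set X} (hA : IsCompact A) (hB : IsCompact B) (hZ : A ∪ B = Z)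
    (hD : A ∩ B = D) {f : List X → ZMod 2} (hf : Cyc q B D f) :
    ∃ f', Cyc q Z A f' ∧ Bd q B D (f + f') := by
  subst hZ hD; exact exc1 hA hB hf

/-- Tautness. -/
lemma taut {q : ℕ} {Z A : Set X} (hA : A ⊆ Z) {f : List X → ZMod 2} (hf : Cyc q Z A f) :
    ∃ η > 0, ∃ f', Cyc q Z (Z ∩ Metric.thickening η A) f' ∧ Bd q Z A (f + f') := by
  obtain ⟨ε, he, hf1, hf2⟩ := hf.scale
  set η := ε / 4 with hη
  have hη0 : 0 < η := by positivity
  have hrd := ret_dist A hη0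
  have hb : Bd q Z A (pull (ret A η) f + f) :=
    near_id hA le_rfl le_rfl (ret_maps hA η) (ret_self hη0) hη0
      (by linarith) hf1 hf2 (fun x _ => hrd x)
  rw [add_comm] at hb
  refine ⟨η, hη0, pull (ret A η) f, ⟨⟨ε / 2, by positivity, fun l hl hs => ?_⟩,
    ⟨ε / 2, by positivity, fun l hl hs => ?_⟩⟩, hb⟩
  · rw [del_pull]
    apply hf1 _ (by simpa using hl)
    exact hs.map (fun x hx => ret_maps hA η (hs.1 x hx)) (fun x _ => hrd x) (by linarith)
  · apply hf2 _ (by simpa using hl)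
    refine hs.map (fun x hx => ret_near ?_) (fun x _ => hrd x) (by linarith)
    obtain ⟨z, hz, h⟩ := Metric.mem_thickening_iff.1 (hs.1 x hx).2
    exact ⟨z, hz, h⟩

/-- Continuity: a class vanishing on a compact set vanishes on a neighbourhood. -/
lemma continuity {q : ℕ} {Z A Z₁ : Set X} (hA : IsCompact A) (hZ₁ : IsCompact Z₁)
    (h1Z : Z₁ ⊆ Z) {f : List X → ZMod 2} (hf : Cyc q Z A f)
    (hb : Bd q Z₁ (A ∩ Z₁) f) :
    ∃ η > 0, ∀ Z₂ ⊆ Z, (∀ x ∈ Z₂, ∃ z ∈ Z₁, dist x z < η) → Bd q Z₂ (A ∩ Z₂) f := by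
  classical
  obtain ⟨ε₁, he₁, hf1, hf2⟩ := hf.scale
  obtain ⟨g, ⟨ε₂, he₂, hg1⟩, ⟨ε₃, he₃, hg2⟩⟩ := hb
  set ε := min ε₁ (min ε₂ ε₃) with hε
  have he : 0 < ε := by positivity
  have l1 : ε ≤ ε₁ := min_le_left _ _
  have l2 : ε ≤ ε₂ := (min_le_right _ _).trans (min_le_left _ _)
  have l3 : ε ≤ ε₃ := (min_le_right _ _).trans (min_le_right _ _)
  set τ := ε / 4 with hτ
  have hτ0 : 0 < τ := by positivity
  obtain ⟨δ, hδ, hgeo⟩ := geom hZ₁ hA hτ0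
  set r : X → X := fun x => if ∃ z ∈ Z₁ ∩ A, dist x z < τ then ret (Z₁ ∩ A) τ x else ret Z₁ τ x
    with hr
  have hrd : ∀ x, dist (r x) x < τ := by
    intro x; simp only [hr]; split_ifs
    · exact ret_dist _ hτ0 x
    · exact ret_dist _ hτ0 x
  refine ⟨min τ δ, by positivity, fun Z₂ h2Z hnear => ?_⟩
  have hr1 : ∀ x ∈ Z₂, r x ∈ Z₁ := by
    intro x hx; simp only [hr]; split_ifs with h
    · exact (ret_near h).1
    · obtain ⟨z, hz, hxz⟩ := hnear x hx
      exact ret_near ⟨z, hz, hxz.trans_le (min_le_left _ _)⟩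
  have hr2 : ∀ x ∈ A ∩ Z₂, r x ∈ A ∩ Z₁ := by
    intro x hx
    obtain ⟨z, hz, hxz⟩ := hnear x hx.2
    have h : ∃ z ∈ Z₁ ∩ A, dist x z < τ :=
      hgeo z hz x hx.1 (by rw [dist_comm]; exact hxz.trans_le (min_le_right _ _))
    simp only [hr, if_pos h]
    exact (ret_near h).symm
  have hb : Bd q Z₂ (A ∩ Z₂) (pull r f + f) :=
    near_id inter_subset_right h2Z inter_subset_left (fun x hx => h1Z (hr1 x hx))
      (fun x hx => (hr2 x hx).1) hτ0 (by linarith) hf1 hf2 (fun x _ => hrd x)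
  rw [add_comm] at hb
  refine Bd.congr' (g := pull r f) ?_ hb
  refine ⟨pull r g, ⟨ε / 2, by positivity, fun l hl hs => ?_⟩,
    ⟨ε / 2, by positivity, fun l hl hs => ?_⟩⟩
  · rw [del_pull, ← pull_add]
    apply hg1 (l.map r) (by simpa using hl)
    exact hs.map (fun x hx => hr1 x (hs.1 x hx)) (fun x _ => hrd x) (by linarith)
  · apply hg2 _ (by simpa using hl)
    exact hs.map (fun x hx => hr2 x (hs.1 x hx)) (fun x _ => hrd x) (by linarith)

/-! ### Mayer–Vietoris consequences and dimension -/

lemma mv_inj {q : ℕ} {Z₁ Z₂ A : Set X} (h1 : IsCompact Z₁) (h2 : IsCompact Z₂) (hA : IsCompact A)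
    (hAZ : A ⊆ Z₁ ∪ Z₂) {f : List X → ZMod 2} (hf : Cyc (q + 1) (Z₁ ∪ Z₂) A f)
    (hb1 : Bd (q + 1) Z₁ (A ∩ Z₁) f) (hb2 : Bd (q + 1) Z₂ (A ∩ Z₂) f)
    (hv : ∀ h, Cyc q (Z₁ ∩ Z₂) (A ∩ (Z₁ ∩ Z₂)) h → Bd q (Z₁ ∩ Z₂) (A ∩ (Z₁ ∩ Z₂)) h) :
    Bd (q + 1) (Z₁ ∪ Z₂) A f := by
  have b1 : Bd (q + 1) (A ∪ Z₁) A f :=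
    exc2 hA h1 (hf.mono (union_subset hAZ subset_union_left) le_rfl) hb1
  obtain ⟨f', hf', hff⟩ := les1 hf b1
  refine Bd.congr' (g := f') ?_ hff
  have hAZ1 : IsCompact (A ∪ Z₁) := hA.union h1
  have hE : (A ∪ Z₁) ∪ Z₂ = Z₁ ∪ Z₂ := by
    rw [union_assoc]; exact union_eq_right.2 hAZ
  refine Bd.mono (A := A ∪ Z₁) ?_ le_rfl subset_union_left
  refine exc2' hAZ1 h2 hE rfl hf' ?_
  refine les3' (C := A ∩ Z₂) inter_subset_right
    (hf'.mono subset_union_right inter_subset_left) ?_ ?_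
  · exact hb2.congr (hff.mono subset_union_right inter_subset_left)
  · intro h hh
    have hE2 : (A ∩ Z₂) ∪ (Z₁ ∩ Z₂) = (A ∪ Z₁) ∩ Z₂ := (union_inter_distrib_right _ _ _).symm
    have hE3 : (A ∩ Z₂) ∩ (Z₁ ∩ Z₂) = A ∩ (Z₁ ∩ Z₂) := by
      ext x; simp only [mem_inter_iff]; tauto
    refine exc2' (hA.inter h2) (h1.inter h2) hE2 hE3 hh (hv h ?_)
    refine hh.mono ?_ ?_
    · intro x hx; exact ⟨Or.inr hx.1, hx.2⟩
    · intro x hx; exact ⟨hx.1, hx.2.2⟩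

def DimLE (k : ℕ) (Z : Set X) : Prop :=
  ∀ q, k < q → ∀ A ⊆ Z, IsCompact A → ∀ f, Cyc q Z A f → Bd q Z A f

lemma dim_subsingleton {Z : Set X} (hZ : Z.Subsingleton) : DimLE 0 Z := by
  intro q hq A hA _ f hf
  rcases hZ.eq_empty_or_singleton with rfl | ⟨e, rfl⟩
  · exact Bd.ofV (V.empty _ _)
  · rcases subset_singleton_iff_eq.1 hA with rfl | rfl
    · obtain ⟨q, rfl⟩ : ∃ p, q = p + 1 := ⟨q - 1, by omega⟩
      apply RBd.toB
      have := const_RBd (X := X) (Z := {e}) (mem_singleton e) hf.toR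
      refine this.congr' ⟨0, ?_⟩
      rw [del_zero, add_zero]
      refine ⟨1, one_pos, fun l hl hs => ?_⟩
      have : l.map (fun _ => e) = l := by
        conv_rhs => rw [← List.map_id l]
        exact List.map_congr_left fun x hx => (mem_singleton_iff.1 (hs.1 x hx)).symm
      rw [Pi.add_apply, pull, this, z2]
    · exact Bd.ofV hf.2

lemma dim_union {k : ℕ} {Z₁ Z₂ : Set X} (c1 : IsCompact Z₁) (c2 : IsCompact Z₂)
    (h1 : DimLE k Z₁) (h2 : DimLE k Z₂) : DimLE k (Z₁ ∪ Z₂) := by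
  intro q hq A hA hAc f hf
  have b1 : Bd q (A ∪ Z₁) A f :=
    exc2 hAc c1 (hf.mono (union_subset hA subset_union_left) le_rfl)
      (h1 q hq _ inter_subset_right (hAc.inter c1) f (hf.mono subset_union_left inter_subset_left))
  obtain ⟨f', hf', hff⟩ := les1 hf b1
  refine Bd.congr' (g := f') ?_ hff
  have hE : (A ∪ Z₁) ∪ Z₂ = Z₁ ∪ Z₂ := by
    rw [union_assoc]; exact union_eq_right.2 hA
  refine Bd.mono (A := A ∪ Z₁) ?_ le_rfl subset_union_left
  refine exc2' (hAc.union c1) c2 hE rfl hf' ?_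
  exact h2 q hq _ inter_subset_right ((hAc.union c1).inter c2) f'
    (hf'.mono subset_union_right inter_subset_left)

lemma dim_slice {k : ℕ} {Z : Set X} (hZ : IsCompact Z) {φ : X → ℝ} (hφ : Continuous φ)
    (hs : ∀ t, DimLE k (Z ∩ φ ⁻¹' {t})) : DimLE (k + 1) Z := by
  intro q hq A hA hAc f hf
  obtain ⟨q, rfl⟩ : ∃ p, q = p + 1 := ⟨q - 1, by omega⟩
  set W : ℝ → ℝ → Set X := fun a b => Z ∩ φ ⁻¹' (Icc a b) with hW
  have hWc : ∀ a b, IsCompact (W a b) := fun a b =>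
    hZ.inter_right (isClosed_Icc.preimage hφ)
  have hWZ : ∀ a b, W a b ⊆ Z := fun a b => inter_subset_left
  have hT : ∀ t, IsCompact (Z ∩ φ ⁻¹' {t}) := fun t =>
    hZ.inter_right (isClosed_singleton.preimage hφ)
  -- local statement
  have loc : ∀ t, ∃ η > 0, ∀ a b, t - η < a → b < t + η →
      Bd (q + 1) (W a b) (A ∩ W a b) f := by
    intro t
    have hb := hs t (q + 1) (by omega) (A ∩ (Z ∩ φ ⁻¹' {t})) inter_subset_right
      (hAc.inter (hT t)) f (hf.mono inter_subset_left inter_subset_left)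
    obtain ⟨η, hη, h⟩ := continuity hAc (hT t) inter_subset_left hf hb
    set K := Z \ Metric.thickening η (Z ∩ φ ⁻¹' {t}) with hK
    have hKc : IsCompact K := hZ.diff Metric.isOpen_thickening
    have hcl : IsClosed (φ '' K) := (hKc.image hφ).isClosed
    have ht : t ∉ φ '' K := by
      rintro ⟨x, hx, hxt⟩
      exact hx.2 (Metric.self_subset_thickening hη _ ⟨hx.1, hxt⟩)
    obtain ⟨ρ, hρ, hball⟩ := Metric.isOpen_iff.1 hcl.isOpen_compl t ht
    refine ⟨ρ, hρ, fun a b ha hb' => h _ (hWZ a b) fun x hx => ?_⟩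
    by_contra hcon
    have : φ x ∈ (φ '' K)ᶜ := by
      apply hball
      rw [Metric.mem_ball, Real.dist_eq, abs_lt]
      have h1 := hx.2.1
      have h2 := hx.2.2
      constructor <;> linarith
    refine this ⟨x, ⟨hx.1, fun hth => hcon ?_⟩, rfl⟩
    obtain ⟨z, hz, h'⟩ := Metric.mem_thickening_iff.1 hth
    exact ⟨z, hz, h'⟩
  have glue : ∀ a b c, a ≤ b → b ≤ c → Bd (q + 1) (W a b) (A ∩ W a b) f →
      Bd (q + 1) (W b c) (A ∩ W b c) f → Bd (q + 1) (W a c) (A ∩ W a c) f := by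
    intro a b c hab hbc h1 h2
    have e1 : W a b ∪ W b c = W a c := by
      simp only [hW]
      rw [← inter_union_distrib_left, ← preimage_union, Icc_union_Icc_eq_Icc hab hbc]
    have e2 : W a b ∩ W b c = Z ∩ φ ⁻¹' {b} := by
      ext x
      simp only [hW, mem_inter_iff, mem_preimage, mem_Icc, mem_singleton_iff]
      constructor
      · rintro ⟨⟨hz, h1, h2⟩, _, h3, h4⟩; exact ⟨hz, le_antisymm h2 h3⟩
      · rintro ⟨hz, rfl⟩; exact ⟨⟨hz, hab, le_rfl⟩, hz, le_rfl, hbc⟩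
    have hsub1 : W a b ⊆ W a c := by rw [← e1]; exact subset_union_left
    have hsub2 : W b c ⊆ W a c := by rw [← e1]; exact subset_union_right
    have a1 : A ∩ W a c ∩ W a b = A ∩ W a b := by
      rw [inter_assoc, inter_eq_right.2 hsub1]
    have a2 : A ∩ W a c ∩ W b c = A ∩ W b c := by
      rw [inter_assoc, inter_eq_right.2 hsub2]
    have := mv_inj (q := q) (A := A ∩ W a c) (hWc a b) (hWc b c) (hAc.inter (hWc a c))
      (by rw [e1]; exact inter_subset_right)
      (f := f) (by rw [e1]; exact hf.mono (hWZ _ _) inter_subset_left)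
      (by rw [a1]; exact h1) (by rw [a2]; exact h2) ?_
    · rwa [e1] at this
    · intro h hh
      rw [e2] at hh ⊢
      exact hs b q (by omega) _ inter_subset_right ((hAc.inter (hWc a c)).inter (hT b)) h hh
  -- choose an interval containing the image
  obtain ⟨a, b, hab, hsub⟩ : ∃ a b : ℝ, a ≤ b ∧ φ '' Z ⊆ Icc a b := by
    obtain ⟨R, hR⟩ := (hZ.image hφ).isBounded.subset_closedBall 0
    refine ⟨-|R|, |R|, by linarith [abs_nonneg R], fun y hy => ?_⟩
    have := hR hy
    rw [mem_closedBall_zero_iff, Real.norm_eq_abs] at this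
    exact abs_le.1 (this.trans (le_abs_self R))
  have hWab : W a b = Z := by
    apply inter_eq_left.2
    intro x hx; exact hsub ⟨x, hx, rfl⟩
  choose η hη hloc using loc
  obtain ⟨t, ht0, htm, ⟨n, htn⟩, htc⟩ := exists_monotone_Icc_subset_open_cover_Icc hab
    (c := fun s : ℝ => {x : Icc a b | (x : ℝ) ∈ Ioo (s - η s) (s + η s)})
    (fun s => isOpen_Ioo.preimage continuous_subtype_val)
    (fun x _ => mem_iUnion.2 ⟨x, by simp [hη]⟩)
  have step : ∀ m, Bd (q + 1) (W (t 0) (t m)) (A ∩ W (t 0) (t m)) f := by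
    intro m
    induction m with
    | zero =>
      refine hloc (t 0) _ _ ?_ ?_
      · linarith [hη (t 0)]
      · linarith [hη (t 0)]
    | succ m ih =>
      refine glue _ (t m) _ (htm (Nat.zero_le m)) (htm (Nat.le_succ m)) ih ?_
      obtain ⟨s, hs'⟩ := htc m
      exact hloc s _ _ (hs' ⟨le_rfl, htm (Nat.le_succ m)⟩).1 (hs' ⟨htm (Nat.le_succ m), le_rfl⟩).2
  have := step n
  rw [ht0, htn n le_rfl] at this
  rw [hWab, inter_eq_left.2 hA] at this
  exact this

/-- Splitting of top-dimensional classes. -/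
lemma mv_split {d : ℕ} {Z A₁ A₂ : Set X} (hd : DimLE d Z) (h1 : IsCompact A₁)
    (h2 : IsCompact A₂) (h1Z : A₁ ⊆ Z) (h2Z : A₂ ⊆ Z) {f : List X → ZMod 2}
    (hf : Cyc d Z (A₁ ∩ A₂) f) :
    ∃ f₁ f₂, Cyc d Z A₁ f₁ ∧ Cyc d Z A₂ f₂ ∧ Bd d Z (A₁ ∩ A₂) (f + (f₁ + f₂)) := by
  obtain ⟨f', hf', hff⟩ := exc1' (A := A₂) (B := A₁) h2 h1 rfl (inter_comm _ _)
    (hf.mono h1Z le_rfl)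
  have hb := hd (d + 1) (by omega) (A₂ ∪ A₁) (union_subset h2Z h1Z) (h2.union h1) (del f')
    (les_conn hf')
  obtain ⟨f₂, hf₂, hf₂v⟩ := les2 subset_union_left hf' hb
  have hb' : Bd d A₁ (A₁ ∩ A₂) (f + f₂) :=
    hff.trans3 (Bd.ofV (hf₂v.mono subset_union_right))
  obtain ⟨f₁, hf₁, hf₁b⟩ := les1 (hf.add (hf₂.mono le_rfl inter_subset_right)) hb'
  refine ⟨f₁, f₂, hf₁, hf₂, ?_⟩
  rw [add_comm f₁ f₂, ← add_assoc]; exact hf₁b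

end Exc
end VC


set_option linter.unusedSectionVars false

namespace VC

section Susp
variable {X : Type*} [MetricSpace X]

/-- Reduced acyclicity. -/
def Acy (K : Set X) : Prop := ∀ (q : ℕ) (f : List X → ZMod 2), RCyc q K f → RBd q K f

lemma Acy.empty : Acy (∅ : Set X) := fun _ _ _ => ⟨0, V.empty _ _⟩

lemma RBd.ofV {q : ℕ} {Z : Set X} {f : List X → ZMod 2} (hf : V (q + 1) Z f) : RBd q Z f :=
  (Bd.ofV (A := ∅) hf).toR

def Rel (q : ℕ) (Z P Q : Set X) (F h : List X → ZMod 2) : Prop :=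
  ∃ F', Cyc (q + 1) Z Q F' ∧ RBd (q + 1) Z (F + F') ∧ V (q + 2) P (F' + del h)

lemma Rel.add {q : ℕ} {Z P Q : Set X} {F h F₁ h₁ : List X → ZMod 2} (a : Rel q Z P Q F h)
    (b : Rel q Z P Q F₁ h₁) : Rel q Z P Q (F + F₁) (h + h₁) := by
  obtain ⟨F', a1, a2, a3⟩ := a
  obtain ⟨G', b1, b2, b3⟩ := b
  refine ⟨F' + G', a1.add b1, ?_, ?_⟩
  · have := a2.add b2
    rwa [show F + F' + (F₁ + G') = F + F₁ + (F' + G') by abel] at this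
  · have := a3.add b3
    rw [del_add]
    rwa [show F' + del h + (G' + del h₁) = F' + G' + (del h + del h₁) by abel] at this

lemma Rel.bd {q : ℕ} {Z P Q D : Set X} (hP : IsCompact P) (hQ : IsCompact Q) (hZ : Q ∪ P = Z)
    (hD : Q ∩ P = D) {F h : List X → ZMod 2} (a : Rel q Z P Q F h) (hb : RBd q D h) :
    RBd (q + 1) Z F := by
  obtain ⟨F', a1, a2, a3⟩ := a
  obtain ⟨k, hk⟩ := hb
  have : Bd (q + 1) P D F' := ⟨h + del k, by rw [del_add, del_del, add_zero]; exact a3, hk⟩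
  exact (exc2' hQ hP hZ hD a1 this).toR.congr' a2

lemma Rel.exists {q : ℕ} {Z P Q D : Set X} (hZ : Q ∪ P = Z)
    (hD : Q ∩ P = D) (aP : Acy P) (aQ : Acy Q) {F : List X → ZMod 2} (hF : RCyc (q + 1) Z F) :
    ∃ h, RCyc q D h ∧ Rel q Z P Q F h := by
  have hPZ : P ⊆ Z := hZ ▸ subset_union_right
  have hQZ : Q ⊆ Z := hZ ▸ subset_union_left
  obtain ⟨F', h1, h2⟩ := rles1 hF (aQ _ _ (hF.mono hQZ))
  have h3 : Cyc (q + 1) P D F' := h1.mono hPZ (hD ▸ inter_subset_left)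
  obtain ⟨h, h4, h5⟩ := rles3 (hD ▸ inter_subset_right) h3 (aP _ _ h3.toR)
  exact ⟨h, h4, F', h1, h2, h5⟩

lemma susp_ne {q : ℕ} {Z P Q D : Set X} (hP : IsCompact P) (hQ : IsCompact Q) (hZ : Q ∪ P = Z)
    (hD : Q ∩ P = D) (aP : Acy P) (aQ : Acy Q) {h : List X → ZMod 2} (hh : RCyc q D h)
    (hn : ¬ RBd q D h) : ∃ F, RCyc (q + 1) Z F ∧ ¬ RBd (q + 1) Z F := by
  have hPZ : P ⊆ Z := hZ ▸ subset_union_right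
  have hQZ : Q ⊆ Z := hZ ▸ subset_union_left
  obtain ⟨F, h1, h2⟩ := exc1' hQ hP hZ hD (rles_conn (Z := P) hh)
  refine ⟨F, h1.toR, fun hb => hn ?_⟩
  have h3 : Bd (q + 1) Z Q F := rles3' hQZ h1 hb (aQ _)
  have h4 : Bd (q + 1) P D (del h) := (h3.mono hPZ (hD ▸ inter_subset_left)).congr' h2
  obtain ⟨h', h5, h6⟩ := rles2 h4
  exact ((aP _ _ h5).mono (hD ▸ inter_subset_right)).congr' (RBd.ofV h6)

lemma susp_zero {Z P Q D : Set X} (hZ : Q ∪ P = Z)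
    (hD : Q ∩ P = D) (aP : Acy P) (aQ : Acy Q) (hne : D.Nonempty) {F : List X → ZMod 2}
    (hF : RCyc 0 Z F) : RBd 0 Z F := by
  have hPZ : P ⊆ Z := hZ ▸ subset_union_right
  have hQZ : Q ⊆ Z := hZ ▸ subset_union_left
  obtain ⟨F', h1, h2⟩ := rles1 hF (aQ _ _ (hF.mono hQZ))
  refine RBd.congr' (RBd.ofV ?_) h2
  obtain ⟨g, ε, hε, hg⟩ := aP 0 F' (h1.toR.mono hPZ)
  obtain ⟨δ, hδ, hq⟩ := h1.2
  have sm : ∀ (A : Set X) (x : X) (e : ℝ), 0 < e → x ∈ A → Sm e A [x] := fun A x e he hx =>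
    ⟨by simpa using hx, by simpa using he⟩
  have dg : ∀ x : X, del g [x] = g [] := fun x => by simp [del_cons]
  have g0 : g [] = 0 := by
    obtain ⟨z, hz⟩ := hne
    rw [← hD] at hz
    have := hg [z] rfl (sm P z ε hε hz.2)
    rw [Pi.add_apply, hq [z] rfl (sm Q z δ hδ hz.1), zero_add, dg] at this
    exact this
  refine ⟨1, one_pos, fun l hl hs => ?_⟩
  obtain ⟨x, rfl⟩ := List.length_eq_one_iff.1 hl
  have hx : x ∈ Z := hs.1 x (by simp)
  rw [← hZ] at hx
  rcases hx with hx | hx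
  · exact hq [x] rfl (sm Q x δ hδ hx)
  · have := hg [x] rfl (sm P x ε hε hx)
    rwa [Pi.add_apply, dg, g0, add_zero] at this

end Susp

section Cap
variable {F : Type*} [NormedAddCommGroup F] [InnerProductSpace ℝ F] [FiniteDimensional ℝ F]
open scoped RealInnerProductSpace

def Cap (W : Submodule ℝ F) (e : F) (c : ℝ) : Set F := {y | ‖y‖ = 1 ∧ y ∈ W ∧ c ≤ ⟪y, e⟫}

lemma Cap.compact (W : Submodule ℝ F) (e : F) (c : ℝ) : IsCompact (Cap W e c) := by
  have : Cap W e c = sphere (0 : F) 1 ∩ ((W : Set F) ∩ {y | c ≤ ⟪y, e⟫}) := by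
    ext y; simp [Cap]
  rw [this]
  refine (isCompact_sphere _ _).inter_right ((Submodule.closed_of_finiteDimensional W).inter ?_)
  exact isClosed_le continuous_const (by fun_prop)

lemma cap_aux (t a n : ℝ) (h0 : 0 ≤ t) (h1 : t ≤ 1) (ha : -1 < a) (ha1 : a ≤ 1) (hn : 0 < n)
    (hn2 : n ^ 2 = (1 - t) ^ 2 + 2 * t * (1 - t) * a + t ^ 2) :
    a * n ≤ (1 - t) * a + t := by
  have key : ((1 - t) * a + t) ^ 2 - (a * n) ^ 2 = t * (1 - a ^ 2) * (t + 2 * (1 - t) * a) := by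
    rw [mul_pow, hn2]; ring
  have h2 : 0 ≤ 1 - a ^ 2 := by nlinarith
  rcases le_or_gt 0 a with ha0 | ha0
  · refine abs_le_of_sq_le_sq' ?_ (by nlinarith) |>.2
    have : 0 ≤ t * (1 - a ^ 2) * (t + 2 * (1 - t) * a) := by
      have : 0 ≤ (1 - t) * a := mul_nonneg (by linarith) ha0
      have : 0 ≤ t + 2 * (1 - t) * a := by nlinarith
      positivity
    linarith
  · rcases le_or_gt 0 ((1 - t) * a + t) with h | h
    · nlinarith
    · -- both negative
      have h3 : t + 2 * (1 - t) * a ≤ 0 := by nlinarith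
      have : t * (1 - a ^ 2) * (t + 2 * (1 - t) * a) ≤ 0 :=
        mul_nonpos_of_nonneg_of_nonpos (mul_nonneg h0 h2) h3
      have h5 : (-((1 - t) * a + t)) ^ 2 ≤ (-(a * n)) ^ 2 := by
        rw [neg_sq, neg_sq]; linarith
      have := abs_le_of_sq_le_sq' h5 (by nlinarith) |>.2
      linarith

lemma Cap.acy (W : Submodule ℝ F) {e : F} {c : ℝ} (he : ‖e‖ = 1) (heW : e ∈ W) (hc : -1 < c)
    (hc1 : c ≤ 1) : Acy (Cap W e c) := by
  intro q f hf
  have ee : ⟪e, e⟫ = 1 := by rw [real_inner_self_eq_norm_sq, he]; norm_num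
  have hlin : ∀ t : ℝ, ∀ y : F, ‖y‖ = 1 →
      ‖(1 - t) • y + t • e‖ ^ 2 = (1 - t) ^ 2 + 2 * t * (1 - t) * ⟪y, e⟫ + t ^ 2 := by
    intro t y hy
    rw [norm_add_sq_real, norm_smul, norm_smul, mul_pow, mul_pow, hy, he, inner_smul_left,
      inner_smul_right]
    simp; ring
  have hle1 : ∀ y : F, ‖y‖ = 1 → ⟪y, e⟫ ≤ 1 := by
    intro y hy
    have := real_inner_le_norm y e
    rwa [hy, he, one_mul] at this
  have hpos : ∀ t ∈ Icc (0 : ℝ) 1, ∀ y ∈ Cap W e c, 0 < ‖(1 - t) • y + t • e‖ := by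
    intro t ht y hy
    refine lt_of_le_of_ne (norm_nonneg _) fun h0 => ?_
    have := hlin t y hy.1
    rw [← h0] at this
    have h1 : -1 < ⟪y, e⟫ := hc.trans_le hy.2.2
    have ht0 := ht.1
    have ht1 := ht.2
    by_cases h : t * (1 - t) = 0
    · rcases mul_eq_zero.1 h with h | h
      · rw [h] at this; norm_num at this
      · rw [h, (by linarith : t = 1)] at this; norm_num at this
    · have h3 : 0 < t * (1 - t) := lt_of_le_of_ne (mul_nonneg ht0 (by linarith)) (Ne.symm h)
      nlinarith [sq_nonneg (1 - t - t)]
  refine contractible (Cap.compact W e c)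
    (h := fun t y => ‖(1 - t) • y + t • e‖⁻¹ • ((1 - t) • y + t • e)) (e := e)
    ⟨he, heW, by rw [ee]; exact hc1⟩ ?_ ?_ ?_ ?_ hf
  · intro t ht y hy
    have hp := hpos t ht y hy
    refine ⟨?_, W.smul_mem _ (W.add_mem (W.smul_mem _ hy.2.1) (W.smul_mem _ heW)), ?_⟩
    · rw [norm_smul, norm_inv, norm_norm, inv_mul_cancel₀ hp.ne']
    · have h1 : -1 < ⟪y, e⟫ := hc.trans_le hy.2.2
      have := cap_aux t ⟪y, e⟫ _ ht.1 ht.2 h1 (hle1 y hy.1) hp (hlin t y hy.1)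
      rw [real_inner_smul_left, inner_add_left, real_inner_smul_left, real_inner_smul_left, ee,
        mul_one]
      refine hy.2.2.trans ?_
      rw [inv_mul_eq_div, le_div_iff₀ hp]
      exact this
  · refine ContinuousOn.smul (ContinuousOn.inv₀ ?_ ?_) ?_
    · fun_prop
    · rintro ⟨t, y⟩ ⟨ht, hy⟩
      exact (hpos t ht y hy).ne'
    · fun_prop
  · intro y hy; simp [hy.1]
  · intro y hy; simp [he]

end Cap

end VC


set_option linter.unusedSectionVars false

namespace VC

section Std
open scoped RealInnerProductSpace

abbrev Eu (N : ℕ) := EuclideanSpace ℝ (Fin N)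

lemma norm_sq_eu {N : ℕ} (x : Eu N) : ‖x‖ ^ 2 = ∑ i, x i ^ 2 := by
  rw [EuclideanSpace.norm_sq_eq]; simp

/-- coordinate, zero if out of range -/
def crd {N : ℕ} (k : ℕ) (x : Eu N) : ℝ := if h : k < N then x ⟨k, h⟩ else 0

lemma crd_cont {N : ℕ} (k : ℕ) : Continuous (crd k : Eu N → ℝ) := by
  unfold crd
  by_cases h : k < N
  · simp only [h, dif_pos]; fun_prop
  · simp only [h, dif_neg, not_false_eq_true]; fun_prop

lemma crd_val {N : ℕ} (i : Fin N) (x : Eu N) : crd i.1 x = x i := by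
  simp [crd]

lemma eq_of_crd {N : ℕ} {x y : Eu N} (hx : ‖x‖ = 1) (hy : ‖y‖ = 1)
    (h : ∀ i : Fin N, 0 < i.1 → x i = y i) (h0 : 0 ≤ crd 0 x * crd 0 y) : x = y := by
  rcases Nat.eq_zero_or_pos N with rfl | hN
  · ext i; exact i.elim0
  have e : x ⟨0, hN⟩ ^ 2 = y ⟨0, hN⟩ ^ 2 := by
    have h1 := norm_sq_eu x
    have h2 := norm_sq_eu y
    rw [hx] at h1; rw [hy] at h2
    rw [h2] at h1
    rw [← Finset.add_sum_erase _ _ (Finset.mem_univ (⟨0, hN⟩ : Fin N)),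
      ← Finset.add_sum_erase _ (fun i => x i ^ 2) (Finset.mem_univ (⟨0, hN⟩ : Fin N))] at h1
    have : ∑ i ∈ Finset.univ.erase (⟨0, hN⟩ : Fin N), x i ^ 2
        = ∑ i ∈ Finset.univ.erase (⟨0, hN⟩ : Fin N), y i ^ 2 := by
      refine Finset.sum_congr rfl fun i hi => ?_
      rw [h i]
      by_contra h0
      exact (Finset.mem_erase.1 hi).1 (Fin.ext (by simp; omega))
    linarith
  ext i
  by_cases hi : 0 < i.1
  · exact h i hi
  · have : i = ⟨0, hN⟩ := Fin.ext (by simp; omega)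
    subst this
    have h0' : 0 ≤ x ⟨0, hN⟩ * y ⟨0, hN⟩ := by
      simpa [crd, hN] using h0
    rcases sq_eq_sq_iff_eq_or_eq_neg.1 e with e | e
    · exact e
    · rw [e] at h0' ⊢
      have : y ⟨0, hN⟩ = 0 := by nlinarith
      rw [this]; simp

lemma dim_std {N : ℕ} (k : ℕ) : ∀ {Z : Set (Eu N)}, IsCompact Z → Z ⊆ sphere 0 1 →
    (∀ i : Fin N, k < i.1 → ∀ x ∈ Z, ∀ y ∈ Z, x i = y i) → DimLE k Z := by
  induction k with
  | zero =>
    intro Z hZ hS h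
    have hn : ∀ x ∈ Z, ‖x‖ = 1 := fun x hx => by simpa using hS hx
    have e : Z = (Z ∩ {x | 0 ≤ crd 0 x}) ∪ (Z ∩ {x | crd 0 x ≤ 0}) := by
      rw [← inter_union_distrib_left]
      refine (inter_eq_left.2 fun x _ => ?_).symm
      exact le_total 0 (crd 0 x)
    rw [e]
    refine dim_union (hZ.inter_right (isClosed_le continuous_const (crd_cont 0)))
      (hZ.inter_right (isClosed_le (crd_cont 0) continuous_const)) (dim_subsingleton ?_)
      (dim_subsingleton ?_)
    · rintro x ⟨hx, hx'⟩ y ⟨hy, hy'⟩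
      exact eq_of_crd (hn x hx) (hn y hy) (fun i hi => h i hi x hx y hy) (mul_nonneg hx' hy')
    · rintro x ⟨hx, hx'⟩ y ⟨hy, hy'⟩
      exact eq_of_crd (hn x hx) (hn y hy) (fun i hi => h i hi x hx y hy)
        (mul_nonneg_of_nonpos_of_nonpos hx' hy')
  | succ k ih =>
    intro Z hZ hS h
    refine dim_slice hZ (crd_cont (k + 1)) fun t => ?_
    refine ih (hZ.inter_right (isClosed_singleton.preimage (crd_cont _)))
      (inter_subset_left.trans hS) ?_
    rintro i hi x ⟨hx, hx'⟩ y ⟨hy, hy'⟩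
    rcases Nat.lt_or_ge (k + 1) i.1 with h1 | h1
    · exact h i h1 x hx y hy
    · have : i.1 = k + 1 := by omega
      rw [← crd_val, ← crd_val, this, hx', hy']

lemma dim_sphere (d : ℕ) {Z : Set (Eu (d + 1))} (hZ : IsCompact Z) (hS : Z ⊆ sphere 0 1) :
    DimLE d Z :=
  dim_std d hZ hS fun i hi => by omega

/-- standard subspheres -/
def WW (N k : ℕ) : Submodule ℝ (Eu N) where
  carrier := {x | ∀ i : Fin N, k < i.1 → x i = 0}
  add_mem' := by
    intro a b ha hb i hi
    simp [ha i hi, hb i hi]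
  zero_mem' := by intro i _; simp
  smul_mem' := by
    intro c x hx i hi
    simp [hx i hi]

lemma mem_WW {N k : ℕ} {x : Eu N} : x ∈ WW N k ↔ ∀ i : Fin N, k < i.1 → x i = 0 := Iff.rfl

def Sph (N k : ℕ) : Set (Eu N) := {x | ‖x‖ = 1 ∧ x ∈ WW N k}

structure HS (k : ℕ) {X : Type*} [MetricSpace X] (Z : Set X) : Prop where
  van : ∀ q, q ≠ k → ∀ f, RCyc q Z f → RBd q Z f
  ne : ∃ f, RCyc k Z f ∧ ¬ RBd k Z f
  rk : ∀ f g, RCyc k Z f → RCyc k Z g → RBd k Z f ∨ RBd k Z g ∨ RBd k Z (f + g)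

lemma HS.susp {k : ℕ} {X : Type*} [MetricSpace X] {Z P Q D : Set X} (hP : IsCompact P)
    (hQ : IsCompact Q) (hZ : Q ∪ P = Z)
    (hD : Q ∩ P = D) (aP : Acy P) (aQ : Acy Q) (hne : D.Nonempty) (h : HS k D) :
    HS (k + 1) Z := by
  refine ⟨?_, ?_, ?_⟩
  · intro q hq f hf
    rcases q with _ | q
    · exact susp_zero hZ hD aP aQ hne hf
    · obtain ⟨g, h1, h2⟩ := Rel.exists hZ hD aP aQ hf
      exact h2.bd hP hQ hZ hD (h.van q (by omega) g h1)
  · obtain ⟨f, h1, h2⟩ := h.ne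
    exact susp_ne hP hQ hZ hD aP aQ h1 h2
  · intro f g hf hg
    obtain ⟨f', h1, h2⟩ := Rel.exists hZ hD aP aQ hf
    obtain ⟨g', h3, h4⟩ := Rel.exists hZ hD aP aQ hg
    rcases h.rk f' g' h1 h3 with h | h | h
    · exact Or.inl (h2.bd hP hQ hZ hD h)
    · exact Or.inr (Or.inl (h4.bd hP hQ hZ hD h))
    · exact Or.inr (Or.inr ((h2.add h4).bd hP hQ hZ hD h))

lemma hs_zero {X : Type*} [MetricSpace X] {a b : X} (hab : a ≠ b) : HS 0 ({a, b} : Set X) := by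
  classical
  have sm : ∀ (A : Set X) (x : X) (e : ℝ), 0 < e → x ∈ A → Sm e A [x] := fun A x e he hx =>
    ⟨by simpa using hx, by simpa using he⟩
  have crit : ∀ f : List X → ZMod 2, f [a] = f [b] → RBd 0 ({a, b} : Set X) f := by
    intro f hf
    refine ⟨fun _ => f [a], 1, one_pos, fun l hl hs => ?_⟩
    obtain ⟨x, rfl⟩ := List.length_eq_one_iff.1 hl
    have hx : x ∈ ({a, b} : Set X) := hs.1 x (by simp)
    have : f [x] = f [a] := by
      rcases hx with rfl | hx
      · rfl
      · rw [mem_singleton_iff.1 hx, hf]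
    simp [del_cons, this, z2]
  refine ⟨?_, ?_, ?_⟩
  · intro q hq f hf
    have : DimLE 0 ({a, b} : Set X) := by
      rw [insert_eq]
      exact dim_union isCompact_singleton isCompact_singleton
        (dim_subsingleton subsingleton_singleton) (dim_subsingleton subsingleton_singleton)
    exact (this q (by omega) ∅ (empty_subset _) isCompact_empty f hf.toC).toR
  · refine ⟨fun l => if l = [a] then 1 else 0, ?_, ?_⟩
    · refine ⟨dist a b, dist_pos.2 hab, fun l hl hs => ?_⟩
      obtain ⟨x, y, rfl⟩ := List.length_eq_two.1 hl
      have hx := hs.1 x (by simp)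
      have hy := hs.1 y (by simp)
      have hxy := hs.2 x (by simp) y (by simp)
      have : x = y := by
        rcases hx with rfl | hx <;> rcases hy with rfl | hy
        · rfl
        · rw [mem_singleton_iff.1 hy] at hxy; exact absurd hxy (lt_irrefl _)
        · rw [mem_singleton_iff.1 hx, dist_comm] at hxy; exact absurd hxy (lt_irrefl _)
        · rw [mem_singleton_iff.1 hx, mem_singleton_iff.1 hy]
      subst this
      simp [del_cons, z2]
    · rintro ⟨g, ε, hε, hg⟩
      have h1 := hg [a] rfl (sm _ a ε hε (by simp))
      have h2 := hg [b] rfl (sm _ b ε hε (by simp))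
      simp only [Pi.add_apply, del_cons] at h1 h2
      simp [hab.symm] at h1 h2
      rw [h2] at h1
      simp at h1
  · intro f g _ _
    have key : ∀ p q r s : ZMod 2, p = q ∨ r = s ∨ p + r = q + s := by decide
    rcases key (f [a]) (f [b]) (g [a]) (g [b]) with h | h | h
    · exact Or.inl (crit f h)
    · exact Or.inr (Or.inl (crit g h))
    · exact Or.inr (Or.inr (crit (f + g) h))

lemma sph_hs {N : ℕ} (k : ℕ) (hk : k < N) : HS k (Sph N k) := by
  induction k with
  | zero =>
    set e : Eu N := EuclideanSpace.single ⟨0, hk⟩ 1 with he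
    have hen : ‖e‖ = 1 := by simp [he]
    have : Sph N 0 = {e, -e} := by
      have ei : ∀ i : Fin N, 0 < i.1 → e i = 0 := by
        intro i hi
        have : i ≠ ⟨0, hk⟩ := by rintro rfl; simp at hi
        simp [he, this]
      have e0 : crd 0 e = 1 := by simp [crd, hk, he]
      have e0' : crd 0 (-e) = -1 := by simp [crd, hk, he]
      ext x
      constructor
      · rintro ⟨h1, h2⟩
        rcases le_total 0 (crd 0 x) with h | h
        · left
          refine eq_of_crd h1 hen (fun i hi => ?_) (by rw [e0]; linarith)
          rw [h2 i hi, ei i hi]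
        · right
          refine eq_of_crd h1 (by simpa using hen) (fun i hi => ?_) (by rw [e0']; linarith)
          rw [h2 i hi]; simp [ei i hi]
      · rintro (rfl | hx)
        · exact ⟨hen, ei⟩
        · rw [mem_singleton_iff.1 hx]
          exact ⟨by simpa using hen, fun i hi => by simp [ei i hi]⟩
    rw [this]
    refine hs_zero fun h => ?_
    have : ‖e + e‖ = 0 := by nth_rewrite 2 [h]; simp
    rw [← two_smul ℝ, norm_smul, hen] at this
    norm_num at this
  | succ k ih =>
    set e : Eu N := EuclideanSpace.single ⟨k + 1, hk⟩ 1 with he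
    have hen : ‖e‖ = 1 := by simp [he]
    have heW : e ∈ WW N (k + 1) := by
      intro i hi
      have : i ≠ ⟨k + 1, hk⟩ := by rintro rfl; simp at hi
      simp [he, this]
    have inn : ∀ x : Eu N, ⟪x, e⟫ = x ⟨k + 1, hk⟩ := by
      intro x; simp [he, EuclideanSpace.inner_single_right]
    refine HS.susp (D := Sph N k) (P := Cap (WW N (k + 1)) e 0) (Q := Cap (WW N (k + 1)) (-e) 0)
      (Cap.compact _ _ _) (Cap.compact _ _ _) ?_ ?_
      (Cap.acy _ hen heW (by norm_num) (by norm_num))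
      (Cap.acy _ (by simpa using hen) ((WW N (k + 1)).neg_mem heW) (by norm_num) (by norm_num))
      ?_ (ih (by omega))
    · ext x
      simp only [Cap, Sph, mem_union, mem_ofPred_eq, inner_neg_right, inn]
      constructor
      · rintro (h | h) <;> exact ⟨h.1, h.2.1⟩
      · rintro ⟨h1, h2⟩
        rcases le_total 0 (x ⟨k + 1, hk⟩) with h | h
        · exact Or.inr ⟨h1, h2, h⟩
        · exact Or.inl ⟨h1, h2, by linarith⟩
    · ext x
      simp only [Cap, Sph, mem_inter_iff, mem_ofPred_eq, inner_neg_right, inn]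
      constructor
      · rintro ⟨⟨h1, h2, h3⟩, -, -, h4⟩
        refine ⟨h1, fun i hi => ?_⟩
        rcases Nat.lt_or_ge (k + 1) i.1 with h5 | h5
        · exact h2 i h5
        · have : i = ⟨k + 1, hk⟩ := Fin.ext (by simp; omega)
          subst this; linarith
      · rintro ⟨h1, h2⟩
        have h3 : x ⟨k + 1, hk⟩ = 0 := h2 _ (by simp)
        have h4 : x ∈ WW N (k + 1) := fun i hi => h2 i (by omega)
        refine ⟨⟨h1, h4, by rw [h3]; simp⟩, h1, h4, by rw [h3]⟩
    · refine ⟨EuclideanSpace.single ⟨k, by omega⟩ 1, by simp, fun i hi => ?_⟩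
      have : i ≠ ⟨k, by omega⟩ := by intro h; rw [h] at hi; simp at hi
      simp [this]

lemma std_hs (d : ℕ) : HS d (sphere (0 : Eu (d + 1)) 1) := by
  have : sphere (0 : Eu (d + 1)) 1 = Sph (d + 1) d := by
    ext x; simp only [Sph, mem_ofPred_eq, mem_sphere_zero_iff_norm]
    exact ⟨fun h => ⟨h, fun i hi => by omega⟩, fun h => h.1⟩
  rw [this]; exact sph_hs d (by omega)

/-- complement of an open ball in the sphere -/
def Kb (d : ℕ) (x : Eu (d + 1)) (r : ℝ) : Set (Eu (d + 1)) := sphere 0 1 \ ball x r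

lemma Kb.compact (d : ℕ) (x : Eu (d + 1)) (r : ℝ) : IsCompact (Kb d x r) :=
  (isCompact_sphere _ _).diff isOpen_ball

lemma Kb.acy {d : ℕ} {x : Eu (d + 1)} (hx : x ∈ sphere (0 : Eu (d + 1)) 1) {r : ℝ} (hr : 0 < r) :
    Acy (Kb d x r) := by
  have hx' : ‖x‖ = 1 := by simpa using hx
  have key : ∀ y : Eu (d + 1), ‖y‖ = 1 → (y ∉ ball x r ↔ r ^ 2 / 2 - 1 ≤ ⟪y, -x⟫) := by
    intro y hy
    rw [mem_ball, not_lt, dist_eq_norm, ← sq_le_sq₀ hr.le (norm_nonneg _), norm_sub_sq_real, hy, hx',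
      inner_neg_right]
    constructor <;> intro h <;> linarith
  rcases le_or_gt r 2 with h2 | h2
  · have : Kb d x r = Cap ⊤ (-x) (r ^ 2 / 2 - 1) := by
      ext y
      simp only [Kb, Cap, mem_sdiff, mem_sphere_zero_iff_norm, mem_ofPred_eq, Submodule.mem_top,
        true_and]
      constructor
      · rintro ⟨h, h'⟩; exact ⟨h, (key y h).1 h'⟩
      · rintro ⟨h, h'⟩; exact ⟨h, (key y h).2 h'⟩
    rw [this]
    exact Cap.acy _ (by simpa using hx') trivial (by nlinarith) (by nlinarith)
  · have : Kb d x r = ∅ := by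
      rw [eq_empty_iff_forall_notMem]
      rintro y ⟨h, h'⟩
      have h : ‖y‖ = 1 := by simpa using h
      have := (key y h).1 h'
      have h3 := real_inner_le_norm y (-x)
      rw [norm_neg, h, hx'] at h3
      nlinarith
    rw [this]; exact Acy.empty

end Std
end VC


set_option linter.unusedSectionVars false

namespace VC

section S5
open scoped RealInnerProductSpace

/-- local degree classes -/
def GG (d : ℕ) (A : Set (Eu (d + 1))) (x : Eu (d + 1)) (f : List (Eu (d + 1)) → ZMod 2) : Prop :=
  ∃ r > 0, A ⊆ Kb d x r ∧ ∃ f', Cyc d (sphere 0 1) (Kb d x r) f' ∧ Bd d (sphere 0 1) A (f + f')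

lemma Kb.sub (d : ℕ) (x : Eu (d + 1)) (r : ℝ) : Kb d x r ⊆ sphere 0 1 := sdiff_subset

lemma Kb.anti {d : ℕ} {x y : Eu (d + 1)} {r s : ℝ} (h : s ≤ r - dist x y) :
    Kb d x r ⊆ Kb d y s :=
  sdiff_subset_sdiff_right (ball_subset_ball' (by rw [dist_comm]; linarith))

lemma GG.shrink {d : ℕ} {x y : Eu (d + 2)} (hx : x ∈ sphere (0 : Eu (d + 2)) 1)
    (hy : y ∈ sphere (0 : Eu (d + 2)) 1)
    {r s : ℝ} (hs : 0 < s) (h : s ≤ r - dist x y) {f : List (Eu (d + 2)) → ZMod 2}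
    (hf : Cyc (d + 1) (sphere 0 1) (Kb (d + 1) x r) f) :
    ∃ f', Cyc (d + 1) (sphere 0 1) (Kb (d + 1) y s) f' ∧
      Bd (d + 1) (sphere 0 1) (Kb (d + 1) x r) (f + f') := by
  have hr : 0 < r := by linarith [dist_nonneg (x := x) (y := y)]
  have hf' : Cyc (d + 1) (Kb (d + 1) y s) (Kb (d + 1) x r) f := hf.mono (Kb.sub _ _ _) le_rfl
  exact les1 hf (rles3' (Kb.anti h) hf' (Kb.acy hy hs _ _ hf'.toR) (Kb.acy hx hr _))

lemma GG.norm {d : ℕ} {A : Set (Eu (d + 2))} {x : Eu (d + 2)}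
    (hx : x ∈ sphere (0 : Eu (d + 2)) 1) {f : List (Eu (d + 2)) → ZMod 2}
    (h : GG (d + 1) A x f) {ρ : ℝ} (hρ : 0 < ρ) (hA : A ⊆ Kb (d + 1) x ρ) :
    ∃ f', Cyc (d + 1) (sphere 0 1) (Kb (d + 1) x ρ) f' ∧ Bd (d + 1) (sphere 0 1) A (f + f') := by
  obtain ⟨r, hr, hAr, f', h1, h2⟩ := h
  rcases le_total r ρ with h | h
  · exact ⟨f', h1.mono le_rfl (Kb.anti (by simpa using h)), h2⟩
  · obtain ⟨f'', h3, h4⟩ := GG.shrink hx hx hρ (by simpa using h) h1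
    exact ⟨f'', h3, h2.trans3 (h4.mono le_rfl hAr)⟩

lemma GG.near {d : ℕ} {A : Set (Eu (d + 2))} {x y : Eu (d + 2)}
    (hx : x ∈ sphere (0 : Eu (d + 2)) 1) (hy : y ∈ sphere (0 : Eu (d + 2)) 1) {ρ : ℝ}
    (hρ : dist x y < ρ) (hA : A ⊆ Kb (d + 1) x ρ)
    (f : List (Eu (d + 2)) → ZMod 2) : GG (d + 1) A x f ↔ GG (d + 1) A y f := by
  have hρ0 : 0 < ρ := dist_nonneg.trans_lt hρ
  have hK : Kb (d + 1) x ρ ⊆ Kb (d + 1) y (ρ - dist x y) := Kb.anti le_rfl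
  constructor
  · intro h
    obtain ⟨f', h1, h2⟩ := h.norm hx hρ0 hA
    obtain ⟨f'', h3, h4⟩ := GG.shrink hx hy (s := ρ - dist x y) (by linarith) le_rfl h1
    exact ⟨ρ - dist x y, by linarith, hA.trans hK, f'', h3, h2.trans3 (h4.mono le_rfl hA)⟩
  · intro h
    obtain ⟨f', h1, h2⟩ := h.norm hy (ρ := ρ - dist x y) (by linarith) (hA.trans hK)
    exact ⟨ρ, hρ0, hA, f', h1.mono le_rfl hK, h2⟩

lemma GG.congr {d : ℕ} {A : Set (Eu (d + 1))} {x : Eu (d + 1)} {f g : List (Eu (d + 1)) → ZMod 2}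
    (h : GG d A x g) (hb : Bd d (sphere 0 1) A (f + g)) : GG d A x f := by
  obtain ⟨r, hr, hAr, f', h1, h2⟩ := h
  exact ⟨r, hr, hAr, f', h1, hb.trans3 h2⟩

lemma Kb.exists {d : ℕ} {A : Set (Eu (d + 1))} (hA : IsCompact A) (hAS : A ⊆ sphere 0 1)
    {x : Eu (d + 1)} (hx : x ∉ A) : ∃ r > 0, A ⊆ Kb d x r := by
  obtain ⟨r, hr, h⟩ := Metric.isOpen_iff.1 hA.isClosed.isOpen_compl x hx
  exact ⟨r, hr, fun y hy => ⟨hAS hy, fun hy' => h hy' hy⟩⟩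

lemma GG.add {d : ℕ} {A : Set (Eu (d + 2))} (hA : IsCompact A) (hAS : A ⊆ sphere 0 1)
    {x : Eu (d + 2)} (hxS : x ∈ sphere (0 : Eu (d + 2)) 1) (hx : x ∉ A)
    {f g : List (Eu (d + 2)) → ZMod 2}
    (hf : GG (d + 1) A x f) (hg : GG (d + 1) A x g) : GG (d + 1) A x (f + g) := by
  obtain ⟨r, hr, hAr⟩ := Kb.exists hA hAS hx
  obtain ⟨f', h1, h2⟩ := hf.norm hxS hr hAr
  obtain ⟨g', h3, h4⟩ := hg.norm hxS hr hAr
  refine ⟨r, hr, hAr, f' + g', h1.add h3, ?_⟩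
  have := h2.add h4
  rwa [show f + f' + (g + g') = f + g + (f' + g') by abel] at this

lemma std_S5b {d : ℕ} {A : Set (Eu (d + 2))} (hA : IsCompact A) (hAS : A ⊆ sphere 0 1)
    (hc : IsPreconnected (sphere 0 1 \ A)) {f : List (Eu (d + 2)) → ZMod 2}
    (hf : Cyc (d + 1) (sphere 0 1) A f) (hb : Bd (d + 1) (sphere 0 1) ∅ f) :
    Bd (d + 1) (sphere 0 1) A f := by
  classical
  rcases (sphere (0 : Eu (d + 2)) 1 \ A).eq_empty_or_nonempty with he | ⟨x0, hx0⟩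
  · have : A = sphere 0 1 := hAS.antisymm (sdiff_eq_empty.1 he)
    exact Bd.ofV (this ▸ hf.2)
  have conn : ∀ x ∈ sphere (0 : Eu (d + 2)) 1 \ A, ∀ g, GG (d + 1) A x g → GG (d + 1) A x0 g := by
    intro x hx
    have := hc.induction₂ (P := fun x y => ∀ g, GG (d + 1) A x g ↔ GG (d + 1) A y g) ?_ ?_ ?_ hx hx0
    · exact fun g => (this g).1
    · intro x hx
      obtain ⟨r, hr, hAr⟩ := Kb.exists hA hAS hx.2
      have h1 : ball x r ∈ nhdsWithin x (sphere 0 1 \ A) :=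
        mem_nhdsWithin_of_mem_nhds (ball_mem_nhds x hr)
      filter_upwards [h1, self_mem_nhdsWithin] with y hy hy'
      exact GG.near hx.1 hy'.1 (by rw [dist_comm]; exact hy) hAr
    · intro x y z _ _ _ h1 h2 g
      exact (h1 g).trans (h2 g)
    · intro x y _ _ h1 g
      exact (h1 g).symm
  obtain ⟨η, hη, f', hf', hff⟩ := taut hAS hf
  have hC : IsCompact (sphere (0 : Eu (d + 2)) 1 \ thickening η A) :=
    (isCompact_sphere _ _).diff isOpen_thickening
  have hCV : ∀ x ∈ sphere (0 : Eu (d + 2)) 1 \ thickening η A, x ∉ A := fun x hx h =>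
    hx.2 (self_subset_thickening hη _ h)
  have hr : ∀ x : Eu (d + 2), ∃ r > 0, x ∉ A → A ⊆ Kb (d + 1) x r := by
    intro x
    by_cases h : x ∈ A
    · exact ⟨1, one_pos, fun h' => absurd h h'⟩
    · obtain ⟨r, h1, h2⟩ := Kb.exists hA hAS h
      exact ⟨r, h1, fun _ => h2⟩
  choose ρ hρ hρA using hr
  obtain ⟨t, ht, htc⟩ := hC.elim_nhds_subcover (fun x => ball x (ρ x))
    (fun x _ => ball_mem_nhds x (hρ x))
  have gen : ∀ t : Finset (Eu (d + 2)), (∀ x ∈ t, x ∈ sphere (0 : Eu (d + 2)) 1 \ A) →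
      ∀ g, Cyc (d + 1) (sphere 0 1) (sphere 0 1 \ ⋃ x ∈ t, ball x (ρ x)) g →
        GG (d + 1) A x0 g := by
    intro t
    induction t using Finset.induction_on with
    | empty =>
      intro _ g hg
      simp only [Finset.notMem_empty, iUnion_of_empty, iUnion_empty, sdiff_empty] at hg
      obtain ⟨r, hr, hAr⟩ := Kb.exists hA hAS hx0.2
      exact ⟨r, hr, hAr, 0, ⟨by rw [del_zero]; exact V.zero _ _, V.zero _ _⟩, by
        rw [add_zero]; exact Bd.ofV hg.2⟩
    | insert a t hat ih =>
      intro hS g hg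
      have e : sphere (0 : Eu (d + 2)) 1 \ ⋃ x ∈ insert a t, ball x (ρ x) =
          Kb (d + 1) a (ρ a) ∩ (sphere 0 1 \ ⋃ x ∈ t, ball x (ρ x)) := by
        rw [Finset.set_biUnion_insert, ← sdiff_inter_sdiff]; rfl
      rw [e] at hg
      have ha := hS a (by simp)
      have hS' : ∀ x ∈ t, x ∈ sphere (0 : Eu (d + 2)) 1 \ A := fun x hx => hS x (by simp [hx])
      obtain ⟨f₁, f₂, h1, h2, h3⟩ := mv_split (dim_sphere (d + 1) (isCompact_sphere _ _) le_rfl)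
        (Kb.compact _ _ _) ((isCompact_sphere _ _).diff
          (isOpen_biUnion fun x _ => isOpen_ball)) (Kb.sub _ _ _) sdiff_subset hg
      have hA1 : A ⊆ Kb (d + 1) a (ρ a) := hρA a ha.2
      have hA2 : A ⊆ sphere 0 1 \ ⋃ x ∈ t, ball x (ρ x) := by
        intro y hy
        refine ⟨hAS hy, fun hy' => ?_⟩
        obtain ⟨x, hx, hyx⟩ := mem_iUnion₂.1 hy'
        exact (hρA x (hS' x hx).2 hy).2 hyx
      refine GG.congr ?_ (h3.mono le_rfl (subset_inter hA1 hA2))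
      refine GG.add hA hAS hx0.1 hx0.2 (conn a ha _ ?_) (ih hS' _ h2)
      exact ⟨ρ a, hρ a, hA1, f₁, h1, by rw [fadd_self]; exact Bd.ofV (V.zero _ _)⟩
  have g1 : GG (d + 1) A x0 f' := by
    refine gen t (fun x hx => ⟨(ht x hx).1, hCV x (ht x hx)⟩) f' (hf'.mono le_rfl ?_)
    rintro x ⟨hx, hx'⟩
    refine ⟨hx, by_contra fun h => hx' (htc ⟨hx, h⟩)⟩
  obtain ⟨r, hr, hAr, f'', h1, h2⟩ := g1.congr hff
  have h3 : Bd (d + 1) (sphere 0 1) ∅ f'' := hb.congr (h2.mono le_rfl (empty_subset _))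
  have h4 := rles3' (Kb.sub _ _ _) h1 h3.toR (Kb.acy hx0.1 hr _)
  exact (h4.mono le_rfl hAr).congr' h2

lemma std_S4 {d : ℕ} {A : Set (Eu (d + 2))} (hA : IsCompact A) (hAS : A ⊂ sphere 0 1)
    {f : List (Eu (d + 2)) → ZMod 2} (hf : Cyc (d + 1) A ∅ f) : Bd (d + 1) A ∅ f := by
  obtain ⟨x, hx, hxA⟩ := exists_of_ssubset hAS
  obtain ⟨r, hr, hAr⟩ := Kb.exists hA hAS.1 hxA
  have h1 := dim_sphere (d + 1) (Kb.compact (d + 1) x r) (Kb.sub _ _ _) (d + 2) (by omega) A hAr hA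
    (del f) (rles_conn hf.toR)
  obtain ⟨h', h2, h3⟩ := rles2 h1
  exact (((Kb.acy hx hr _ _ h2).mono hAr).congr' (RBd.ofV h3)).toB

end S5

section Transfer
variable {E : Type*} [MetricSpace E]

def IsSph (d : ℕ) (Z : Set E) : Prop := IsCompact Z ∧ HomeoToSphere d Z

lemma HomeoToSphere.maps {d : ℕ} {Z : Set E} (hZ : IsCompact Z) (h : HomeoToSphere d Z) :
    ∃ (φ : E → Eu (d + 1)) (ψ : Eu (d + 1) → E), MapsTo φ Z (sphere 0 1) ∧
      MapsTo ψ (sphere 0 1) Z ∧ (∀ x ∈ Z, ψ (φ x) = x) ∧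
      (∀ y ∈ sphere (0 : Eu (d + 1)) 1, φ (ψ y) = y) ∧
      UniformContinuousOn φ Z ∧ UniformContinuousOn ψ (sphere 0 1) := by
  classical
  obtain ⟨e⟩ := h
  have hne : (sphere (0 : Eu (d + 1)) 1).Nonempty := NormedSpace.sphere_nonempty.2 (by norm_num)
  obtain ⟨y0, hy0⟩ := hne
  set z0 : Z := e.symm ⟨y0, hy0⟩
  set φ : E → Eu (d + 1) := fun x => if h : x ∈ Z then (e ⟨x, h⟩ : Eu (d + 1)) else 0 with hφ
  set ψ : Eu (d + 1) → E := fun y => if h : y ∈ sphere (0 : Eu (d + 1)) 1 then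
    (e.symm ⟨y, h⟩ : E) else z0 with hψ
  have p1 : ∀ x (h : x ∈ Z), φ x = e ⟨x, h⟩ := fun x h => dif_pos h
  have p2 : ∀ y (h : y ∈ sphere (0 : Eu (d + 1)) 1), ψ y = e.symm ⟨y, h⟩ := fun y h => dif_pos h
  have m1 : MapsTo φ Z (sphere 0 1) := fun x hx => by rw [p1 x hx]; exact (e ⟨x, hx⟩).2
  have m2 : MapsTo ψ (sphere 0 1) Z := fun x hx => by rw [p2 x hx]; exact (e.symm ⟨x, hx⟩).2
  refine ⟨φ, ψ, m1, m2, ?_, ?_, ?_, ?_⟩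
  · intro x hx
    rw [p2 _ (m1 hx)]
    have : (⟨φ x, m1 hx⟩ : sphere (0 : Eu (d + 1)) 1) = e ⟨x, hx⟩ := Subtype.ext (p1 x hx)
    rw [this]; simp
  · intro y hy
    rw [p1 _ (m2 hy)]
    have : (⟨ψ y, m2 hy⟩ : Z) = e.symm ⟨y, hy⟩ := Subtype.ext (p2 y hy)
    rw [this]; simp
  · refine hZ.uniformContinuousOn_of_continuous ?_
    rw [continuousOn_iff_continuous_domRestrict]
    have : Z.domRestrict φ = fun x => (e x : Eu (d + 1)) := by
      funext x; exact p1 x.1 x.2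
    rw [this]
    exact continuous_subtype_val.comp e.continuous
  · refine (isCompact_sphere _ _).uniformContinuousOn_of_continuous ?_
    rw [continuousOn_iff_continuous_domRestrict]
    have : (sphere (0 : Eu (d + 1)) 1).domRestrict ψ = fun x => (e.symm x : E) := by
      funext x; exact p2 x.1 x.2
    rw [this]
    exact continuous_subtype_val.comp e.symm.continuous

variable {X Y : Type*} [MetricSpace X] [MetricSpace Y]

lemma pull_pull_V {n : ℕ} {A : Set X} {φ : X → Y} {ψ : Y → X} (h : ∀ x ∈ A, ψ (φ x) = x)
    (f : List X → ZMod 2) : V n A (f + pull φ (pull ψ f)) := by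
  refine ⟨1, one_pos, fun l _ hs => ?_⟩
  have : (l.map φ).map ψ = l := by
    rw [List.map_map]
    conv_rhs => rw [← List.map_id l]
    exact List.map_congr_left fun x hx => h x (hs.1 x hx)
  simp only [Pi.add_apply, pull, this, z2]

lemma Bd.ofPull {q : ℕ} {Z A : Set X} {Z' A' : Set Y} {φ : X → Y} {ψ : Y → X} (hA : A ⊆ Z)
    (hm : MapsTo φ Z Z') (hm' : MapsTo φ A A') (hu : UniformContinuousOn φ Z)
    (h : ∀ x ∈ Z, ψ (φ x) = x) {f : List X → ZMod 2} (hb : Bd q Z' A' (VC.pull ψ f)) :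
    Bd q Z A f :=
  (hb.pull hA hm hm' hu).congr' (Bd.ofV (pull_pull_V h f))

end Transfer

section Facts
variable {E : Type*} [MetricSpace E]

lemma IsSph.nonempty {d : ℕ} {Z : Set E} (h : IsSph d Z) : Z.Nonempty := by
  obtain ⟨φ, ψ, m1, m2, i1, i2, u1, u2⟩ := HomeoToSphere.maps h.1 h.2
  obtain ⟨y, hy⟩ : (sphere (0 : Eu (d + 1)) 1).Nonempty :=
    NormedSpace.sphere_nonempty.2 (by norm_num)
  exact ⟨ψ y, m2 hy⟩

lemma IsSph.connected {d : ℕ} (hd : 1 ≤ d) {Z : Set E} (h : IsSph d Z) : IsConnected Z := by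
  obtain ⟨φ, ψ, m1, m2, i1, i2, u1, u2⟩ := HomeoToSphere.maps h.1 h.2
  have : IsConnected (sphere (0 : Eu (d + 1)) 1) := by
    refine isConnected_sphere ?_ _ (by norm_num)
    rw [← Module.finrank_eq_rank]
    simp; omega
  have e : Z = ψ '' sphere 0 1 :=
    Subset.antisymm (fun x hx => ⟨φ x, m1 hx, i1 x hx⟩) m2.image_subset
  rw [e]
  exact this.image ψ u2.continuousOn

lemma IsSph.S2 {d q : ℕ} {Z : Set E} (h : IsSph d Z) (hq : 0 < q) (hqd : q < d)
    {f : List E → ZMod 2} (hf : Cyc q Z ∅ f) : Bd q Z ∅ f := by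
  obtain ⟨φ, ψ, m1, m2, i1, i2, u1, u2⟩ := HomeoToSphere.maps h.1 h.2
  obtain ⟨q, rfl⟩ : ∃ p, q = p + 1 := ⟨q - 1, by omega⟩
  refine Bd.ofPull (empty_subset _) m1 (mapsTo_empty _ _) u1 i1 (A' := ∅) (ψ := ψ) ?_
  exact ((std_hs d).van _ (by omega) _ (hf.pull (empty_subset _) m2 (mapsTo_empty _ _) u2).toR).toB

lemma IsSph.S3 {d : ℕ} {Z : Set E} (h : IsSph (d + 1) Z) :
    ∃ f, Cyc (d + 1) Z ∅ f ∧ ¬ Bd (d + 1) Z ∅ f := by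
  obtain ⟨φ, ψ, m1, m2, i1, i2, u1, u2⟩ := HomeoToSphere.maps h.1 h.2
  obtain ⟨f, h1, h2⟩ := (std_hs (d + 1)).ne
  refine ⟨VC.pull φ f, h1.toC.pull (empty_subset _) m1 (mapsTo_empty _ _) u1, fun hb => h2 ?_⟩
  exact (Bd.ofPull (empty_subset _) m2 (mapsTo_empty _ _) u2 i2 hb).toR

lemma IsSph.S4 {d : ℕ} {Z A : Set E} (h : IsSph (d + 1) Z) (hA : IsCompact A) (hAZ : A ⊂ Z)
    {f : List E → ZMod 2} (hf : Cyc (d + 1) A ∅ f) : Bd (d + 1) A ∅ f := by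
  obtain ⟨φ, ψ, m1, m2, i1, i2, u1, u2⟩ := HomeoToSphere.maps h.1 h.2
  have m3 : MapsTo ψ (φ '' A) A := by
    rintro _ ⟨x, hx, rfl⟩; rw [i1 x (hAZ.1 hx)]; exact hx
  have hS : φ '' A ⊂ sphere 0 1 := by
    obtain ⟨x, hx, hxA⟩ := exists_of_ssubset hAZ
    refine ⟨(m1.mono_left hAZ.1).image_subset, fun h => hxA ?_⟩
    have := m3 (h (m1 hx))
    rwa [i1 x hx] at this
  refine Bd.ofPull (empty_subset _) (mapsTo_image φ A) (mapsTo_empty _ _) (u1.mono hAZ.1)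
    (fun x hx => i1 x (hAZ.1 hx)) (A' := ∅) (ψ := ψ) ?_
  exact std_S4 (hA.image_of_continuousOn (u1.continuousOn.mono hAZ.1)) hS
    (hf.pull (empty_subset _) m3 (mapsTo_empty _ _) (u2.mono hS.1))

lemma pull_add' {X Y : Type*} (φ : X → Y) (f g : List Y → ZMod 2) :
    pull φ (f + g) = pull φ f + pull φ g := rfl

lemma IsSph.S5a {d : ℕ} {Z : Set E} (h : IsSph (d + 1) Z)
    {f g : List E → ZMod 2} (hf : Cyc (d + 1) Z ∅ f) (hg : Cyc (d + 1) Z ∅ g) :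
    Bd (d + 1) Z ∅ f ∨ Bd (d + 1) Z ∅ g ∨ Bd (d + 1) Z ∅ (f + g) := by
  obtain ⟨φ, ψ, m1, m2, i1, i2, u1, u2⟩ := HomeoToSphere.maps h.1 h.2
  have key : ∀ f, RBd (d + 1) (sphere 0 1) (VC.pull ψ f) → Bd (d + 1) Z ∅ f := fun f hf =>
    Bd.ofPull (empty_subset _) m1 (mapsTo_empty _ _) u1 i1 (A' := ∅) (ψ := ψ) hf.toB
  have c : ∀ f, Cyc (d + 1) Z ∅ f → RCyc (d + 1) (sphere 0 1) (VC.pull ψ f) := fun f hf =>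
    (hf.pull (empty_subset _) m2 (mapsTo_empty _ _) u2).toR
  rcases (std_hs (d + 1)).rk _ _ (c f hf) (c g hg) with h | h | h
  · exact Or.inl (key _ h)
  · exact Or.inr (Or.inl (key _ h))
  · exact Or.inr (Or.inr (key _ h))

lemma IsSph.S5b {d : ℕ} {Z A : Set E} (h : IsSph (d + 1) Z) (hA : IsCompact A) (hAZ : A ⊆ Z)
    (hc : IsPreconnected (Z \ A))
    {f : List E → ZMod 2} (hf : Cyc (d + 1) Z A f) (hb : Bd (d + 1) Z ∅ f) :
    Bd (d + 1) Z A f := by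
  obtain ⟨φ, ψ, m1, m2, i1, i2, u1, u2⟩ := HomeoToSphere.maps h.1 h.2
  have m3 : MapsTo ψ (φ '' A) A := by
    rintro _ ⟨x, hx, rfl⟩; rw [i1 x (hAZ hx)]; exact hx
  have hS : φ '' A ⊆ sphere 0 1 := (m1.mono_left hAZ).image_subset
  refine Bd.ofPull hAZ m1 (mapsTo_image φ A) u1 i1 (ψ := ψ) ?_
  refine std_S5b (hA.image_of_continuousOn (u1.continuousOn.mono hAZ)) hS ?_
    (hf.pull hS m2 m3 u2) (hb.pull (empty_subset _) m2 (mapsTo_empty _ _) u2)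
  have e : sphere 0 1 \ φ '' A = φ '' (Z \ A) := by
    ext y; constructor
    · rintro ⟨h1, h2⟩
      exact ⟨ψ y, ⟨m2 h1, fun h => h2 ⟨_, h, i2 y h1⟩⟩, i2 y h1⟩
    · rintro ⟨x, ⟨hx, hxA⟩, rfl⟩
      refine ⟨m1 hx, ?_⟩
      rintro ⟨x', hx', he⟩
      have := congrArg ψ he
      rw [i1 x hx, i1 x' (hAZ hx')] at this
      exact hxA (this ▸ hx')
  rw [e]
  exact hc.image φ (u1.continuousOn.mono sdiff_subset)

end Facts
end VC


set_option linter.unusedSectionVars false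

namespace VC

section Fams
variable {E : Type*} [MetricSpace E]

lemma djl {A B : Set E} (h : Disjoint A B) (x : E) : x ∈ A → x ∉ B :=
  fun hx => Set.disjoint_left.1 h hx

lemma IsSph.S2R {d q : ℕ} {Z : Set E} (h : IsSph d Z) (hqd : q ≠ d)
    {f : List E → ZMod 2} (hf : RCyc q Z f) : RBd q Z f := by
  obtain ⟨φ, ψ, m1, m2, i1, i2, u1, u2⟩ := HomeoToSphere.maps h.1 h.2
  have h1 := (std_hs d).van _ hqd _ (hf.toC.pull (empty_subset _) m2 (mapsTo_empty _ ∅) u2).toR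
  obtain ⟨g, hg⟩ := h1
  have h2 : RBd q Z (VC.pull φ (VC.pull ψ f)) :=
    ⟨VC.pull φ g, by rw [del_pull, ← pull_add]; exact hg.pull m1 u1⟩
  exact h2.congr' (RBd.ofV (pull_pull_V i1 f))

/-- two-sided rank lemma -/
lemma R2 {p : ℕ} {Z D u0 u1 : Set E} (hZ : IsSph (p + 1) Z) (hD : IsCompact D)
    (hu : D ∪ u0 ∪ u1 = Z) (h01 : Disjoint u0 u1) (hD0 : Disjoint D u0) (hD1 : Disjoint D u1)
    (c0 : IsCompact (D ∪ u0)) (c1 : IsCompact (D ∪ u1)) (p0 : IsPreconnected u0)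
    (p1 : IsPreconnected u1) {f g : List E → ZMod 2} (hf : Cyc (p + 1) Z D f)
    (hg : Cyc (p + 1) Z D g) (bf : Bd (p + 1) Z ∅ f) (bg : Bd (p + 1) Z ∅ g) :
    Bd (p + 1) Z D f ∨ Bd (p + 1) Z D g ∨ Bd (p + 1) Z D (f + g) := by
  have e1 : (D ∪ u1) ∪ (D ∪ u0) = Z := by rw [← hu]; ext x; simp only [mem_union]; tauto
  have e2 : (D ∪ u1) ∩ (D ∪ u0) = D := by
    ext x; simp only [mem_union, mem_inter_iff]
    have := djl h01 x
    tauto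
  have e1' : (D ∪ u0) ∪ (D ∪ u1) = Z := by rw [union_comm]; exact e1
  have e2' : (D ∪ u0) ∩ (D ∪ u1) = D := by rw [inter_comm]; exact e2
  have s0 : D ∪ u0 ⊆ Z := e1 ▸ subset_union_right
  have s1 : D ∪ u1 ⊆ Z := e1 ▸ subset_union_left
  have q0 : IsPreconnected (Z \ (D ∪ u1)) := by
    convert p0 using 1
    rw [← hu]; ext x; simp only [mem_union, mem_sdiff]
    have := djl h01 x
    have := djl hD0 x
    tauto
  have q1 : IsPreconnected (Z \ (D ∪ u0)) := by
    convert p1 using 1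
    rw [← hu]; ext x; simp only [mem_union, mem_sdiff]
    have := djl h01 x
    have := djl hD1 x
    tauto
  have split : ∀ f, Cyc (p + 1) Z D f → ∃ f0 f1, Cyc (p + 1) Z (D ∪ u1) f0 ∧
      Cyc (p + 1) Z (D ∪ u0) f1 ∧ Bd (p + 1) Z D (f + (f0 + f1)) := by
    intro f hf
    obtain ⟨f0, a1, a2⟩ := exc1' c1 c0 e1 e2 (hf.mono s0 le_rfl)
    obtain ⟨f1, b1, b2⟩ := exc1' c0 c1 e1' e2' (hf.mono s1 le_rfl)
    refine ⟨f0, f1, a1, b1, ?_⟩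
    have hc : Cyc (p + 1) Z D (f + (f0 + f1)) :=
      hf.add ((a1.mono le_rfl subset_union_left).add (b1.mono le_rfl subset_union_left))
    have := mv_inj (A := D) (q := p) c1 c0 hD (subset_union_left.trans subset_union_left)
      (f := f + (f0 + f1)) (by rw [e1]; exact hc) ?_ ?_ ?_
    · rwa [e1] at this
    · rw [inter_eq_left.2 subset_union_left]
      have := b2.add (Bd.ofV (A := D) a1.2)
      rwa [show f + f1 + f0 = f + (f0 + f1) by abel] at this
    · rw [inter_eq_left.2 subset_union_left]
      have := a2.add (Bd.ofV (A := D) b1.2)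
      rwa [show f + f0 + f1 = f + (f0 + f1) by abel] at this
    · rw [e2, inter_self]; exact fun h hh => Bd.ofV hh.2
  have fin : ∀ f f0 f1, Cyc (p + 1) Z (D ∪ u1) f0 → Cyc (p + 1) Z (D ∪ u0) f1 →
      Bd (p + 1) Z D (f + (f0 + f1)) → Bd (p + 1) Z ∅ f → Bd (p + 1) Z ∅ f0 →
      Bd (p + 1) Z D f := by
    intro f f0 f1 a b c bf b0
    have b1 : Bd (p + 1) Z ∅ f1 := b0.congr (bf.congr (c.mono le_rfl (empty_subset _)))
    have d0 := (hZ.S5b c1 s1 q0 a b0).mono le_rfl (subset_union_left (s := D))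
    have d1 := (hZ.S5b c0 s0 q1 b b1).mono le_rfl (subset_union_left (s := D))
    exact (d0.add d1).congr' c
  obtain ⟨f0, f1, a, b, c⟩ := split f hf
  obtain ⟨g0, g1, a', b', c'⟩ := split g hg
  rcases hZ.S5a (a.mono le_rfl (empty_subset _)) (a'.mono le_rfl (empty_subset _)) with h | h | h
  · exact Or.inl (fin f f0 f1 a b c bf h)
  · exact Or.inr (Or.inl (fin g g0 g1 a' b' c' bg h))
  · refine Or.inr (Or.inr (fin (f + g) (f0 + g0) (f1 + g1) (a.add a') (b.add b') ?_ (bf.add bg) h))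
    have := c.add c'
    rwa [show f + (f0 + f1) + (g + (g0 + g1)) = f + g + (f0 + g0 + (f1 + g1)) by abel] at this

lemma IsSph.gen {p : ℕ} {Z A : Set E} (hZ : IsSph (p + 1) Z) (hA : IsCompact A) (hAZ : A ⊂ Z) :
    ∃ b, Cyc (p + 1) Z A b ∧ ¬ Bd (p + 1) Z ∅ b := by
  obtain ⟨f, h1, h2⟩ := hZ.S3
  obtain ⟨b, h3, h4⟩ := les1 h1 (hZ.S4 hA hAZ (h1.mono hAZ.1 le_rfl))
  exact ⟨b, h3, fun h => h2 (h.congr' h4)⟩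

lemma single_sphere {p : ℕ} {D : Set E} (hne : D.Nonempty)
    (hrk : ∀ x y, Cyc (p + 1) D ∅ x → Cyc (p + 1) D ∅ y →
      Bd (p + 1) D ∅ x ∨ Bd (p + 1) D ∅ y ∨ Bd (p + 1) D ∅ (x + y))
    (C : Finset (Set E)) : D = ⋃₀ ↑C → (∀ c ∈ C, IsSph (p + 1) c) → IsSph (p + 1) D := by
  classical
  induction C using Finset.strongInduction with
  | H C ih =>
    intro hDC hC
    by_cases hred : ∃ c ∈ C, c ⊆ ⋃₀ ↑(C.erase c)
    · obtain ⟨c, hc, hcs⟩ := hred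
      refine ih _ (Finset.erase_ssubset hc) ?_ fun c' hc' => hC c' (Finset.mem_of_mem_erase hc')
      rw [hDC]
      apply Subset.antisymm
      · rintro x ⟨c', hc', hx⟩
        by_cases h : c' = c
        · subst h; exact hcs hx
        · exact ⟨c', by simpa using ⟨hc', h⟩, hx⟩
      · exact sUnion_subset_sUnion (by simp)
    · push Not at hred
      obtain ⟨x, hx⟩ := hne
      rw [hDC] at hx
      obtain ⟨c, hc, hxc⟩ := hx
      have hc : c ∈ C := hc
      by_cases h1 : ∃ c' ∈ C, c' ≠ c
      · exfalso
        obtain ⟨c', hc', hne⟩ := h1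
        have key : ∀ a ∈ C, ∀ a' ∈ C, a' ≠ a → ∃ b, Cyc (p + 1) D a' b ∧
            ¬ Bd (p + 1) a ∅ b := by
          intro a ha a' ha' haa
          have hcomp : IsCompact (⋃₀ (↑(C.erase a) : Set (Set E))) :=
            (C.erase a).finite_toSet.isCompact_sUnion fun s hs =>
              (hC s (Finset.mem_of_mem_erase hs)).1
          have hss : ⋃₀ ↑(C.erase a) ∩ a ⊂ a :=
            ⟨inter_subset_right, fun h => hred a ha fun y hy => (h hy).1⟩
          obtain ⟨b, h1, h2⟩ := (hC a ha).gen (hcomp.inter (hC a ha).1) hss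
          have hun : ⋃₀ ↑(C.erase a) ∪ a = D := by
            rw [hDC, ← Finset.insert_erase ha, Finset.coe_insert, sUnion_insert,
              Finset.erase_insert (Finset.notMem_erase a C), union_comm]
          obtain ⟨b', h3, h4⟩ := exc1' hcomp (hC a ha).1 hun rfl h1
          refine ⟨b', h3.mono le_rfl (subset_sUnion_of_mem (by simpa using ⟨ha', haa⟩)), fun h => ?_⟩
          exact h2 (h.congr' (h4.mono le_rfl (empty_subset _)))
        have sub : ∀ a ∈ C, a ⊆ D := fun a ha => hDC ▸ subset_sUnion_of_mem (by simpa using ha)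
        obtain ⟨b1, h1, h2⟩ := key c hc c' hc' hne
        obtain ⟨b2, h3, h4⟩ := key c' hc' c hc hne.symm
        rcases hrk b1 b2 (h1.mono le_rfl (empty_subset _)) (h3.mono le_rfl (empty_subset _))
          with h | h | h
        · exact h2 (h.mono (sub c hc) le_rfl)
        · exact h4 (h.mono (sub c' hc') le_rfl)
        · exact h2 ((Bd.ofV h3.2).congr' (h.mono (sub c hc) le_rfl))
      · push Not at h1
        have : D = c := by
          rw [hDC]
          apply Subset.antisymm
          · rintro x ⟨c', hc', hx⟩; rw [h1 c' hc'] at hx; exact hx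
          · exact subset_sUnion_of_mem (by simpa using hc)
        rw [this]; exact hC c hc

/-- a codimension-one intersection separating a sphere in two pieces is a single sphere -/
lemma pair_sphere {p : ℕ} {Y D u0 u1 : Set E} (hY : IsSph (p + 2) Y) (hD : IsCompact D)
    (hu : D ∪ u0 ∪ u1 = Y) (h01 : Disjoint u0 u1) (hD0 : Disjoint D u0) (hD1 : Disjoint D u1)
    (c0 : IsCompact (D ∪ u0)) (c1 : IsCompact (D ∪ u1)) (p0 : IsPreconnected u0)
    (p1 : IsPreconnected u1) (hne : D.Nonempty) (hfu : FinUnionOfSpheres (p + 1) D) :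
    IsSph (p + 1) D := by
  obtain ⟨C, h1, h2⟩ := hfu
  refine single_sphere hne ?_ C h1 h2
  intro x y hx hy
  have key : ∀ x, Cyc (p + 1) D ∅ x → Bd (p + 2) Y D (del x) → Bd (p + 1) D ∅ x := by
    intro x hx hb
    obtain ⟨x', h3, h4⟩ := les2 (empty_subset _) hx hb
    have := hY.S2 (by omega) (by omega) h3
    exact (this.mono (by rw [← hu, union_assoc]; exact subset_union_left) le_rfl).congr' (Bd.ofV h4)
  have triv : ∀ x : List E → ZMod 2, Bd (p + 2) Y ∅ (del x) := fun x =>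
    ⟨x, by rw [fadd_self]; exact V.zero _ _, V.empty _ _⟩
  rcases R2 hY hD hu h01 hD0 hD1 c0 c1 p0 p1 (les_conn hx) (les_conn hy) (triv x) (triv y)
    with h | h | h
  · exact Or.inl (key x hx h)
  · exact Or.inr (Or.inl (key y hy h))
  · rw [← del_add] at h
    exact Or.inr (Or.inr (key _ (hx.add hy) h))

variable {ι : Type*} [DecidableEq ι]

def UU (Z : Set E) (σ : ι → Fin 2 → Set E) (J : Finset ι) (ε : ι → Fin 2) : Set E :=
  {x | x ∈ Z ∧ ∀ i ∈ J, x ∈ σ i (ε i)}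

def TT (Z : Set E) (T : ι → Set E) (J : Finset ι) : Set E := {x | x ∈ Z ∧ ∀ i ∈ J, x ∈ T i}

structure Fam (d : ℕ) (Z : Set E) (I : Finset ι) (T : ι → Set E) (σ : ι → Fin 2 → Set E) :
    Prop where
  sph : IsSph d Z
  tsph : ∀ i ∈ I, IsSph (d - 1) (T i)
  tsub : ∀ i ∈ I, T i ⊆ Z
  cov : ∀ i ∈ I, T i ∪ σ i 0 ∪ σ i 1 = Z
  dis : ∀ i ∈ I, Disjoint (σ i 0) (σ i 1)
  disT : ∀ i ∈ I, ∀ a, Disjoint (T i) (σ i a)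
  cl : ∀ i ∈ I, ∀ a, IsCompact (T i ∪ σ i a)
  conn : ∀ J ⊆ I, ∀ ε, IsConnected (UU Z σ J ε)
  emp : ∀ J ⊆ I, 2 ≤ J.card → d ≤ J.card → TT Z T J = ∅
  fin : ∀ J ⊆ I, 2 ≤ J.card → J.card < d → FinUnionOfSpheres (d - J.card) (TT Z T J)

variable {d : ℕ} {Z : Set E} {I : Finset ι} {T : ι → Set E} {σ : ι → Fin 2 → Set E}

lemma Fam.cov' (h : Fam d Z I T σ) {i : ι} (hi : i ∈ I) (a : Fin 2) :
    Z \ σ i a = T i ∪ σ i (1 - a) := by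
  have h1 := h.cov i hi
  have h2 := h.dis i hi
  have h3 := h.disT i hi 0
  have h4 := h.disT i hi 1
  rw [← h1]
  ext x
  have h2 := djl h2 x
  have h3 := djl h3 x
  have h4 := djl h4 x
  fin_cases a <;> simp only [mem_union, mem_sdiff] <;> simp <;> tauto

lemma Fam.co_compact (h : Fam d Z I T σ) {J : Finset ι} (hJ : J ⊆ I) (ε : ι → Fin 2) :
    IsCompact (Z \ UU Z σ J ε) := by
  have : Z \ UU Z σ J ε = ⋃ i ∈ J, (Z \ σ i (ε i)) := by
    ext x; simp only [UU, mem_sdiff, mem_ofPred_eq, mem_iUnion, exists_prop]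
    push Not
    constructor
    · rintro ⟨h1, h2⟩
      obtain ⟨i, hi, hx⟩ := h2 h1
      exact ⟨i, hi, h1, hx⟩
    · rintro ⟨i, hi, h1, hx⟩
      exact ⟨h1, fun _ => ⟨i, hi, hx⟩⟩
  rw [this]
  refine J.isCompact_biUnion fun i hi => ?_
  rw [h.cov' (hJ hi)]
  exact h.cl i (hJ hi) _

lemma Fam.UU_insert (h : Fam d Z I T σ) (J : Finset ι) (ε : ι → Fin 2) {j : ι}
    (hj : j ∉ J) (a : Fin 2) :
    UU Z σ (insert j J) (Function.update ε j a) = UU Z σ J ε ∩ σ j a := by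
  ext x
  simp only [UU, mem_ofPred_eq, Finset.mem_insert, mem_inter_iff]
  constructor
  · rintro ⟨h1, h2⟩
    refine ⟨⟨h1, fun i hi => ?_⟩, ?_⟩
    · have := h2 i (Or.inr hi)
      rwa [Function.update_of_ne (by rintro rfl; exact hj hi)] at this
    · simpa using h2 j (Or.inl rfl)
  · rintro ⟨⟨h1, h2⟩, h3⟩
    refine ⟨h1, ?_⟩
    rintro i (rfl | hi)
    · simpa using h3
    · rw [Function.update_of_ne (by rintro rfl; exact hj hi)]; exact h2 i hi

lemma Fam.conn_insert (h : Fam d Z I T σ) {J : Finset ι} (hJ : J ⊆ I) (ε : ι → Fin 2) {j : ι}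
    (hjI : j ∈ I) (hj : j ∉ J) (a : Fin 2) : IsConnected (UU Z σ J ε ∩ σ j a) := by
  rw [← h.UU_insert J ε hj a]
  exact h.conn _ (Finset.insert_subset hjI hJ) _

lemma Fam.closed_cross (h : Fam d Z I T σ) {j : ι} (hj : j ∈ I) {Y : Set E} (hY : Y ⊆ Z)
    (hc : IsPreconnected Y) (h0 : (Y ∩ σ j 0).Nonempty) (h1 : (Y ∩ σ j 1).Nonempty) :
    (Y ∩ T j).Nonempty := by
  have := isPreconnected_closed_iff.1 hc _ _ (h.cl j hj 0).isClosed (h.cl j hj 1).isClosed ?_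
    (h0.mono (inter_subset_inter_right _ subset_union_right))
    (h1.mono (inter_subset_inter_right _ subset_union_right))
  · obtain ⟨x, hx, hx0, hx1⟩ := this
    refine ⟨x, hx, ?_⟩
    have := djl (h.dis j hj) x
    simp only [mem_union] at hx0 hx1
    tauto
  · refine hY.trans ?_
    rw [← h.cov j hj]
    intro x; simp only [mem_union]; tauto

lemma Fam.meet (h : Fam d Z I T σ) {J : Finset ι} (hJ : J ⊆ I) (ε : ι → Fin 2) {j : ι}
    (hjI : j ∈ I) (hj : j ∉ J) : (UU Z σ J ε ∩ T j).Nonempty :=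
  h.closed_cross hjI (fun _ hx => hx.1) (h.conn J hJ ε).isPreconnected
    (h.conn_insert hJ ε hjI hj 0).nonempty (h.conn_insert hJ ε hjI hj 1).nonempty

lemma Fam.pair_ne (h : Fam d Z I T σ) (hd : 2 ≤ d) {i j : ι} (hi : i ∈ I) (hj : j ∈ I)
    (hij : i ≠ j) : (T i ∩ T j).Nonempty := by
  have hc := (h.tsph j hj).connected (by omega)
  rw [inter_comm]
  have key : ∀ a, (T j ∩ σ i a).Nonempty := by
    intro a
    obtain ⟨x, hx, hx'⟩ := h.meet (J := {i}) (by simpa using hi) (fun _ => a) hj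
      (by simpa using hij.symm)
    exact ⟨x, hx', hx.2 i (by simp)⟩
  exact h.closed_cross hi (h.tsub j hj) hc.isPreconnected (key 0) (key 1)

def Claim (p : ℕ) (Z : Set E) (σ : ι → Fin 2 → Set E) (J : Finset ι) (ε : ι → Fin 2) : Prop :=
  ∀ f, Cyc (p + 1) Z (Z \ UU Z σ J ε) f → Bd (p + 1) Z (Z \ UU Z σ J ε) f

set_option maxHeartbeats 2000000 in
lemma Fam.Bconn {p : ℕ} (h : Fam (p + 2) Z I T σ) {J : Finset ι} (hJ : J ⊆ I) (ε : ι → Fin 2)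
    {j : ι} (hjI : j ∈ I) (hj : j ∉ J) (hcl : Claim p Z σ J ε) :
    IsPreconnected (UU Z σ J ε ∩ T j) := by
  intro u v hu hv hcov hnu hnv
  by_contra hemp
  rw [not_nonempty_iff_eq_empty] at hemp
  set U := UU Z σ J ε with hU
  have hUZ : U ⊆ Z := fun _ hx => hx.1
  have hB : IsCompact (Z \ U) := h.co_compact hJ ε
  have hT : IsSph (p + 1) (T j) := h.tsph j hjI
  have hTZ := h.tsub j hjI
  -- complements
  have comp : ∀ w : Set E, IsOpen w → T j \ (U ∩ w) = T j ∩ ((Z \ U) ∪ wᶜ) := by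
    intro w _
    ext x
    simp only [mem_sdiff, mem_inter_iff, mem_union, mem_compl_iff]
    have := @hTZ x
    tauto
  have compc : ∀ w : Set E, IsOpen w → IsCompact (T j \ (U ∩ w)) := by
    intro w hw
    rw [comp w hw]
    exact hT.1.inter_right (hB.isClosed.union hw.isClosed_compl)
  have comps : ∀ w : Set E, (U ∩ T j ∩ w).Nonempty → T j \ (U ∩ w) ⊂ T j := by
    intro w hw
    refine ⟨sdiff_subset, fun hs => ?_⟩
    obtain ⟨x, ⟨hx1, hx2⟩, hx3⟩ := hw
    exact (hs hx2).2 ⟨hx1, hx3⟩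
  have hsub : ∀ w : Set E, (Z \ U) ∩ T j ⊆ T j \ (U ∩ w) := fun w x hx =>
    ⟨hx.2, fun hx' => hx.1.2 hx'.1⟩
  obtain ⟨bP, a1, a2⟩ := hT.gen (compc u hu) (comps u hnu)
  obtain ⟨bQ, a3, a4⟩ := hT.gen (compc v hv) (comps v hnv)
  obtain ⟨cP, b1, b2⟩ := exc1' hB hT.1 rfl rfl (a1.mono le_rfl (hsub u))
  obtain ⟨cQ, b3, b4⟩ := exc1' hB hT.1 rfl rfl (a3.mono le_rfl (hsub v))
  set D := (Z \ U) ∪ T j with hD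
  have cov := h.cov j hjI
  have mc : ∀ x, x ∈ Z → x ∈ T j ∨ x ∈ σ j 0 ∨ x ∈ σ j 1 := by
    intro x hx; rw [← cov] at hx; simp only [mem_union] at hx; tauto
  have ms : ∀ a x, x ∈ σ j a → x ∈ Z := by
    intro a x hx
    rw [← cov]
    fin_cases a
    · exact Or.inl (Or.inr hx)
    · exact Or.inr hx
  have hDa : ∀ a, IsCompact (D ∪ (U ∩ σ j a)) := by
    intro a
    have : D ∪ (U ∩ σ j a) = (Z \ U) ∪ (T j ∪ σ j a) := by
      ext x
      simp only [hD, mem_union, mem_inter_iff, mem_sdiff]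
      have := ms a x
      tauto
    rw [this]
    exact hB.union (h.cl j hjI a)
  have dd : ∀ a, Disjoint D (U ∩ σ j a) := by
    intro a
    rw [Set.disjoint_left]
    rintro x (hx | hx) hx'
    · exact hx.2 hx'.1
    · exact Set.disjoint_left.1 (h.disT j hjI a) hx hx'.2
  have key : ∀ b c, Bd (p + 1) (T j) ((Z \ U) ∩ T j) (b + c) → Cyc (p + 1) D (Z \ U) c →
      Bd (p + 2) Z D (del c) → Bd (p + 1) (T j) ((Z \ U) ∩ T j) b := by
    intro b c hbc hc hb
    obtain ⟨c', h1, h2⟩ := les2 subset_union_left hc hb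
    have h3 : Bd (p + 1) D (Z \ U) c :=
      ((hcl c' h1).mono (union_subset sdiff_subset hTZ) le_rfl).congr' (Bd.ofV h2)
    exact (h3.mono subset_union_right inter_subset_left).congr' hbc
  have triv : ∀ x : List E → ZMod 2, Bd (p + 2) Z ∅ (del x) := fun x =>
    ⟨x, by rw [fadd_self]; exact V.zero _ _, V.empty _ _⟩
  have hcovD : D ∪ (U ∩ σ j 0) ∪ (U ∩ σ j 1) = Z := by
    ext x
    simp only [hD, mem_union, mem_inter_iff, mem_sdiff]
    have h1 := mc x
    have h2 := @hTZ x
    have h3 := @hUZ x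
    tauto
  have hdis : Disjoint (U ∩ σ j 0) (U ∩ σ j 1) :=
    (h.dis j hjI).mono inter_subset_right inter_subset_right
  rcases R2 h.sph (hB.union hT.1) (u0 := U ∩ σ j 0) (u1 := U ∩ σ j 1) hcovD hdis (dd 0) (dd 1) (hDa 0)
    (hDa 1) (h.conn_insert hJ ε hjI hj 0).isPreconnected
    (h.conn_insert hJ ε hjI hj 1).isPreconnected (les_conn b1) (les_conn b3) (triv cP) (triv cQ)
    with h' | h' | h'
  · exact a2 ((key _ _ b2 b1 h').mono le_rfl (empty_subset _))
  · exact a4 ((key _ _ b4 b3 h').mono le_rfl (empty_subset _))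
  · rw [← del_add] at h'
    have hb := b2.add b4
    rw [show bP + cP + (bQ + cQ) = bP + bQ + (cP + cQ) by abel] at hb
    have h1 := key _ _ hb (b1.add b3) h'
    have h2 : Bd (p + 1) (T j \ (U ∩ u)) ((Z \ U) ∩ T j) bQ :=
      (Bd.ofV a1.2).congr (h1.mono sdiff_subset le_rfl)
    have h3 : Bd (p + 1) (T j) (T j \ (U ∩ v)) bQ := by
      refine exc2' (compc v hv) (compc u hu) ?_ ?_ a3 h2
      · ext x
        have : x ∉ U ∩ T j ∩ (u ∩ v) := by rw [hemp]; simp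
        simp only [mem_inter_iff, mem_sdiff, mem_union] at this ⊢
        tauto
      · ext x
        have h1 := @hcov x
        have h2 := @hTZ x
        simp only [mem_inter_iff, mem_sdiff, mem_union] at h1 ⊢
        tauto
    exact a4 (h3.mono le_rfl (empty_subset _))

end Fams
end VC


set_option linter.unusedSectionVars false

namespace VC

section Fams2
variable {E : Type*} [MetricSpace E] {ι : Type*} [DecidableEq ι]
variable {d : ℕ} {Z : Set E} {I : Finset ι} {T : ι → Set E} {σ : ι → Fin 2 → Set E}

lemma UU_inter (hTZ : T j ⊆ Z) (J : Finset ι) (ε : ι → Fin 2) :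
    UU (T j) (fun i a => σ i a ∩ T j) J ε = UU Z σ J ε ∩ T j := by
  ext x
  simp only [UU, mem_ofPred_eq, mem_inter_iff]
  constructor
  · rintro ⟨h1, h2⟩
    exact ⟨⟨hTZ h1, fun i hi => (h2 i hi).1⟩, h1⟩
  · rintro ⟨⟨_, h2⟩, h1⟩
    exact ⟨h1, fun i hi => ⟨h2 i hi, h1⟩⟩

lemma TT_inter (hTZ : T j ⊆ Z) (J : Finset ι) :
    TT (T j) (fun i => T i ∩ T j) J = TT Z T (insert j J) := by
  ext x
  simp only [TT, mem_ofPred_eq, mem_inter_iff, Finset.mem_insert]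
  constructor
  · rintro ⟨h1, h2⟩
    refine ⟨hTZ h1, ?_⟩
    rintro i (rfl | hi)
    · exact h1
    · exact (h2 i hi).1
  · rintro ⟨_, h2⟩
    exact ⟨h2 j (Or.inl rfl), fun i hi => ⟨h2 i (Or.inr hi), h2 j (Or.inl rfl)⟩⟩

lemma TT_pair (h : Fam d Z I T σ) {i j : ι} (hi : i ∈ I) : TT Z T {i, j} = T i ∩ T j := by
  ext x
  simp only [TT, mem_ofPred_eq, Finset.mem_insert, Finset.mem_singleton, mem_inter_iff]
  constructor
  · rintro ⟨_, h2⟩; exact ⟨h2 i (Or.inl rfl), h2 j (Or.inr rfl)⟩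
  · rintro ⟨h1, h2⟩
    refine ⟨h.tsub i hi h1, ?_⟩
    rintro k (rfl | rfl) <;> assumption

lemma UU_single (J : ι) (hs : σ i (ε i) ⊆ Z) : UU Z σ {i} ε = σ i (ε i) := by
  ext x
  simp only [UU, mem_ofPred_eq, Finset.mem_singleton]
  constructor
  · rintro ⟨_, h⟩; exact h i rfl
  · intro h; refine ⟨hs h, ?_⟩; rintro k rfl; exact h

lemma Fam.ssub (h : Fam d Z I T σ) {i : ι} (hi : i ∈ I) (a : Fin 2) : σ i a ⊆ Z := by
  rw [← h.cov i hi]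
  fin_cases a
  · exact subset_union_right.trans subset_union_left
  · exact subset_union_right

lemma Fam.step {p : ℕ} (h : Fam (p + 3) Z I T σ) {j : ι} (hj : j ∈ I) {J₀ : Finset ι}
    (hJ₀ : J₀ ⊆ I) (hjJ : j ∉ J₀) (hcl : ∀ J ⊆ J₀, ∀ ε, Claim (p + 1) Z σ J ε) :
    Fam (p + 2) (T j) J₀ (fun i => T i ∩ T j) (fun i a => σ i a ∩ T j) where
  sph := h.tsph j hj
  tsph := by
    intro i hi
    have hiI := hJ₀ hi
    have hij : i ≠ j := by rintro rfl; exact hjJ hi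
    have hpc : ∀ a, IsPreconnected (σ i a ∩ T j) := by
      intro a
      have := h.Bconn (J := {i}) (by simpa using hiI) (fun _ => a) hj (by simpa using hij.symm)
        (hcl _ (by simpa using hi) _)
      rwa [UU_single i (h.ssub hiI a)] at this
    have hcomp : ∀ a, IsCompact (T i ∩ T j ∪ σ i a ∩ T j) := by
      intro a
      rw [← union_inter_distrib_right]
      exact (h.cl i hiI a).inter (h.tsph j hj).1
    refine pair_sphere (Y := T j) (u0 := σ i 0 ∩ T j) (u1 := σ i 1 ∩ T j) (h.tsph j hj)
      ((h.tsph i hiI).1.inter (h.tsph j hj).1) ?_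
      ((h.dis i hiI).mono inter_subset_left inter_subset_left)
      ((h.disT i hiI 0).mono inter_subset_left inter_subset_left)
      ((h.disT i hiI 1).mono inter_subset_left inter_subset_left) (hcomp 0) (hcomp 1) (hpc 0)
      (hpc 1) (h.pair_ne (by omega) hiI hj hij) ?_
    · rw [← union_inter_distrib_right, ← union_inter_distrib_right, h.cov i hiI]
      exact inter_eq_right.2 (h.tsub j hj)
    · have hc : ({i, j} : Finset ι).card = 2 := Finset.card_pair hij
      have := h.fin {i, j} (by intro x; simp only [Finset.mem_insert, Finset.mem_singleton]; rintro (rfl | rfl) <;> assumption)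
        (by omega) (by omega)
      rw [TT_pair h hiI, hc] at this
      exact this
  tsub := fun i _ => inter_subset_right
  cov := by
    intro i hi
    show T i ∩ T j ∪ σ i 0 ∩ T j ∪ σ i 1 ∩ T j = T j
    rw [← union_inter_distrib_right, ← union_inter_distrib_right, h.cov i (hJ₀ hi)]
    exact inter_eq_right.2 (h.tsub j hj)
  dis := fun i hi => (h.dis i (hJ₀ hi)).mono inter_subset_left inter_subset_left
  disT := fun i hi a => (h.disT i (hJ₀ hi) a).mono inter_subset_left inter_subset_left
  cl := by
    intro i hi a
    show IsCompact (T i ∩ T j ∪ σ i a ∩ T j)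
    rw [← union_inter_distrib_right]
    exact (h.cl i (hJ₀ hi) a).inter (h.tsph j hj).1
  conn := by
    intro J hJ ε
    rw [UU_inter (h.tsub j hj)]
    have hjj : j ∉ J := fun hh => hjJ (hJ hh)
    exact ⟨h.meet (hJ.trans hJ₀) ε hj hjj, h.Bconn (hJ.trans hJ₀) ε hj hjj (hcl J hJ ε)⟩
  emp := by
    intro J hJ h2 hd
    have hjj : j ∉ J := fun hh => hjJ (hJ hh)
    rw [TT_inter (h.tsub j hj)]
    have hc := Finset.card_insert_of_notMem hjj
    exact h.emp _ (Finset.insert_subset hj (hJ.trans hJ₀)) (by omega) (by omega)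
  fin := by
    intro J hJ h2 hd
    have hjj : j ∉ J := fun hh => hjJ (hJ hh)
    rw [TT_inter (h.tsub j hj)]
    have hc := Finset.card_insert_of_notMem hjj
    have := h.fin _ (Finset.insert_subset hj (hJ.trans hJ₀)) (by omega) (by omega)
    rw [hc] at this
    rwa [show p + 2 - J.card = p + 3 - (J.card + 1) by omega]

lemma Fam.claim_step {p : ℕ} (h : Fam (p + 2) Z I T σ) {k : ι} (hk : k ∈ I) {J₁ : Finset ι}
    (hJ₁ : J₁ ⊆ I) (hkJ : k ∉ J₁) (ε : ι → Fin 2)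
    (hyp : ∀ f, Cyc (p + 1) Z (Z \ UU Z σ J₁ ε ∪ T k) f →
      Bd (p + 1) Z (Z \ UU Z σ J₁ ε ∪ T k) f) : Claim p Z σ (insert k J₁) ε := by
  intro f hf
  have hU : UU Z σ (insert k J₁) ε = UU Z σ J₁ ε ∩ σ k (ε k) := by
    have := h.UU_insert J₁ ε hkJ (ε k)
    rwa [Function.update_eq_self] at this
  have hcU := h.co_compact hJ₁ ε
  have hcU' := h.co_compact (Finset.insert_subset hk hJ₁) ε
  rw [hU] at hf hcU' ⊢
  generalize UU Z σ J₁ ε = U at *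
  have hTZ := h.tsub k hk
  have hsZ := h.ssub hk (ε k)
  have hd := h.disT k hk (ε k)
  have hA : Z \ U ∪ T k ⊆ Z \ (U ∩ σ k (ε k)) := by
    rintro x (hx | hx)
    · exact ⟨hx.1, fun hh => hx.2 hh.1⟩
    · exact ⟨hTZ hx, fun hh => djl hd x hx hh.2⟩
  have h1 := hyp f (hf.mono le_rfl hA)
  refine exc2' hcU' (hcU.union (h.cl k hk (ε k))) ?_ (D := Z \ U ∪ T k) ?_ hf
    (h1.mono (union_subset sdiff_subset (union_subset hTZ hsZ)) le_rfl)
  · apply Subset.antisymm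
    · exact union_subset sdiff_subset (union_subset sdiff_subset (union_subset hTZ hsZ))
    · intro x hx
      by_cases hx' : x ∈ U ∩ σ k (ε k)
      · exact Or.inr (Or.inr (Or.inr hx'.2))
      · exact Or.inl ⟨hx, hx'⟩
  · apply Subset.antisymm
    · rintro x ⟨⟨hx1, hx2⟩, hx | hx | hx⟩
      · exact Or.inl hx
      · exact Or.inr hx
      · exact Or.inl ⟨hx1, fun hh => hx2 ⟨hh, hx⟩⟩
    · intro x hx
      refine ⟨hA hx, ?_⟩
      rcases hx with hx | hx
      · exact Or.inl hx
      · exact Or.inr (Or.inl hx)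

lemma Fam.claim_empty {p : ℕ} (h : Fam (p + 2) Z I T σ) (ε : ι → Fin 2) : Claim p Z σ ∅ ε := by
  intro f hf
  have : Z \ UU Z σ ∅ ε = ∅ := by
    rw [sdiff_eq_empty]; intro x hx; exact ⟨hx, by simp⟩
  rw [this] at hf ⊢
  exact h.sph.S2 (by omega) (by omega) hf

lemma Fam.claim_zero (h : Fam 2 Z I T σ) : ∀ J ⊆ I, ∀ ε, Claim 0 Z σ J ε := by
  intro J hJ ε
  induction J using Finset.induction_on with
  | empty => exact h.claim_empty (p := 0) ε
  | insert k J hk ih =>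
    have hkI : k ∈ I := hJ (Finset.mem_insert_self _ _)
    have hJI : J ⊆ I := (Finset.subset_insert _ _).trans hJ
    refine h.claim_step (p := 0) hkI hJI hk ε ?_
    rcases J.eq_empty_or_nonempty with rfl | ⟨i, hi⟩
    · intro f hf
      have : Z \ UU Z σ ∅ ε = ∅ := by
        rw [sdiff_eq_empty]; intro x hx; exact ⟨hx, by simp⟩
      rw [this, empty_union] at hf ⊢
      refine rles3' (h.tsub k hkI) hf (h.sph.S2R (by omega) hf.1) ?_
      intro g hg
      exact (h.tsph k hkI).S2R (by omega) hg
    · exfalso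
      have hik : i ≠ k := by rintro rfl; exact hk hi
      have h1 := h.pair_ne le_rfl (hJI hi) hkI hik
      have hc : ({i, k} : Finset ι).card = 2 := Finset.card_pair hik
      have h2 := h.emp {i, k} (by
        intro x; simp only [Finset.mem_insert, Finset.mem_singleton]
        rintro (rfl | rfl)
        · exact hJI hi
        · exact hkI) (by omega) (by omega)
      rw [TT_pair h (hJI hi)] at h2
      rw [h2] at h1
      exact Set.not_nonempty_empty h1

lemma Fam.claim {p : ℕ} : ∀ {Z : Set E} {I : Finset ι} {T : ι → Set E} {σ : ι → Fin 2 → Set E},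
    Fam (p + 2) Z I T σ → ∀ J ⊆ I, ∀ ε, Claim p Z σ J ε := by
  induction p with
  | zero => intro Z I T σ h; exact h.claim_zero
  | succ p IH =>
    intro Z I T σ h J
    induction J using Finset.strongInduction with
    | H J ih =>
      intro hJ ε
      rcases J.eq_empty_or_nonempty with rfl | ⟨k, hk⟩
      · exact h.claim_empty ε
      · have hkI := hJ hk
        have hJ1 : J.erase k ⊆ I := (Finset.erase_subset _ _).trans hJ
        have hcl : ∀ J' ⊆ J.erase k, ∀ ε, Claim (p + 1) Z σ J' ε := fun J' hJ' =>
          ih J' (lt_of_le_of_lt hJ' (Finset.erase_ssubset hk)) (hJ'.trans hJ1)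
        have hst := h.step hkI hJ1 (Finset.notMem_erase k J) hcl
        have hc := IH hst _ le_rfl ε
        have hcs := h.claim_step hkI hJ1 (Finset.notMem_erase k J) ε
        rw [Finset.insert_erase hk] at hcs
        apply hcs
        intro f hf
        have hcU := h.co_compact hJ1 ε
        have h1 := hcl _ le_rfl ε f (hf.mono le_rfl subset_union_left)
        refine les3' (union_subset sdiff_subset (h.tsub k hkI)) hf h1 ?_
        intro g hg
        have hD : (Z \ UU Z σ (J.erase k) ε) ∩ T k =
            T k \ UU (T k) (fun i a => σ i a ∩ T k) (J.erase k) ε := by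
          rw [UU_inter (h.tsub k hkI)]
          ext x
          simp only [mem_inter_iff, mem_sdiff]
          have := @h.tsub k hkI x
          tauto
        refine exc2' hcU (h.tsph k hkI).1 rfl hD hg (hc g ?_)
        rw [← hD]
        exact hg.mono subset_union_right inter_subset_left

lemma Fam.restrict {p : ℕ} (h : Fam (p + 3) Z I T σ) {j : ι} (hj : j ∈ I) :
    Fam (p + 2) (T j) (I.erase j) (fun i => T i ∩ T j) (fun i a => σ i a ∩ T j) :=
  h.step hj (Finset.erase_subset _ _) (Finset.notMem_erase _ _)
    fun J hJ ε => h.claim J (hJ.trans (Finset.erase_subset _ _)) ε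

lemma Fam.pair_sph {p : ℕ} (h : Fam (p + 3) Z I T σ) {i j : ι} (hi : i ∈ I) (hj : j ∈ I)
    (hij : i ≠ j) : IsSph (p + 1) (T i ∩ T j) :=
  (h.restrict hj).tsph i (Finset.mem_erase.2 ⟨hij, hi⟩)

end Fams2
end VC


set_option linter.unusedSectionVars false

namespace VC

section PullBack
variable {X : Type*} [TopologicalSpace X] {E : Type*} [TopologicalSpace E]

lemma homeo_image {d : ℕ} {u : X → E} (hu : Topology.IsEmbedding u) {A : Set X}
    (h : HomeoToSphere d A) : HomeoToSphere d (u '' A) := by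
  obtain ⟨e⟩ := h
  exact ⟨(hu.homeomorphImage A).symm.trans e⟩

lemma homeo_preimage {d : ℕ} {u : X → E} (hu : Topology.IsEmbedding u) {A : Set E}
    (hA : A ⊆ range u) (h : HomeoToSphere d A) : HomeoToSphere d (u ⁻¹' A) := by
  rw [← image_preimage_eq_of_subset hA] at h
  obtain ⟨e⟩ := h
  exact ⟨(hu.homeomorphImage _).trans e⟩

lemma compact_preimage {u : X → E} (hu : Topology.IsEmbedding u) {A : Set E}
    (hA : A ⊆ range u) (h : IsCompact A) : IsCompact (u ⁻¹' A) := by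
  rw [hu.isInducing.isCompact_iff, image_preimage_eq_of_subset hA]; exact h

lemma fin_image {d : ℕ} {u : X → E} (hu : Topology.IsEmbedding u) {A : Set X}
    (h : FinUnionOfSpheres d A) : FinUnionOfSpheres d (u '' A) := by
  classical
  obtain ⟨C, rfl, h2⟩ := h
  refine ⟨C.image (fun c => u '' c), ?_, ?_⟩
  · rw [Finset.coe_image, sUnion_image, sUnion_eq_biUnion, image_iUnion₂]
  · intro c hc
    obtain ⟨c, hcC, rfl⟩ := Finset.mem_image.1 hc
    exact ⟨(h2 c hcC).1.image hu.continuous, homeo_image hu (h2 c hcC).2⟩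

lemma fin_preimage {d : ℕ} {u : X → E} (hu : Topology.IsEmbedding u) {A : Set E}
    (hA : A ⊆ range u) (h : FinUnionOfSpheres d A) : FinUnionOfSpheres d (u ⁻¹' A) := by
  classical
  obtain ⟨C, rfl, h2⟩ := h
  refine ⟨C.image (fun c => u ⁻¹' c), ?_, ?_⟩
  · rw [Finset.coe_image, sUnion_image, sUnion_eq_biUnion, preimage_iUnion₂]
  · intro c hc
    obtain ⟨c, hcC, rfl⟩ := Finset.mem_image.1 hc
    have : c ⊆ range u := (subset_sUnion_of_mem (Finset.mem_coe.2 hcC)).trans hA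
    exact ⟨compact_preimage hu this (h2 c hcC).1, homeo_preimage hu this (h2 c hcC).2⟩

lemma conn_preimage {u : X → E} (hu : Topology.IsEmbedding u) {A : Set E}
    (hA : A ⊆ range u) (h : IsConnected A) : IsConnected (u ⁻¹' A) := by
  refine ⟨h.1.preimage' hA, ?_⟩
  rw [← hu.isInducing.isPreconnected_image, image_preimage_eq_of_subset hA]
  exact h.2

end PullBack

section VennPull
variable {X : Type*} [TopologicalSpace X] {E : Type*} [MetricSpace E] {ι : Type*} [DecidableEq ι]
variable {Z : Set E} {I : Finset ι} {T : ι → Set E} {σ : ι → Fin 2 → Set E}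

lemma Fam.venn {p : ℕ} (h : Fam (p + 2) Z I T σ) {u : X → E} (hu : Topology.IsEmbedding u)
    (hr : range u = Z) {κ : Type*} [Fintype κ] (k : κ → ι) (hk : Function.Injective k)
    (hkI : ∀ i, k i ∈ I) :
    IsVennDiagramOn (p + 2) (fun i => u ⁻¹' T (k i)) (fun i a => u ⁻¹' σ (k i) a) := by
  have hT : ∀ i, T (k i) ⊆ range u := fun i => hr ▸ h.tsub _ (hkI i)
  have hσ : ∀ i a, σ (k i) a ⊆ range u := fun i a => hr ▸ h.ssub (hkI i) a
  have hcon : ∀ i a, IsConnected (u ⁻¹' σ (k i) a) := by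
    intro i a
    refine conn_preimage hu (hσ i a) ?_
    have := h.conn {k i} (by simpa using hkI i) (fun _ => a)
    rwa [UU_single (k i) (h.ssub (hkI i) a)] at this
  have hcov : ∀ i, u ⁻¹' σ (k i) 0 ∪ u ⁻¹' σ (k i) 1 = (u ⁻¹' T (k i))ᶜ := by
    intro i
    ext x
    have hx : u x ∈ Z := hr ▸ mem_range_self x
    rw [← h.cov _ (hkI i)] at hx
    have h0 := djl (h.disT _ (hkI i) 0) (u x)
    have h1 := djl (h.disT _ (hkI i) 1) (u x)
    simp only [mem_union, mem_preimage, mem_compl_iff] at hx ⊢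
    tauto
  have hdis : ∀ i, Disjoint (u ⁻¹' σ (k i) 0) (u ⁻¹' σ (k i) 1) := fun i =>
    (h.dis _ (hkI i)).preimage u
  have hop : ∀ i a, IsOpen (u ⁻¹' σ (k i) a) := by
    intro i a
    have h1 : IsClosed (Z \ σ (k i) a) := by
      rw [h.cov' (hkI i)]; exact (h.cl _ (hkI i) _).isClosed
    have h2 : u ⁻¹' σ (k i) a = (u ⁻¹' (Z \ σ (k i) a))ᶜ := by
      ext x
      have hx : u x ∈ Z := hr ▸ mem_range_self x
      simp [hx]
    rw [h2]
    exact (h1.preimage hu.continuous).isOpen_compl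
  refine ⟨fun i => ⟨compact_preimage hu (hT i) (h.tsph _ (hkI i)).1,
    homeo_preimage hu (hT i) (h.tsph _ (hkI i)).2⟩, fun i => ⟨hcov i, ?_, ?_⟩, ?_, ?_⟩
  · intro he
    obtain ⟨x, hx⟩ := (hcon i 0).1
    have hx' : x ∈ u ⁻¹' σ (k i) 1 := by
      have he' : u ⁻¹' σ (k i) 0 = u ⁻¹' σ (k i) 1 := he
      rwa [← he']
    exact Set.disjoint_left.1 (hdis i) hx hx'
  · intro a
    obtain ⟨x, hx⟩ := (hcon i a).1
    have hxT : u ⁻¹' σ (k i) a ⊆ (u ⁻¹' T (k i))ᶜ := by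
      rw [← hcov i]
      fin_cases a
      · exact subset_union_left
      · exact subset_union_right
    refine ⟨x, Subset.antisymm ((hcon i a).2.subset_connectedComponentIn hx hxT) ?_⟩
    have hne : (connectedComponentIn (u ⁻¹' T (k i))ᶜ x ∩ u ⁻¹' σ (k i) a).Nonempty :=
      ⟨x, mem_connectedComponentIn (hxT hx), hx⟩
    have hsub : connectedComponentIn (u ⁻¹' T (k i))ᶜ x ⊆
        u ⁻¹' σ (k i) 0 ∪ u ⁻¹' σ (k i) 1 :=
      (connectedComponentIn_subset (u ⁻¹' T (k i))ᶜ x).trans (hcov i).ge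
    fin_cases a
    · exact IsPreconnected.subset_left_of_subset_union (hop i 0) (hop i 1) (hdis i) hsub hne
        isPreconnected_connectedComponentIn
    · exact IsPreconnected.subset_right_of_subset_union (hop i 0) (hop i 1) (hdis i) hsub hne
        isPreconnected_connectedComponentIn
  · intro ε
    have hreg : (⋂ i, u ⁻¹' σ (k i) (ε i)) =
        u ⁻¹' UU Z σ (Finset.univ.image k) (Function.extend k ε (fun _ => 0)) := by
      ext x
      have hx : u x ∈ Z := hr ▸ mem_range_self x
      simp [UU, hx, hk.extend_apply]
    have := conn_preimage hu (A := UU Z σ (Finset.univ.image k) (Function.extend k ε (fun _ => 0)))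
      (fun x hx => hr ▸ hx.1) (h.conn _ (by
        intro x hx
        obtain ⟨i, -, rfl⟩ := Finset.mem_image.1 hx
        exact hkI i) _)
    show (⋂ i, u ⁻¹' σ (k i) (ε i)).Nonempty ∧ IsConnected (⋂ i, u ⁻¹' σ (k i) (ε i))
    rw [hreg]
    exact ⟨this.1, this⟩
  · intro i j hij
    have hij' : k i ≠ k j := fun hh => hij (hk hh)
    have hc : ({k i, k j} : Finset ι).card = 2 := Finset.card_pair hij'
    show FinDisjUnionOfSpheres p (u ⁻¹' T (k i) ∩ u ⁻¹' T (k j))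
    rw [← preimage_inter]
    rcases p with _ | p
    · have h2 := h.emp {k i, k j} (by
        intro x; simp only [Finset.mem_insert, Finset.mem_singleton]
        rintro (rfl | rfl)
        · exact hkI i
        · exact hkI j) (by omega) (by omega)
      rw [TT_pair h (hkI i)] at h2
      rw [h2]
      exact ⟨∅, by simp, by simp, by simp⟩
    · have h2 := h.pair_sph (hkI i) (hkI j) hij'
      have hs : T (k i) ∩ T (k j) ⊆ range u := inter_subset_left.trans (hT i)
      refine ⟨{u ⁻¹' (T (k i) ∩ T (k j))}, by simp, by simp, ?_⟩
      intro c hc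
      rw [Finset.mem_singleton] at hc
      rw [hc]
      exact ⟨compact_preimage hu hs h2.1, homeo_preimage hu hs h2.2⟩

lemma Fam.simple {p : ℕ} (h : Fam (p + 2) Z I T σ) {u : X → E} (hu : Topology.IsEmbedding u)
    (hr : range u = Z) {κ : Type*} [Fintype κ] (k : κ → ι) (hk : Function.Injective k)
    (hkI : ∀ i, k i ∈ I) :
    IsSimpleVennDiagramOn (p + 2) (fun i => u ⁻¹' T (k i)) (fun i a => u ⁻¹' σ (k i) a) := by
  refine ⟨h.venn hu hr k hk hkI, ?_⟩
  intro t ht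
  have hc : (t.map ⟨k, hk⟩).card = t.card := Finset.card_map _
  have hI : t.map ⟨k, hk⟩ ⊆ I := by
    intro x hx
    obtain ⟨i, -, rfl⟩ := Finset.mem_map.1 hx
    exact hkI i
  have he : (⋂ i ∈ t, u ⁻¹' T (k i)) = u ⁻¹' TT Z T (t.map ⟨k, hk⟩) := by
    ext x
    have hx : u x ∈ Z := hr ▸ mem_range_self x
    simp [TT, hx]
  show if p + 2 ≤ t.card then (⋂ i ∈ t, u ⁻¹' T (k i)) = ∅
    else FinUnionOfSpheres (p + 2 - t.card) (⋂ i ∈ t, u ⁻¹' T (k i))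
  rw [he]
  split_ifs with hp
  · rw [h.emp _ hI (by omega) (by omega), preimage_empty]
  · have := h.fin _ hI (by omega) (by omega)
    rw [hc] at this
    exact fin_preimage hu (fun x hx => hr ▸ hx.1) this

end VennPull
end VC


set_option linter.unusedSectionVars false

namespace VC

section Sides
variable {V : Type*} [NormedAddCommGroup V] [NormedSpace ℝ V]

lemma side_zero (S : Set V) :
    surfSide S 0 = {x | x ∉ S ∧ IsBounded (connectedComponentIn Sᶜ x)} := by
  simp [surfSide]

lemma side_one (S : Set V) :
    surfSide S 1 = {x | x ∉ S ∧ ¬ IsBounded (connectedComponentIn Sᶜ x)} := by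
  simp [surfSide]

lemma side_notMem {S : Set V} {a : Fin 2} {x : V} (hx : x ∈ surfSide S a) : x ∉ S := by
  fin_cases a
  · have hx : x ∈ surfSide S 0 := hx
    rw [side_zero] at hx; exact hx.1
  · have hx : x ∈ surfSide S 1 := hx
    rw [side_one] at hx; exact hx.1

lemma side_disj {S : Set V} {x : V} (hx : x ∈ surfSide S 0) : x ∉ surfSide S 1 := by
  rw [side_zero] at hx
  rw [side_one]
  exact fun h => h.2 hx.2

lemma side_cov {S : Set V} {x : V} (hx : x ∉ S) : x ∈ surfSide S 0 ∨ x ∈ surfSide S 1 := by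
  rw [side_zero, side_one]
  by_cases h : IsBounded (connectedComponentIn Sᶜ x)
  · exact Or.inl ⟨hx, h⟩
  · exact Or.inr ⟨hx, h⟩

lemma side_open {S : Set V} (hS : IsClosed S) (a : Fin 2) : IsOpen (surfSide S a) := by
  rw [isOpen_iff_forall_mem_open]
  intro x hx
  have hxS := side_notMem hx
  refine ⟨connectedComponentIn Sᶜ x, ?_, hS.isOpen_compl.connectedComponentIn,
    mem_connectedComponentIn hxS⟩
  intro y hy
  have he := connectedComponentIn_eq hy
  have hyS : y ∉ S := connectedComponentIn_subset _ _ hy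
  fin_cases a
  · have hx : x ∈ surfSide S 0 := hx
    show y ∈ surfSide S 0
    rw [side_zero] at hx ⊢
    exact ⟨hyS, he ▸ hx.2⟩
  · have hx : x ∈ surfSide S 1 := hx
    show y ∈ surfSide S 1
    rw [side_one] at hx ⊢
    exact ⟨hyS, he ▸ hx.2⟩

lemma side_out {S : Set V} (hS : IsBounded S) :
    ∃ r : ℝ, 0 ≤ r ∧ ∀ x, r < ‖x‖ → x ∈ surfSide S 1 := by
  obtain ⟨r, hr0, hr⟩ := hS.exists_pos_norm_le
  refine ⟨r, hr0.le, fun x hx => ?_⟩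
  rw [side_one]
  have hnot : ∀ y : V, r < ‖y‖ → y ∉ S := fun y hy hyS => absurd (hr y hyS) (not_le.2 hy)
  refine ⟨hnot x hx, fun hb => ?_⟩
  have hx0 : 0 < ‖x‖ := hr0.trans hx
  have hray : (fun t : ℝ => t • x) '' Ici 1 ⊆ connectedComponentIn Sᶜ x := by
    refine IsPreconnected.subset_connectedComponentIn ?_ ⟨1, self_mem_Ici, one_smul _ _⟩ ?_
    · exact isPreconnected_Ici.image _ (by fun_prop)
    · rintro _ ⟨t, ht, rfl⟩
      apply hnot
      have ht : (1 : ℝ) ≤ t := ht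
      show r < ‖t • x‖
      rw [norm_smul, Real.norm_of_nonneg (by linarith)]
      nlinarith
  obtain ⟨R, hR0, hR⟩ := (hb.subset hray).exists_pos_norm_le
  have h1 : (1 : ℝ) ≤ 1 + R / ‖x‖ := by have := div_pos hR0 hx0; linarith
  have := hR _ ⟨1 + R / ‖x‖, h1, rfl⟩
  simp only at this
  rw [norm_smul, Real.norm_of_nonneg (by linarith), add_mul, div_mul_cancel₀ _ hx0.ne'] at this
  linarith

end Sides

section Compactify
variable {V : Type*} [NormedAddCommGroup V] [NormedSpace ℝ V] [ProperSpace V] [Nontrivial V]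

/-- sides in the one point compactification -/
def cside (S : Set V) (a : Fin 2) : Set (OnePoint V) :=
  {x | (∃ v ∈ surfSide S a, (v : OnePoint V) = x) ∨ (a = 1 ∧ x = OnePoint.infty)}

lemma coe_cside {S : Set V} {a : Fin 2} {v : V} : (v : OnePoint V) ∈ cside S a ↔ v ∈ surfSide S a := by
  simp [cside]

lemma infty_cside {S : Set V} {a : Fin 2} : (OnePoint.infty : OnePoint V) ∈ cside S a ↔ a = 1 := by
  simp [cside]

lemma compact_side {S : Set V} (hS : IsCompact S) :
    IsCompact (S ∪ surfSide S 0) := by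
  have he : S ∪ surfSide S 0 = (surfSide S 1)ᶜ := by
    ext x
    simp only [mem_union, mem_compl_iff]
    constructor
    · rintro (h | h)
      · exact fun hh => side_notMem hh h
      · exact side_disj h
    · intro h
      by_contra hc
      push Not at hc
      rcases side_cov hc.1 with h' | h'
      · exact hc.2 h'
      · exact h h'
  refine Metric.isCompact_of_isClosed_isBounded ?_ ?_
  · rw [he]; exact (side_open hS.isClosed 1).isClosed_compl
  · obtain ⟨r, -, hr⟩ := side_out hS.isBounded
    rw [he]
    refine isBounded_iff_forall_norm_le.2 ⟨r, fun x hx => ?_⟩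
    by_contra h
    exact hx (hr x (not_le.1 h))

lemma compact_cside {S : Set V} (hS : IsCompact S) (a : Fin 2) :
    IsCompact ((fun v : V => (v : OnePoint V)) '' S ∪ cside S a) := by
  fin_cases a
  · have : (fun v : V => (v : OnePoint V)) '' S ∪ cside S 0 =
        (fun v : V => (v : OnePoint V)) '' (S ∪ surfSide S 0) := by
      rw [image_union]
      congr 1
      ext x
      simp [cside]
    show IsCompact ((fun v : V => (v : OnePoint V)) '' S ∪ cside S 0)
    rw [this]
    exact (compact_side hS).image OnePoint.continuous_coe
  · have : (fun v : V => (v : OnePoint V)) '' S ∪ cside S 1 =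
        ((fun v : V => (v : OnePoint V)) '' surfSide S 0)ᶜ := by
      ext x
      induction x using OnePoint.rec with
      | infty => simp [cside]
      | coe v =>
        simp only [mem_union, mem_image, OnePoint.coe_eq_coe, exists_eq_right, coe_cside,
          mem_compl_iff]
        have h1 := @side_cov _ _ _ S v
        have h2 := @side_disj _ _ _ S v
        have h3 := @side_notMem _ _ _ S 0 v
        have h4 := @side_notMem _ _ _ S 1 v
        tauto
    show IsCompact ((fun v : V => (v : OnePoint V)) '' S ∪ cside S 1)
    rw [this]
    exact (OnePoint.isOpenEmbedding_coe.isOpenMap _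
      (side_open hS.isClosed 0)).isClosed_compl.isCompact

lemma infty_closure {R : Set V} (hR : ¬ IsBounded R) :
    (OnePoint.infty : OnePoint V) ∈ closure ((fun v : V => (v : OnePoint V)) '' R) := by
  by_contra hc
  apply hR
  have h1 : IsOpen (closure ((fun v : V => (v : OnePoint V)) '' R))ᶜ := isClosed_closure.isOpen_compl
  have h2 := (OnePoint.isOpen_iff_of_mem (X := V) hc).1 h1
  refine h2.2.isBounded.subset ?_
  intro v hv
  simp only [mem_compl_iff, mem_preimage, not_not]
  exact subset_closure ⟨v, hv, rfl⟩

variable {ι : Type*} [DecidableEq ι]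

lemma conn_cell {S : ι → Set V} (hS : ∀ i, IsCompact (S i)) (J : Finset ι) (ε : ι → Fin 2)
    (hR : IsConnected (⋂ i ∈ J, surfSide (S i) (ε i))) :
    IsConnected {x : OnePoint V | ∀ i ∈ J, x ∈ cside (S i) (ε i)} := by
  have h1 : IsConnected ((fun v : V => (v : OnePoint V)) '' (⋂ i ∈ J, surfSide (S i) (ε i))) :=
    hR.image _ OnePoint.continuous_coe.continuousOn
  have hsub : (fun v : V => (v : OnePoint V)) '' (⋂ i ∈ J, surfSide (S i) (ε i)) ⊆
      {x : OnePoint V | ∀ i ∈ J, x ∈ cside (S i) (ε i)} := by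
    rintro _ ⟨v, hv, rfl⟩ i hi
    rw [mem_iInter₂] at hv
    exact coe_cside.2 (hv i hi)
  refine ⟨h1.1.mono hsub, h1.2.subset_closure hsub ?_⟩
  intro x hx
  induction x using OnePoint.rec with
  | coe v =>
    refine subset_closure ⟨v, ?_, rfl⟩
    rw [mem_iInter₂]
    exact fun i hi => coe_cside.1 (hx i hi)
  | infty =>
    apply infty_closure
    intro hb
    have hε : ∀ i ∈ J, ε i = 1 := fun i hi => infty_cside.1 (hx i hi)
    choose r hr0 hr using fun i => side_out (hS i).isBounded
    obtain ⟨M, hM0, hM⟩ := hb.exists_pos_norm_le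
    obtain ⟨v, hv⟩ := NormedSpace.exists_lt_norm ℝ V (M + ∑ i ∈ J, r i)
    have hsum : 0 ≤ ∑ i ∈ J, r i := Finset.sum_nonneg fun i _ => hr0 i
    have : v ∈ ⋂ i ∈ J, surfSide (S i) (ε i) := by
      rw [mem_iInter₂]
      intro i hi
      rw [hε i hi]
      apply hr
      have := Finset.single_le_sum (fun i _ => hr0 i) hi
      linarith
    have := hM v this
    linarith

end Compactify
end VC


set_option linter.unusedSectionVars false

namespace VC

section Final

lemma base_fam {m n : ℕ} (hm : 3 ≤ m) (S : Fin n → Set (EuclideanSpace ℝ (Fin m)))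
    (hV : IsSimpleVennDiagram m S) (hFR : FullyReducible m S)
    {Φ : OnePoint (EuclideanSpace ℝ (Fin m)) → EuclideanSpace ℝ (Fin (m + 1))}
    (hΦ : Topology.IsEmbedding Φ) (hr : range Φ = sphere 0 1) :
    Fam m (sphere (0 : EuclideanSpace ℝ (Fin (m + 1))) 1) Finset.univ
      (fun i => (fun v : EuclideanSpace ℝ (Fin m) => Φ (v : OnePoint _)) '' S i)
      (fun i a => Φ '' cside (S i) a) := by
  have : NeZero m := ⟨by omega⟩
  have : Nontrivial (EuclideanSpace ℝ (Fin m)) := by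
    apply Module.nontrivial_of_finrank_pos (R := ℝ)
    rw [finrank_euclideanSpace_fin]; omega
  have hg : Topology.IsEmbedding (fun v : EuclideanSpace ℝ (Fin m) => Φ (v : OnePoint _)) :=
    hΦ.comp OnePoint.isOpenEmbedding_coe.isEmbedding
  have hS : ∀ i, IsCompact (S i) := fun i => (hV.1.1 i).1
  have him : ∀ i, (fun v : EuclideanSpace ℝ (Fin m) => Φ (v : OnePoint _)) '' S i =
      Φ '' ((fun v : EuclideanSpace ℝ (Fin m) => (v : OnePoint _)) '' S i) := fun i => by
    rw [image_image]
  have hTT : ∀ J : Finset (Fin n), 2 ≤ J.card →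
      TT (sphere (0 : EuclideanSpace ℝ (Fin (m + 1))) 1)
        (fun i => (fun v : EuclideanSpace ℝ (Fin m) => Φ (v : OnePoint _)) '' S i) J =
      (fun v : EuclideanSpace ℝ (Fin m) => Φ (v : OnePoint _)) '' ⋂ i ∈ J, S i := by
    intro J hJ
    obtain ⟨i₀, hi₀⟩ : J.Nonempty := Finset.card_pos.1 (by omega)
    ext y
    simp only [TT, mem_ofPred_eq]
    constructor
    · rintro ⟨-, h⟩
      obtain ⟨v, hv, rfl⟩ := h i₀ hi₀
      refine ⟨v, ?_, rfl⟩
      rw [mem_iInter₂]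
      intro i hi
      obtain ⟨w, hw, hwv⟩ := h i hi
      rwa [← hg.injective hwv]
    · rintro ⟨v, hv, rfl⟩
      rw [mem_iInter₂] at hv
      exact ⟨hr ▸ mem_range_self _, fun i hi => ⟨v, hv i hi, rfl⟩⟩
  refine ⟨⟨isCompact_sphere _ _, ⟨Homeomorph.refl _⟩⟩, ?_, ?_, ?_, ?_, ?_, ?_, ?_, ?_, ?_⟩
  · intro i _
    exact ⟨(hS i).image hg.continuous, homeo_image hg (hV.1.1 i).2⟩
  · rintro i _ _ ⟨v, -, rfl⟩
    exact hr ▸ mem_range_self _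
  · intro i _
    show (fun v : EuclideanSpace ℝ (Fin m) => Φ (v : OnePoint _)) '' S i ∪ Φ '' cside (S i) 0 ∪
      Φ '' cside (S i) 1 = _
    rw [him, ← image_union, ← image_union, ← hr, ← image_univ]
    congr 1
    rw [eq_univ_iff_forall]
    intro x
    induction x using OnePoint.rec with
    | infty => exact Or.inr (infty_cside.2 rfl)
    | coe v =>
      by_cases hv : v ∈ S i
      · exact Or.inl (Or.inl ⟨v, hv, rfl⟩)
      · rcases side_cov hv with h | h
        · exact Or.inl (Or.inr (coe_cside.2 h))
        · exact Or.inr (coe_cside.2 h)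
  · intro i _
    refine (disjoint_image_iff hΦ.injective).2 (Set.disjoint_left.2 ?_)
    intro x
    induction x using OnePoint.rec with
    | infty => rw [infty_cside]; intro h; exact absurd h (by decide)
    | coe v => rw [coe_cside, coe_cside]; exact side_disj
  · intro i _ a
    show Disjoint ((fun v : EuclideanSpace ℝ (Fin m) => Φ (v : OnePoint _)) '' S i) _
    rw [him]
    refine (disjoint_image_iff hΦ.injective).2 (Set.disjoint_left.2 ?_)
    rintro _ ⟨v, hv, rfl⟩ h
    exact side_notMem (coe_cside.1 h) hv
  · intro i _ a
    show IsCompact ((fun v : EuclideanSpace ℝ (Fin m) => Φ (v : OnePoint _)) '' S i ∪ _)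
    rw [him, ← image_union]
    exact (compact_cside (hS i) a).image hΦ.continuous
  · intro J _ ε
    have h1 := ((hFR J).2.1 (fun i => ε i.1)).2
    have h2 : (⋂ i : {x // x ∈ J}, surfSide (S i.1) (ε i.1)) = ⋂ i ∈ J, surfSide (S i) (ε i) := by
      rw [iInter_subtype]
    have h3 : IsConnected (⋂ i ∈ J, surfSide (S i) (ε i)) := h2 ▸ h1
    have h4 := (conn_cell hS J ε h3).image Φ hΦ.continuous.continuousOn
    have hUU : UU (sphere (0 : EuclideanSpace ℝ (Fin (m + 1))) 1) (fun i a => Φ '' cside (S i) a)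
        J ε = Φ '' {x | ∀ i ∈ J, x ∈ cside (S i) (ε i)} := ?_
    · rw [hUU]; exact h4
    refine Set.ext fun y => ?_
    simp only [UU, mem_ofPred_eq]
    constructor
    · rintro ⟨hy, h⟩
      rw [← hr] at hy
      obtain ⟨x, rfl⟩ := hy
      refine ⟨x, fun i hi => ?_, rfl⟩
      exact (hΦ.injective.mem_set_image).1 (h i hi)
    · rintro ⟨x, hx, rfl⟩
      exact ⟨hr ▸ mem_range_self _, fun i hi => ⟨x, hx i hi, rfl⟩⟩
  · intro J _ h2 hd
    have := hV.2 J h2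
    rw [if_pos hd] at this
    rw [hTT J h2, this, image_empty]
  · intro J _ h2 hd
    have := hV.2 J h2
    rw [if_neg (by omega)] at this
    rw [hTT J h2]
    exact fin_image hg this

lemma exists_compactification (m : ℕ) :
    ∃ Φ : OnePoint (EuclideanSpace ℝ (Fin m)) →
      EuclideanSpace ℝ (Fin (m + 1)), Topology.IsEmbedding Φ ∧ range Φ = sphere 0 1 := by
  let e := onePointEquivSphereOfFinrankEq (ι := Fin (m + 1))
    (V := EuclideanSpace ℝ (Fin m)) (by simp)
  refine ⟨fun x => (e x : EuclideanSpace ℝ (Fin (m + 1))),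
    Topology.IsEmbedding.subtypeVal.comp e.isEmbedding, ?_⟩
  ext y
  constructor
  · rintro ⟨x, rfl⟩; exact (e x).2
  · intro hy; exact ⟨e.symm ⟨y, hy⟩, by simp⟩

end Final
end VC


/-- **Lemma 2.** If `V = {S₁, …, Sₙ}` is a fully reducible simple `m`-dimensional Venn
diagram (`n ≥ 2`, `m ≥ 3`), then `W = {S₁ ∩ Sₙ, …, S_{n-1} ∩ Sₙ}` is a fully reducible
simple `(m-1)`-dimensional Venn diagram embedded on the `m`-surface `Sₙ` (for a suitable
choice of interiors/exteriors, namely the two components into which each `Sᵢ ∩ Sₙ`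
separates `Sₙ`).  Here `Sₙ` corresponds to the index `⟨n-1, _⟩ : Fin n`. -/
theorem fullyReducible_intersection_with_last (m n : ℕ) (hm : 3 ≤ m) (hn : 2 ≤ n)
    (S : Fin n → Set (EuclideanSpace ℝ (Fin m)))
    (hV : IsSimpleVennDiagram m S) (hFR : FullyReducible m S) :
    ∃ σ : Fin (n - 1) → Fin 2 → Set (↥(S ⟨n - 1, by omega⟩)),
      IsSimpleVennDiagramOn (m - 1)
        (fun i : Fin (n - 1) =>
          (Subtype.val ⁻¹' S (Fin.castLE (by omega) i) : Set (↥(S ⟨n - 1, by omega⟩)))) σ ∧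
      FullyReducibleOn (m - 1)
        (fun i : Fin (n - 1) =>
          (Subtype.val ⁻¹' S (Fin.castLE (by omega) i) : Set (↥(S ⟨n - 1, by omega⟩)))) σ := by
  obtain ⟨p, rfl⟩ : ∃ p, m = p + 3 := ⟨m - 3, by omega⟩
  obtain ⟨Φ, hΦ, hr⟩ := VC.exists_compactification (p + 3)
  have hF := VC.base_fam hm S hV hFR hΦ hr
  set j : Fin n := ⟨n - 1, by omega⟩ with hj
  have hF' := hF.restrict (Finset.mem_univ j)
  have hg : Topology.IsEmbedding
      (fun v : EuclideanSpace ℝ (Fin (p + 3)) => Φ (v : OnePoint _)) :=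
    hΦ.comp OnePoint.isOpenEmbedding_coe.isEmbedding
  let u : ↥(S j) → EuclideanSpace ℝ (Fin (p + 3 + 1)) := fun v => Φ ((v : _) : OnePoint _)
  have hu : Topology.IsEmbedding u := hg.comp Topology.IsEmbedding.subtypeVal
  have hur : range u = (fun v : EuclideanSpace ℝ (Fin (p + 3)) => Φ (v : OnePoint _)) '' S j := by
    ext y
    constructor
    · rintro ⟨v, rfl⟩; exact ⟨v, v.2, rfl⟩
    · rintro ⟨v, hv, rfl⟩; exact ⟨⟨v, hv⟩, rfl⟩
  let k : Fin (n - 1) → Fin n := fun i => Fin.castLE (by omega) i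
  have hk : Function.Injective k := Fin.castLE_injective _
  have hkI : ∀ i, k i ∈ Finset.univ.erase j := by
    intro i
    refine Finset.mem_erase.2 ⟨?_, Finset.mem_univ _⟩
    intro h
    have := congrArg Fin.val h
    simp only [k, hj, Fin.val_castLE] at this
    have := i.2
    omega
  have hpre : ∀ i : Fin (n - 1), (Subtype.val ⁻¹' S (k i) : Set ↥(S j)) =
      u ⁻¹' ((fun v : EuclideanSpace ℝ (Fin (p + 3)) => Φ (v : OnePoint _)) '' S (k i) ∩
        (fun v : EuclideanSpace ℝ (Fin (p + 3)) => Φ (v : OnePoint _)) '' S j) := by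
    intro i
    ext v
    constructor
    · intro hv; exact ⟨⟨v, hv, rfl⟩, ⟨v, v.2, rfl⟩⟩
    · rintro ⟨⟨w, hw, hwv⟩, -⟩
      have : w = v.1 := hg.injective hwv
      show v.1 ∈ S (k i)
      rwa [← this]
  refine ⟨fun i a => u ⁻¹' (Φ '' VC.cside (S (k i)) a ∩
    (fun v : EuclideanSpace ℝ (Fin (p + 3)) => Φ (v : OnePoint _)) '' S j), ?_, ?_⟩
  · have := hF'.simple hu hur k hk hkI
    have he := funext hpre
    simp only [k] at he
    rw [he]
    exact this
  · intro t
    have := hF'.venn hu hur (fun i : {x // x ∈ t} => k i.1)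
      (fun a b hab => Subtype.ext (hk hab)) (fun i => hkI i.1)
    have he : (fun i : {x // x ∈ t} => (Subtype.val ⁻¹' S (k i.1) : Set ↥(S j))) = _ :=
      funext fun i => hpre i.1
    simp only [k] at he
    rw [he]
    exact this
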